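/- arXiv:1911.09995 — 2 statements merged into one kernel-verified Lean document; each statement's English description precedes it below -/
import Mathlib

section
/- Let δ ∈ {0,1} and let u : ℝ → ℝ be a 2π-periodic Lipschitz function, i.e. |u(y) − u(y')| ≤ c_L |y − y'| for all y, y' ∈ ℝ, for some c_L > 0. If u is diffusion enhancing at some rate r : (0,κ₀] → (0,1), then liminf_{κ→0⁺} κ^{1/3}/r(κ) > 0; that is, there exist c > 0 and κ₁ ∈ (0,κ₀] such that r(κ) ≤ c⁻¹ κ^{1/3} for all κ ∈ (0,κ₁]. -/
/-!
The rate is tested on the single solution with initial datum `cos x`. It has the form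
`ρ(t, x, y) = e^{-δ κ t} Re (e^{i x} f(t, y))` where `∂ₜf = κ ∂ᵧᵧf - i u f` and `f(0, y) = 1`, and
`‖ρ(t)‖² = π e^{-2 δ κ t} ∫ |f(t, y)|² dy`.

*Lower bound* (`energy_lower_bound`). For times `t ≪ κ^{-1/3}` diffusion has not yet acted: the
inviscid solution `e^{-i u t}` has gradient of size `c_L t`, so the dissipated energy should be of
order `κ ∫₀ᵗ c_L² s² ds ∼ κ c_L² t³`. Since `u` is only Lipschitz, this is made rigorous without
differentiating `u`, through the overlap `P(t) = ∫ f e^{i u t} dy`, whose derivative is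
`κ ∫ ∂ᵧᵧf e^{i u t} dy`. An integration by parts against a Lipschitz factor
(`integral_deriv_mul_lipschitz`) bounds it by `κ c_L t ∫ |∂ᵧf|`, and Young's inequality absorbs the
gradient in the dissipation. The outcome is `∫ |f(t)|² ≥ 8 π / 9` as long as `κ c_L² t³ ≤ 1`.

*Existence* (`exists_classical`). A Lipschitz periodic `u` has an absolutely convergent Fourier
series (`lipschitz_fourier_summable`), so multiplication by `u` is bounded on the Wiener algebra.
The Fourier coefficients of `e^{-K t} f`, with `K` large, are the fixed point of a contraction on
`ℓ¹(ℤ; C_b(ℝ, ℂ))` (`exists_mild`), and the damping `κ n²` of the `n`-th mode supplies the two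
derivatives in `y` needed for a classical solution.

*Conclusion*. At `t = τ κ^{-1/3}`, with `τ` depending on `c_L` only, the lower bound and the assumed
decay give `e^{-2} · 8 π² / 9 ≤ C e^{-r(κ) t} · 2 π²`, so `r(κ) t` is bounded by a constant, that is,
`r(κ) ≤ const · κ^{1/3}`.
-/

open MeasureTheory Real Set Filter

noncomputable section

/-- `ρ : ℝ → ℝ → ℝ → ℝ`, as `ρ t x y`, is a solution of the shear advection–diffusion
equation `∂ₜρ + u(y) ∂ₓρ = κ (δ ∂ₓₓρ + ∂ᵧᵧρ)` on `[0,∞) × 𝕋²` (2π-periodic in `x` and `y`),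
continuous up to `t = 0`, C¹ in time and C² in space for `t > 0`. -/
structure IsShearSolution (δ κ : ℝ) (u : ℝ → ℝ) (ρ : ℝ → ℝ → ℝ → ℝ) : Prop where
  cont : ContinuousOn (fun p : ℝ × ℝ × ℝ => ρ p.1 p.2.1 p.2.2) {p : ℝ × ℝ × ℝ | 0 ≤ p.1}
  periodic_x : ∀ t x y, ρ t (x + 2 * π) y = ρ t x y
  periodic_y : ∀ t x y, ρ t x (y + 2 * π) = ρ t x y
  diff_t : ∀ t, 0 < t → ∀ x y, DifferentiableAt ℝ (fun s => ρ s x y) t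
  diff_x : ∀ t, 0 < t → ∀ x y, DifferentiableAt ℝ (fun a => ρ t a y) x
  diff_xx : ∀ t, 0 < t → ∀ x y, DifferentiableAt ℝ (fun a => deriv (fun b => ρ t b y) a) x
  diff_y : ∀ t, 0 < t → ∀ x y, DifferentiableAt ℝ (fun b => ρ t x b) y
  diff_yy : ∀ t, 0 < t → ∀ x y, DifferentiableAt ℝ (fun b => deriv (fun c => ρ t x c) b) y
  cont_dt : ContinuousOn (fun p : ℝ × ℝ × ℝ => deriv (fun s => ρ s p.2.1 p.2.2) p.1)
      {p : ℝ × ℝ × ℝ | 0 < p.1}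
  cont_dxx : ContinuousOn
      (fun p : ℝ × ℝ × ℝ => deriv (fun a => deriv (fun b => ρ p.1 b p.2.2) a) p.2.1)
      {p : ℝ × ℝ × ℝ | 0 < p.1}
  cont_dyy : ContinuousOn
      (fun p : ℝ × ℝ × ℝ => deriv (fun b => deriv (fun c => ρ p.1 p.2.1 c) b) p.2.2)
      {p : ℝ × ℝ × ℝ | 0 < p.1}
  pde : ∀ t, 0 < t → ∀ x y,
    deriv (fun s => ρ s x y) t + u y * deriv (fun a => ρ t a y) x =
      κ * (δ * deriv (fun a => deriv (fun b => ρ t b y) a) x +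
        deriv (fun b => deriv (fun c => ρ t x c) b) y)

/-- The squared `L²` norm of `ρ(t)` on the torus `[0,2π]²`. -/
def l2normSq (ρ : ℝ → ℝ → ℝ → ℝ) (t : ℝ) : ℝ :=
  ∫ x in (0:ℝ)..(2 * π), ∫ y in (0:ℝ)..(2 * π), (ρ t x y) ^ 2

/-- `r : (0,κ₀] → (0,1)` is a rate function: continuous, increasing, with `κ/r(κ) → 0`. -/
def IsRateFunction (κ₀ : ℝ) (r : ℝ → ℝ) : Prop :=
  ContinuousOn r (Ioc 0 κ₀) ∧ MonotoneOn r (Ioc 0 κ₀) ∧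
    (∀ κ ∈ Ioc (0:ℝ) κ₀, r κ ∈ Ioo (0:ℝ) 1) ∧
    Tendsto (fun κ => κ / r κ) (nhdsWithin 0 (Ioi 0)) (nhds 0)

/-- The shear flow `u` is diffusion enhancing at rate `r` on `(0,κ₀]`: every solution with
streamline-mean-free initial datum decays like `C e^{-r(κ)t}` in `L²`. -/
def DiffusionEnhancing (δ κ₀ : ℝ) (u : ℝ → ℝ) (r : ℝ → ℝ) : Prop :=
  ∃ C : ℝ, 1 ≤ C ∧ ∀ κ ∈ Ioc (0:ℝ) κ₀, ∀ ρ : ℝ → ℝ → ℝ → ℝ,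
    IsShearSolution δ κ u ρ →
    (∀ y : ℝ, (∫ x in (0:ℝ)..(2 * π), ρ 0 x y) = 0) →
    ∀ t : ℝ, 0 ≤ t → l2normSq ρ t ≤ C * Real.exp (-(r κ) * t) * l2normSq ρ 0

/-! ### Fourier coefficients of Lipschitz functions -/

/-- Bessel's inequality for a bounded continuous function on the circle. -/
lemma sum_sq_fourierCoeff_le {T : ℝ} [hT : Fact (0 < T)] (g : C(AddCircle T, ℂ)) (B : ℝ)
    (hB : ∀ x, ‖g x‖ ≤ B) (s : Finset ℤ) :
    ∑ n ∈ s, ‖fourierCoeff g n‖ ^ 2 ≤ B ^ 2 := by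
  have h := hasSum_sq_fourierCoeff (ContinuousMap.toLp (E := ℂ) 2 AddCircle.haarAddCircle ℂ g)
  simp_rw [fourierCoeff_toLp] at h
  refine (sum_le_hasSum s (fun _ _ => by positivity) h).trans ?_
  have h2 : ∫ t : AddCircle T, ‖(ContinuousMap.toLp (E := ℂ) 2 AddCircle.haarAddCircle ℂ g) t‖ ^ 2
      ∂AddCircle.haarAddCircle = ∫ t : AddCircle T, ‖g t‖ ^ 2 ∂AddCircle.haarAddCircle := by
    apply integral_congr_ae
    filter_upwards [ContinuousMap.coeFn_toLp (p := 2) (𝕜 := ℂ)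
      (μ := (AddCircle.haarAddCircle : Measure (AddCircle T))) g] with x hx
    rw [hx]
  rw [h2]
  have h3 : ∫ t : AddCircle T, ‖g t‖ ^ 2 ∂AddCircle.haarAddCircle
      ≤ ∫ t : AddCircle T, B ^ 2 ∂AddCircle.haarAddCircle := by
    apply integral_mono_of_nonneg
    · exact Eventually.of_forall fun x => by positivity
    · exact integrable_const _
    · exact Eventually.of_forall fun x => pow_le_pow_left₀ (norm_nonneg _) (hB x) 2
  simpa using h3

lemma fourierCoeff_translate {T : ℝ} [hT : Fact (0 < T)] (g : C(AddCircle T, ℂ)) (h : AddCircle T)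
    (n : ℤ) : fourierCoeff (fun x => g (x + h)) n = fourier n h * fourierCoeff g n := by
  unfold fourierCoeff
  rw [← integral_add_right_eq_self (μ := (AddCircle.haarAddCircle : Measure (AddCircle T)))
    (fun t => fourier (-n) t • g t) h, ← integral_const_mul]
  congr 1
  ext t
  have : (fourier n h : ℂ) * fourier (-n) h = 1 := by
    rw [← fourier_add]; simp
  have h2 : (fourier (-n) (t + h) : ℂ) = fourier (-n) t * fourier (-n) h := by
    simp [fourier_apply, AddCircle.toCircle_add]
  simp only [smul_eq_mul, h2]
  linear_combination (-(fourier (-n) t : ℂ) * g (t + h)) * this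

/-- A Lipschitz periodic function has an absolutely convergent Fourier series. Bessel's inequality
applied to the difference quotients bounds `∑ n² |û(n)|²` by `c²`, and
`2 |û(n)| ≤ n² |û(n)|² + 1 / n²`. -/
lemma lipschitz_fourier_summable (u : ℝ → ℝ) (hu_per : ∀ y, u (y + 2 * π) = u y)
    (c : ℝ) (hu_lip : ∀ y y' : ℝ, |u y - u y'| ≤ c * |y - y'|) :
    ∃ a : ℤ → ℂ, Summable (fun n => ‖a n‖) ∧
      ∀ y : ℝ, HasSum (fun n : ℤ => a n * Complex.exp (Complex.I * n * y)) (u y) := by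
  have : Fact (0 < 2 * π) := ⟨by positivity⟩
  have hcont : Continuous u := by
    have : LipschitzWith (Real.toNNReal c) u := by
      apply LipschitzWith.of_dist_le_mul
      intro x y
      rw [Real.dist_eq, Real.dist_eq]
      refine (hu_lip x y).trans ?_
      gcongr
      exact Real.le_coe_toNNReal c
    exact this.continuous
  have hper : Function.Periodic (fun y => (u y : ℂ)) (2 * π) := fun y => by simp [hu_per]
  let g : C(AddCircle (2 * π), ℂ) :=
    ⟨hper.lift, continuous_coinduced_dom.mpr (by
      exact Complex.continuous_ofReal.comp hcont)⟩
  have hg : ∀ y : ℝ, g (y : AddCircle (2 * π)) = u y := fun y => rfl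
  have key : ∀ (h : ℝ) (s : Finset ℤ),
      ∑ n ∈ s, ‖((fourier n (h : AddCircle (2 * π)) : ℂ) - 1) * fourierCoeff g n‖ ^ 2
        ≤ (c * |h|) ^ 2 := by
    intro h s
    have := sum_sq_fourierCoeff_le
      (⟨fun x => g (x + h) - g x, by fun_prop⟩ : C(AddCircle (2 * π), ℂ)) (c * |h|) ?_ s
    · convert this using 4 with n hn
      have h1 := fourierCoeff_translate g (h : AddCircle (2 * π)) n
      have i1 : Integrable (fun x => g (x + (h : AddCircle (2 * π)))) AddCircle.haarAddCircle :=
        (show Continuous (fun x => g (x + (h : AddCircle (2 * π)))) by fun_prop).integrable_of_hasCompactSupport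
          (HasCompactSupport.of_compactSpace _)
      have i2 : Integrable (fun x => (-1 : ℂ) * g x) AddCircle.haarAddCircle :=
        (show Continuous (fun x => (-1 : ℂ) * g x) by fun_prop).integrable_of_hasCompactSupport
          (HasCompactSupport.of_compactSpace _)
      have h2 := congrFun (fourierCoeff.add i1 i2) n
      have h3 : ((fun x => g (x + (h : AddCircle (2 * π)))) + fun x => (-1 : ℂ) * g x)
        = fun x => g (x + h) - g x := by ext x; simp; ring
      rw [h3, Pi.add_apply, h1, fourierCoeff.const_mul] at h2
      simp only [ContinuousMap.coe_mk]
      rw [h2]; ring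
    · intro x
      induction x using QuotientAddGroup.induction_on with
      | H y =>
        have := hu_lip (y + h) y
        simp only [ContinuousMap.coe_mk]
        change ‖((u (y + h) : ℝ) : ℂ) - ((u y : ℝ) : ℂ)‖ ≤ _
        rw [← Complex.ofReal_sub, Complex.norm_real, Real.norm_eq_abs]
        simpa using this
  have hexp : ∀ (n : ℤ) (h : ℝ), (fourier n (h : AddCircle (2 * π)) : ℂ)
      = Complex.exp (Complex.I * n * h) := by
    intro n h
    rw [fourier_coe_apply]
    congr 1
    have : (π : ℂ) ≠ 0 := by exact_mod_cast Real.pi_ne_zero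
    push_cast
    field_simp
  -- letting `h → 0` in the Bessel inequality for the difference quotients
  have key2 : ∀ s : Finset ℤ, ∑ n ∈ s, ‖(n : ℂ) * fourierCoeff g n‖ ^ 2 ≤ c ^ 2 := by
    intro s
    have hd : ∀ n : ℤ, Tendsto (fun h : ℝ => (h : ℂ)⁻¹ * (Complex.exp (Complex.I * n * h) - 1))
        (nhdsWithin 0 {0}ᶜ) (nhds (Complex.I * n)) := by
      intro n
      have h0 : HasDerivAt (fun h : ℝ => Complex.exp (Complex.I * n * h)) (Complex.I * n) 0 := by
        have : HasDerivAt (fun h : ℂ => Complex.exp (Complex.I * n * h)) (Complex.I * n)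
            ((0 : ℝ) : ℂ) := by
          have := ((hasDerivAt_id ((0 : ℝ) : ℂ)).const_mul (Complex.I * n)).cexp
          simpa using this
        exact this.comp_ofReal
      have := h0.tendsto_slope_zero
      simpa using this
    have hlim : Tendsto (fun h : ℝ => ∑ n ∈ s,
        ‖((h : ℂ)⁻¹ * (Complex.exp (Complex.I * n * h) - 1)) * fourierCoeff g n‖ ^ 2)
        (nhdsWithin 0 {0}ᶜ) (nhds (∑ n ∈ s, ‖(Complex.I * n) * fourierCoeff g n‖ ^ 2)) := by
      refine tendsto_finsetSum _ fun n _ => ?_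
      exact (((hd n).mul_const _).norm).pow 2
    have hle : ∑ n ∈ s, ‖(Complex.I * n) * fourierCoeff g n‖ ^ 2 ≤ c ^ 2 := by
      refine le_of_tendsto hlim ?_
      filter_upwards [self_mem_nhdsWithin] with h hh
      have hh' : h ≠ 0 := hh
      have hk := key h s
      have e : ∀ n : ℤ, ‖((h : ℂ)⁻¹ * (Complex.exp (Complex.I * n * h) - 1)) * fourierCoeff g n‖ ^ 2
          = (|h| ^ 2)⁻¹ * ‖((fourier n (h : AddCircle (2 * π)) : ℂ) - 1) * fourierCoeff g n‖ ^ 2 := by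
        intro n
        rw [hexp, mul_assoc, norm_mul, mul_pow, norm_inv, Complex.norm_real, inv_pow,
          Real.norm_eq_abs]
      simp_rw [e]
      rw [← Finset.mul_sum]
      have hp : 0 < |h| ^ 2 := by positivity
      rw [inv_mul_le_iff₀ hp]
      linarith [mul_pow c |h| 2]
    simpa [norm_mul] using hle
  have hsum2 : Summable (fun n : ℤ => ‖(n : ℂ) * fourierCoeff g n‖ ^ 2) :=
    summable_of_sum_le (fun n => by positivity) key2
  have hs : Summable (fun n : ℤ => ‖fourierCoeff g n‖) := by
    have h2 : Summable (fun n : ℤ => 1 / (n : ℝ) ^ 2) :=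
      Real.summable_one_div_int_pow.mpr (by norm_num)
    have h0 : Summable (fun n : ℤ => if n = 0 then ‖fourierCoeff g n‖ else 0) :=
      (hasSum_ite_eq 0 ‖fourierCoeff g 0‖).summable.congr (fun n => by
        by_cases h : n = 0 <;> simp [h])
    refine Summable.of_nonneg_of_le (fun n => norm_nonneg _) (fun n => ?_)
      ((hsum2.add h2).add h0)
    by_cases hn : n = 0
    · simp [hn]
    · have hn' : (0 : ℝ) < (n : ℝ) ^ 2 := by positivity
      simp only [hn, if_false, add_zero, norm_mul, Complex.norm_intCast, mul_pow, sq_abs]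
      have e : (n : ℝ) ^ 2 * (1 / (n : ℝ) ^ 2) = 1 := by field_simp
      have p : 0 ≤ 1 / (n : ℝ) ^ 2 := by positivity
      have q := mul_nonneg hn'.le (sq_nonneg (‖fourierCoeff g n‖ - 1 / (n : ℝ) ^ 2))
      have q2 : (n : ℝ) ^ 2 * (‖fourierCoeff g n‖ - 1 / (n : ℝ) ^ 2) ^ 2
          = (n : ℝ) ^ 2 * ‖fourierCoeff g n‖ ^ 2 - 2 * ‖fourierCoeff g n‖ + 1 / (n : ℝ) ^ 2 := by
        linear_combination (1 / (n : ℝ) ^ 2 - 2 * ‖fourierCoeff g n‖) * e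
      linarith [norm_nonneg (fourierCoeff g n)]
  refine ⟨fourierCoeff g, hs, fun y => ?_⟩
  have := has_pointwise_sum_fourier_series_of_summable (f := g) hs.of_norm (y : AddCircle (2 * π))
  simpa only [hexp, smul_eq_mul, hg] using this

section Existence

open scoped BoundedContinuousFunction

/-! ### Duhamel integrals and paths in the Wiener algebra -/

/-- The Duhamel integral `∫₀ᵗ e^{-μ (t - s)} v(s) ds`, extended to negative times by its value `0`
at `t = 0`, so that it is continuous on all of `ℝ`. -/
def duhamel (μ : ℝ) (v : ℝ → ℂ) (t : ℝ) : ℂ :=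
  ∫ s in (0:ℝ)..(max t 0), (Real.exp (-μ * (max t 0 - s)) : ℂ) * v s

/-- Factoring the exponential out reduces the Duhamel integral to a primitive. -/
lemma duhamel_eq (μ : ℝ) (v : ℝ → ℂ) (t : ℝ) :
    duhamel μ v t = (Real.exp (-μ * max t 0) : ℂ) *
      ∫ s in (0:ℝ)..(max t 0), (Real.exp (μ * s) : ℂ) * v s := by
  unfold duhamel
  rw [← intervalIntegral.integral_const_mul]
  congr 1
  ext s
  rw [← mul_assoc, ← Complex.ofReal_mul, ← Real.exp_add]
  congr 3
  ring

lemma duhamel_continuous (μ : ℝ) (v : ℝ → ℂ) (hv : Continuous v) : Continuous (duhamel μ v) := by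
  have : duhamel μ v = fun t => (Real.exp (-μ * max t 0) : ℂ) *
      ∫ s in (0:ℝ)..(max t 0), (Real.exp (μ * s) : ℂ) * v s := funext (duhamel_eq μ v)
  rw [this]
  have h1 : Continuous fun x : ℝ => ∫ s in (0:ℝ)..x, (Real.exp (μ * s) : ℂ) * v s :=
    intervalIntegral.continuous_primitive
      (fun a b => (show Continuous fun s : ℝ => (Real.exp (μ * s) : ℂ) * v s by
        fun_prop).intervalIntegrable a b) 0
  have h2 := h1.comp (show Continuous fun t : ℝ => max t 0 by fun_prop)
  exact (by fun_prop : Continuous fun t : ℝ => (Real.exp (-μ * max t 0) : ℂ)).mul h2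

lemma duhamel_hasDerivAt (μ : ℝ) (v : ℝ → ℂ) (hv : Continuous v) (t : ℝ) (ht : 0 < t) :
    HasDerivAt (duhamel μ v) (-μ * duhamel μ v t + v t) t := by
  have hc : Continuous fun s : ℝ => (Real.exp (μ * s) : ℂ) * v s := by fun_prop
  have h1 : HasDerivAt (fun x : ℝ => ∫ s in (0:ℝ)..x, (Real.exp (μ * s) : ℂ) * v s)
      ((Real.exp (μ * t) : ℂ) * v t) t :=
    intervalIntegral.integral_hasDerivAt_right (hc.intervalIntegrable _ _)
      (hc.stronglyMeasurableAtFilter _ _) hc.continuousAt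
  have h2 : HasDerivAt (fun x : ℝ => (Real.exp (-μ * x) : ℂ)) ((Real.exp (-μ * t) * -μ : ℝ) : ℂ) t := by
    have : HasDerivAt (fun x : ℝ => Real.exp (-μ * x)) (Real.exp (-μ * t) * -μ) t := by
      simpa using ((hasDerivAt_id t).const_mul (-μ)).exp
    exact this.ofReal_comp
  have h3 := h2.mul h1
  have he : duhamel μ v =ᶠ[nhds t] ((fun x : ℝ => (Real.exp (-μ * x) : ℂ)) *
      fun x : ℝ => ∫ s in (0:ℝ)..x, (Real.exp (μ * s) : ℂ) * v s) := by
    filter_upwards [Ioi_mem_nhds ht] with x hx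
    rw [duhamel_eq, max_eq_left (le_of_lt hx)]
    rfl
  refine (h3.congr_of_eventuallyEq he).congr_deriv ?_
  rw [duhamel_eq, max_eq_left ht.le]
  have : (Real.exp (-μ * t) : ℂ) * (Real.exp (μ * t) : ℂ) = 1 := by
    rw [← Complex.ofReal_mul, ← Real.exp_add]; simp
  push_cast at this ⊢
  linear_combination v t * this

lemma duhamel_norm_le (μ : ℝ) (hμ : 0 < μ) (v : ℝ → ℂ) (B : ℝ)
    (hB : ∀ s, ‖v s‖ ≤ B) (t : ℝ) : ‖duhamel μ v t‖ ≤ μ⁻¹ * B := by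
  have hB0 : 0 ≤ B := (norm_nonneg _).trans (hB 0)
  have ht : 0 ≤ max t 0 := le_max_right _ _
  unfold duhamel
  set τ := max t 0
  have hd : ∀ s ∈ Set.uIcc 0 τ, HasDerivAt (fun s => μ⁻¹ * Real.exp (-μ * (τ - s)) * B)
      (Real.exp (-μ * (τ - s)) * B) s := by
    intro s _
    have h1 : HasDerivAt (fun s => -μ * (τ - s)) μ s := by
      simpa using ((hasDerivAt_id s).const_sub τ).const_mul (-μ)
    refine ((h1.exp.const_mul μ⁻¹).mul_const B).congr_deriv ?_
    field_simp
  have hc : Continuous fun s => Real.exp (-μ * (τ - s)) * B := by fun_prop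
  have hi := intervalIntegral.integral_eq_sub_of_hasDerivAt hd (hc.intervalIntegrable _ _)
  have h : ‖∫ s in (0:ℝ)..τ, (Real.exp (-μ * (τ - s)) : ℂ) * v s‖
      ≤ ∫ s in (0:ℝ)..τ, Real.exp (-μ * (τ - s)) * B := by
    apply intervalIntegral.norm_integral_le_of_norm_le ht _ (hc.intervalIntegrable _ _)
    filter_upwards with s _
    rw [norm_mul, Complex.norm_real, Real.norm_eq_abs, abs_of_pos (Real.exp_pos _)]
    gcongr
    exact hB s
  refine h.trans ?_
  rw [hi]
  have : 0 ≤ μ⁻¹ * Real.exp (-μ * (τ - 0)) * B := by positivity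
  simp only [sub_self, mul_zero, Real.exp_zero, mul_one]
  linarith

/-- The Duhamel integral as an operator, of norm at most `μ⁻¹`, on bounded continuous paths. -/
def duhamelCLM (μ : ℝ) (hμ : 0 < μ) : (ℝ →ᵇ ℂ) →L[ℂ] (ℝ →ᵇ ℂ) :=
  LinearMap.mkContinuous
    { toFun := fun v => BoundedContinuousFunction.ofNormedAddCommGroup (duhamel μ v)
        (duhamel_continuous μ v v.continuous) (μ⁻¹ * ‖v‖)
        (duhamel_norm_le μ hμ v ‖v‖ v.norm_coe_le_norm)
      map_add' := fun v w => by
        ext t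
        have i : ∀ v : ℝ →ᵇ ℂ, IntervalIntegrable
            (fun s : ℝ => (Real.exp (-μ * (max t 0 - s)) : ℂ) * v s) volume 0 (max t 0) := fun v =>
          Continuous.intervalIntegrable (by have := v.continuous; fun_prop) _ _
        simp only [BoundedContinuousFunction.coe_ofNormedAddCommGroup,
          BoundedContinuousFunction.coe_add, Pi.add_apply, duhamel, mul_add]
        exact intervalIntegral.integral_add (i v) (i w)
      map_smul' := fun c v => by
        ext t
        simp only [BoundedContinuousFunction.coe_ofNormedAddCommGroup,
          BoundedContinuousFunction.coe_smul, duhamel, RingHom.id_apply, smul_eq_mul]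
        rw [← intervalIntegral.integral_const_mul]
        congr 1
        ext s
        ring }
    μ⁻¹ (fun v => by
      exact BoundedContinuousFunction.norm_ofNormedAddCommGroup_le _ (by positivity)
        (duhamel_norm_le μ hμ v ‖v‖ v.norm_coe_le_norm))

lemma duhamelCLM_apply (μ : ℝ) (hμ : 0 < μ) (v : ℝ →ᵇ ℂ) (t : ℝ) :
    duhamelCLM μ hμ v t = duhamel μ v t := rfl

lemma norm_duhamelCLM_le (μ : ℝ) (hμ : 0 < μ) : ‖duhamelCLM μ hμ‖ ≤ μ⁻¹ :=
  LinearMap.mkContinuous_norm_le _ (by positivity) _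

/-- The Banach space `ℓ¹(ℤ; C_b(ℝ, ℂ))`: families of bounded continuous paths `t ↦ bₙ(t)` with
`∑ₙ supₜ |bₙ(t)| < ∞`. Such a family is read as the function
`(t, y) ↦ ∑ₙ bₙ(t) e^{i n y}`, a path in the Wiener algebra of the circle. -/
def WienerPath : Type := lp (fun _ : ℤ => ℝ →ᵇ ℂ) 1

namespace WienerPath

instance : NormedAddCommGroup WienerPath :=
  inferInstanceAs (NormedAddCommGroup (lp (fun _ : ℤ => ℝ →ᵇ ℂ) 1))

instance : NormedSpace ℂ WienerPath :=
  inferInstanceAs (NormedSpace ℂ (lp (fun _ : ℤ => ℝ →ᵇ ℂ) 1))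

instance : CompleteSpace WienerPath :=
  inferInstanceAs (CompleteSpace (lp (fun _ : ℤ => ℝ →ᵇ ℂ) 1))

/-- The path of the `n`-th Fourier coefficient. -/
def coeff (b : WienerPath) : ℤ → ℝ →ᵇ ℂ := (b : lp (fun _ : ℤ => ℝ →ᵇ ℂ) 1).1

instance : CoeFun WienerPath (fun _ => ℤ → ℝ →ᵇ ℂ) := ⟨coeff⟩

lemma ext {b c : WienerPath} (h : ∀ n, b n = c n) : b = c := Subtype.ext (funext h)

lemma add_apply (b c : WienerPath) (n : ℤ) : (b + c) n = b n + c n := rfl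

lemma smul_apply (z : ℂ) (b : WienerPath) (n : ℤ) : (z • b) n = z • b n := rfl

lemma summable_norm (b : WienerPath) : Summable fun n => ‖b n‖ := by
  have h := (lp.memℓp (b : lp (fun _ : ℤ => ℝ →ᵇ ℂ) 1)).summable (by simp)
  simp only [ENNReal.toReal_one, Real.rpow_one] at h
  exact h

lemma norm_eq (b : WienerPath) : ‖b‖ = ∑' n, ‖b n‖ := by
  have h := lp.norm_eq_tsum_rpow (p := 1) (by simp) (b : lp (fun _ : ℤ => ℝ →ᵇ ℂ) 1)
  simp only [ENNReal.toReal_one, Real.rpow_one, div_one] at h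
  exact h

/-- The element of `WienerPath` with prescribed summable coefficient paths. -/
def mk (b : ℤ → ℝ →ᵇ ℂ) (hb : Summable fun n => ‖b n‖) : WienerPath :=
  (⟨b, memℓp_gen (by simpa using hb)⟩ : lp (fun _ : ℤ => ℝ →ᵇ ℂ) 1)

lemma mk_apply (b : ℤ → ℝ →ᵇ ℂ) (hb : Summable fun n => ‖b n‖) (n : ℤ) : mk b hb n = b n := rfl

end WienerPath

lemma summable_shift (b : WienerPath) (k : ℤ) : Summable fun n => ‖b (n - k)‖ := by
  have h := (Equiv.subRight k).summable_iff.mpr b.summable_norm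
  simpa only [Function.comp_def, Equiv.subRight_apply] using h

lemma tsum_shift (b : WienerPath) (k : ℤ) : ∑' n, ‖b (n - k)‖ = ∑' n, ‖b n‖ := by
  have h := (Equiv.subRight k).tsum_eq fun n => ‖b n‖
  simpa only [Equiv.subRight_apply] using h

/-- Multiplication of the represented function by `e^{i k y}`: a shift of the coefficients. -/
def shiftCLM (k : ℤ) : WienerPath →L[ℂ] WienerPath :=
  LinearMap.mkContinuous
    { toFun := fun b => WienerPath.mk (fun n => b (n - k))
        (summable_shift b k)
      map_add' := fun b c => WienerPath.ext fun n => WienerPath.add_apply b c (n - k)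
      map_smul' := fun z b => WienerPath.ext fun n => WienerPath.smul_apply z b (n - k) }
    1 (fun b => by
      rw [one_mul, WienerPath.norm_eq, WienerPath.norm_eq]
      exact (tsum_shift b k).le)

lemma shiftCLM_apply (k : ℤ) (b : WienerPath) (n : ℤ) : shiftCLM k b n = b (n - k) := rfl

lemma norm_shiftCLM_le (k : ℤ) : ‖shiftCLM k‖ ≤ 1 :=
  LinearMap.mkContinuous_norm_le _ zero_le_one _

lemma norm_cexp_int (n : ℤ) (y : ℝ) : ‖Complex.exp (Complex.I * n * y)‖ = 1 := by
  have : Complex.I * n * y = ((n * y : ℝ) : ℂ) * Complex.I := by push_cast; ring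
  rw [this, Complex.norm_exp_ofReal_mul_I]

lemma norm_eval_le (b : WienerPath) (t y : ℝ) (n : ℤ) :
    ‖b n t * Complex.exp (Complex.I * n * y)‖ ≤ ‖b n‖ := by
  rw [norm_mul, norm_cexp_int, mul_one]
  exact (b n).norm_coe_le_norm t

lemma summable_eval (b : WienerPath) (t y : ℝ) :
    Summable fun n : ℤ => b n t * Complex.exp (Complex.I * n * y) :=
  Summable.of_norm_bounded b.summable_norm (norm_eval_le b t y)

/-- The value `∑ₙ bₙ(t) e^{i n y}` at `(t, y)` of the function represented by `b`. -/
def evalCLM (t y : ℝ) : WienerPath →L[ℂ] ℂ :=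
  LinearMap.mkContinuous
    { toFun := fun b => ∑' n : ℤ, b n t * Complex.exp (Complex.I * n * y)
      map_add' := fun b c => by
        rw [← Summable.tsum_add]
        · congr 1; ext n; exact add_mul (b n t) (c n t) _
        exacts [summable_eval b t y, summable_eval c t y]
      map_smul' := fun c b => by
        rw [RingHom.id_apply, smul_eq_mul, ← tsum_mul_left]
        congr 1; ext n; exact mul_assoc c (b n t) _ }
    1 (fun b => by
      rw [one_mul, WienerPath.norm_eq]
      exact tsum_of_norm_bounded b.summable_norm.hasSum (norm_eval_le b t y))

lemma evalCLM_apply (t y : ℝ) (b : WienerPath) :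
    evalCLM t y b = ∑' n : ℤ, b n t * Complex.exp (Complex.I * n * y) := rfl

lemma evalCLM_shift (t y : ℝ) (k : ℤ) (b : WienerPath) :
    evalCLM t y (shiftCLM k b) = Complex.exp (Complex.I * k * y) * evalCLM t y b := by
  rw [evalCLM_apply, evalCLM_apply, ← tsum_mul_left, ← (Equiv.addRight k).tsum_eq]
  congr 1
  ext n
  simp only [Equiv.coe_addRight, shiftCLM_apply, add_sub_cancel_right]
  have : Complex.exp (Complex.I * (n + k : ℤ) * y)
      = Complex.exp (Complex.I * k * y) * Complex.exp (Complex.I * n * y) := by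
    rw [← Complex.exp_add]; congr 1; push_cast; ring
  rw [this]; ring

/-- Multiplication of the represented function by `∑ₖ aₖ e^{i k y}`, that is, convolution of the
coefficients with `a`. It has the intended value when `a` is summable, which makes the series
converge in operator norm. -/
def mulCLM (a : ℤ → ℂ) : WienerPath →L[ℂ] WienerPath := ∑' k, a k • shiftCLM k

lemma mulCLM_bound (a : ℤ → ℂ) (k : ℤ) : ‖a k • shiftCLM k‖ ≤ ‖a k‖ := by
  rw [norm_smul]
  exact mul_le_of_le_one_right (norm_nonneg _) (norm_shiftCLM_le k)

lemma norm_mulCLM_le (a : ℤ → ℂ) (ha : Summable fun n => ‖a n‖) :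
    ‖mulCLM a‖ ≤ ∑' n, ‖a n‖ :=
  tsum_of_norm_bounded ha.hasSum (mulCLM_bound a)

lemma evalCLM_mul (a : ℤ → ℂ) (ha : Summable fun n => ‖a n‖) (t y : ℝ) (U : ℂ)
    (hU : HasSum (fun n : ℤ => a n * Complex.exp (Complex.I * n * y)) U) (b : WienerPath) :
    evalCLM t y (mulCLM a b) = U * evalCLM t y b := by
  have hs : HasSum (fun k => a k • shiftCLM k) (mulCLM a) :=
    (Summable.of_norm_bounded ha (mulCLM_bound a)).hasSum
  have h1 := (evalCLM t y).hasSum ((ContinuousLinearMap.apply ℂ WienerPath b).hasSum hs)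
  have h2 := hU.mul_right (evalCLM t y b)
  refine h1.unique (h2.congr_fun ?_)
  intro k
  simp [evalCLM_shift, mul_assoc]

lemma diag_bound {T : ℤ → (ℝ →ᵇ ℂ) →L[ℂ] (ℝ →ᵇ ℂ)} {B : ℝ} (hT : ∀ n, ‖T n‖ ≤ B)
    (b : WienerPath) (n : ℤ) : ‖T n (b n)‖ ≤ B * ‖b n‖ :=
  (T n).le_of_opNorm_le (hT n) _

lemma summable_diag {T : ℤ → (ℝ →ᵇ ℂ) →L[ℂ] (ℝ →ᵇ ℂ)} {B : ℝ} (hT : ∀ n, ‖T n‖ ≤ B)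
    (b : WienerPath) : Summable fun n => ‖T n (b n)‖ :=
  Summable.of_nonneg_of_le (fun _ => norm_nonneg _) (diag_bound hT b) (b.summable_norm.mul_left B)

/-- The operator acting on the `n`-th coefficient path by `T n`, for uniformly bounded `T n`. -/
def diagCLM (T : ℤ → (ℝ →ᵇ ℂ) →L[ℂ] (ℝ →ᵇ ℂ)) (B : ℝ) (hT : ∀ n, ‖T n‖ ≤ B) :
    WienerPath →L[ℂ] WienerPath :=
  LinearMap.mkContinuous
    { toFun := fun b => WienerPath.mk (fun n => T n (b n)) (summable_diag hT b)
      map_add' := fun b c => WienerPath.ext fun n => (T n).map_add (b n) (c n)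
      map_smul' := fun z b => WienerPath.ext fun n => (T n).map_smul z (b n) }
    B (fun b => by
      rw [WienerPath.norm_eq, WienerPath.norm_eq, ← tsum_mul_left]
      exact Summable.tsum_le_tsum (diag_bound hT b) (summable_diag hT b)
        (b.summable_norm.mul_left B))

lemma diagCLM_apply (T : ℤ → (ℝ →ᵇ ℂ) →L[ℂ] (ℝ →ᵇ ℂ)) (B : ℝ)
    (hT : ∀ n, ‖T n‖ ≤ B) (b : WienerPath) (n : ℤ) : diagCLM T B hT b n = T n (b n) := rfl

lemma norm_diagCLM_le (T : ℤ → (ℝ →ᵇ ℂ) →L[ℂ] (ℝ →ᵇ ℂ)) (B : ℝ) (hB : 0 ≤ B)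
    (hT : ∀ n, ‖T n‖ ≤ B) : ‖diagCLM T B hT‖ ≤ B :=
  LinearMap.mkContinuous_norm_le _ hB _

/-- Neumann series: an affine map whose linear part has norm `< 1` has a fixed point. -/
lemma exists_fixed {X : Type*} [NormedAddCommGroup X] [NormedSpace ℂ X] [CompleteSpace X]
    (T : X →L[ℂ] X) (hT : ‖T‖ < 1) (b₀ : X) : ∃ b, b = b₀ + T b := by
  refine ⟨∑' n : ℕ, (T ^ n) b₀, ?_⟩
  have hs : Summable fun n : ℕ => T ^ n := summable_geometric_of_norm_lt_one hT
  have hs' : Summable fun n : ℕ => (T ^ n) b₀ :=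
    hs.mapL (ContinuousLinearMap.apply ℂ X b₀)
  conv_lhs => rw [hs'.tsum_eq_zero_add]
  rw [T.map_tsum hs']
  congr 1
  congr 1
  ext n
  rw [pow_succ']
  rfl

/-- Existence of a mild solution. If `f` solves `∂ₜf = κ ∂ᵧᵧf - i u f`, `f(0) = 1`, then the Fourier
coefficients `bₙ` of `e^{-K t} f` satisfy `bₙ' = -(κ n² + K) bₙ - i (u * b)ₙ`; this is the integrated
form. The weight `K > ‖a‖_{ℓ¹}` makes the Duhamel operator a contraction globally in time. -/
lemma exists_mild (κ : ℝ) (hκ : 0 < κ) (a : ℤ → ℂ) (ha : Summable fun n => ‖a n‖) :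
    ∃ (K : ℝ) (b v : WienerPath), 0 < K ∧ v = mulCLM a b ∧
      ∀ n t, b n t = (if n = 0 then (Real.exp (-K * max t 0) : ℂ) else 0)
        - Complex.I * duhamel (κ * n ^ 2 + K) (v n) t := by
  set K : ℝ := 2 * (∑' n, ‖a n‖) + 1 with hK
  have hU : 0 ≤ ∑' n, ‖a n‖ := tsum_nonneg fun _ => norm_nonneg _
  have hK0 : 0 < K := by positivity
  have hμ : ∀ n : ℤ, 0 < κ * n ^ 2 + K := fun n => by positivity
  set J := diagCLM (fun n => duhamelCLM (κ * n ^ 2 + K) (hμ n)) K⁻¹ (fun n =>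
    (norm_duhamelCLM_le _ (hμ n)).trans (by
      gcongr
      have : 0 ≤ κ * (n : ℝ) ^ 2 := by positivity
      linarith)) with hJ
  set e : ℝ →ᵇ ℂ := BoundedContinuousFunction.ofNormedAddCommGroup
    (fun t : ℝ => (Real.exp (-K * max t 0) : ℂ)) (by fun_prop) 1 (fun t => by
      rw [Complex.norm_real, Real.norm_eq_abs, abs_of_pos (Real.exp_pos _), Real.exp_le_one_iff]
      have : 0 ≤ max t 0 := le_max_right _ _
      nlinarith) with he
  set b₀ : WienerPath := WienerPath.mk (fun n => if n = 0 then e else 0)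
    (summable_of_ne_finset_zero (s := {0}) (fun n hn => by
      have : n ≠ 0 := by simpa using hn
      simp [this])) with hb₀
  have hT : ‖-Complex.I • (J.comp (mulCLM a))‖ < 1 := by
    rw [norm_smul, norm_neg, Complex.norm_I, one_mul]
    calc ‖J.comp (mulCLM a)‖ ≤ ‖J‖ * ‖mulCLM a‖ := ContinuousLinearMap.opNorm_comp_le _ _
      _ ≤ K⁻¹ * ∑' n, ‖a n‖ := by
          gcongr
          · exact norm_diagCLM_le _ _ (by positivity) _
          · exact norm_mulCLM_le a ha
      _ < 1 := by
          rw [inv_mul_lt_iff₀ hK0]; linarith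
  obtain ⟨b, hb⟩ := exists_fixed _ hT b₀
  refine ⟨K, b, mulCLM a b, hK0, rfl, fun n t => ?_⟩
  have h1 : b n t = (b₀ + (-Complex.I • (J.comp (mulCLM a))) b) n t := by rw [← hb]
  have h2 : (b₀ + (-Complex.I • (J.comp (mulCLM a))) b) n t
      = (if n = 0 then e else 0) t + -Complex.I * duhamel (κ * n ^ 2 + K) (mulCLM a b n) t := rfl
  rw [h1, h2]
  by_cases hn : n = 0
  · simp only [hn, if_true, he]
    rw [BoundedContinuousFunction.coe_ofNormedAddCommGroup]
    ring
  · simp [hn]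

/-! ### Classical solutions of the one-mode equation -/

lemma hasDerivAt_cexp_int (n : ℤ) (y : ℝ) :
    HasDerivAt (fun y : ℝ => Complex.exp (Complex.I * n * y))
      (Complex.I * n * Complex.exp (Complex.I * n * y)) y := by
  have : HasDerivAt (fun z : ℂ => Complex.exp (Complex.I * n * z))
      (Complex.I * n * Complex.exp (Complex.I * n * y)) (y : ℂ) := by
    have := ((hasDerivAt_id (y : ℂ)).const_mul (Complex.I * n)).cexp
    refine this.congr_deriv ?_
    simp only [id_eq]; ring
  exact this.comp_ofReal

lemma cexp_int_periodic (n : ℤ) (y : ℝ) :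
    Complex.exp (Complex.I * n * ((y + 2 * π : ℝ) : ℂ)) = Complex.exp (Complex.I * n * y) := by
  have : Complex.I * n * ((y + 2 * π : ℝ) : ℂ) = Complex.I * n * y + n * (2 * π * Complex.I) := by
    push_cast; ring
  rw [this, Complex.exp_add, Complex.exp_int_mul_two_pi_mul_I, mul_one]

/-- Existence of a classical solution of `∂ₜf = κ ∂ᵧᵧf - i u f`, `f(0, y) = 1`, for `u` with
absolutely convergent Fourier series. The functions `fy` and `fyy` are the first two `y`-derivatives.
The coefficient equation has damping `κ n²`, so the mild solution gains two powers of `n`, and all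
series can be differentiated term by term. -/
lemma exists_classical (κ : ℝ) (hκ : 0 < κ) (u : ℝ → ℝ) (a : ℤ → ℂ)
    (ha : Summable fun n => ‖a n‖)
    (hu : ∀ y : ℝ, HasSum (fun n : ℤ => a n * Complex.exp (Complex.I * n * y)) (u y)) :
    ∃ f fy fyy : ℝ → ℝ → ℂ,
      Continuous (fun p : ℝ × ℝ => f p.1 p.2) ∧ Continuous (fun p : ℝ × ℝ => fy p.1 p.2) ∧
      Continuous (fun p : ℝ × ℝ => fyy p.1 p.2) ∧
      (∀ t y, f t (y + 2 * π) = f t y) ∧ (∀ t y, fy t (y + 2 * π) = fy t y) ∧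
      (∀ y, f 0 y = 1) ∧
      (∀ t y, HasDerivAt (f t) (fy t y) y) ∧ (∀ t y, HasDerivAt (fy t) (fyy t y) y) ∧
      (∀ t, 0 < t → ∀ y, HasDerivAt (fun s => f s y)
        (κ * fyy t y - Complex.I * u y * f t y) t) := by
  obtain ⟨K, b, v, hK, hv, hb⟩ := exists_mild κ hκ a ha
  have hμ : ∀ n : ℤ, 0 < κ * (n : ℝ) ^ 2 + K := fun n => by positivity
  -- For `n ≠ 0` the datum has no `n`-th mode, so only the Duhamel term contributes.
  have hb2 : ∀ (n : ℤ) (t : ℝ), (n : ℝ) ^ 2 * ‖b n t‖ ≤ κ⁻¹ * ‖v n‖ := by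
    intro n t
    by_cases hn : n = 0
    · simp only [hn, Int.cast_zero]
      have : 0 ≤ κ⁻¹ * ‖v 0‖ := by positivity
      simpa using this
    · have h1 : ‖b n t‖ ≤ (κ * (n : ℝ) ^ 2 + K)⁻¹ * ‖v n‖ := by
        rw [hb n t, if_neg hn, zero_sub, norm_neg, norm_mul, Complex.norm_I, one_mul]
        exact duhamel_norm_le _ (hμ n) _ _ (v n).norm_coe_le_norm t
      have hn2 : 0 < (n : ℝ) ^ 2 := by positivity
      calc (n : ℝ) ^ 2 * ‖b n t‖ ≤ (n : ℝ) ^ 2 * ((κ * (n : ℝ) ^ 2)⁻¹ * ‖v n‖) := by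
            gcongr
            refine h1.trans ?_
            gcongr
            linarith
        _ = κ⁻¹ * ‖v n‖ := by field_simp
  have hb1 : ∀ (n : ℤ) (t : ℝ), |(n : ℝ)| * ‖b n t‖ ≤ κ⁻¹ * ‖v n‖ := by
    intro n t
    refine le_trans ?_ (hb2 n t)
    gcongr
    rw [← sq_abs, ← Int.cast_abs]
    norm_cast
    rcases eq_or_ne n 0 with rfl | hn
    · simp
    · have := Int.one_le_abs hn
      nlinarith
  have hsv : Summable fun n => κ⁻¹ * ‖v n‖ := v.summable_norm.mul_left _
  have bound1 : ∀ (n : ℤ) (t y : ℝ),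
      ‖b n t * (Complex.I * n * Complex.exp (Complex.I * n * y))‖ ≤ κ⁻¹ * ‖v n‖ := by
    intro n t y
    rw [norm_mul, norm_mul, norm_mul, norm_cexp_int, Complex.norm_I, Complex.norm_intCast]
    linarith [hb1 n t]
  have bound2 : ∀ (n : ℤ) (t y : ℝ),
      ‖b n t * (Complex.I * n * (Complex.I * n * Complex.exp (Complex.I * n * y)))‖
        ≤ κ⁻¹ * ‖v n‖ := by
    intro n t y
    simp only [norm_mul, norm_cexp_int, Complex.norm_I, Complex.norm_intCast]
    have := hb2 n t
    rw [← sq_abs] at this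
    linarith
  set F : ℝ → ℝ → ℂ := fun t y => ∑' n : ℤ, b n t * Complex.exp (Complex.I * n * y) with hF
  set Fy : ℝ → ℝ → ℂ := fun t y =>
    ∑' n : ℤ, b n t * (Complex.I * n * Complex.exp (Complex.I * n * y)) with hFy
  set Fyy : ℝ → ℝ → ℂ := fun t y =>
    ∑' n : ℤ, b n t * (Complex.I * n * (Complex.I * n * Complex.exp (Complex.I * n * y))) with hFyy
  have cF : Continuous (fun p : ℝ × ℝ => F p.1 p.2) := by
    refine continuous_tsum (fun n => ?_) b.summable_norm (fun n p => norm_eval_le b p.1 p.2 n)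
    have := (b n).continuous
    fun_prop
  have cFy : Continuous (fun p : ℝ × ℝ => Fy p.1 p.2) := by
    refine continuous_tsum (fun n => ?_) hsv (fun n p => bound1 n p.1 p.2)
    have := (b n).continuous
    fun_prop
  have cFyy : Continuous (fun p : ℝ × ℝ => Fyy p.1 p.2) := by
    refine continuous_tsum (fun n => ?_) hsv (fun n p => bound2 n p.1 p.2)
    have := (b n).continuous
    fun_prop
  have dF : ∀ t y, HasDerivAt (F t) (Fy t y) y := by
    intro t y
    exact hasDerivAt_tsum (y₀ := 0) hsv (fun n y => (hasDerivAt_cexp_int n y).const_mul (b n t))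
      (fun n y => bound1 n t y) (summable_eval b t 0) y
  have dFy : ∀ t y, HasDerivAt (Fy t) (Fyy t y) y := by
    intro t y
    exact hasDerivAt_tsum (y₀ := 0) hsv
      (fun n y => ((hasDerivAt_cexp_int n y).const_mul (Complex.I * n)).const_mul (b n t))
      (fun n y => bound2 n t y) (Summable.of_norm_bounded hsv fun n => bound1 n t 0) y
  have dtb : ∀ (n : ℤ) (t : ℝ), 0 < t → HasDerivAt (fun s => b n s)
      (-((κ * n ^ 2 + K : ℝ) : ℂ) * b n t - Complex.I * v n t) t := by
    intro n t ht
    have h0 : HasDerivAt (fun s : ℝ => if n = 0 then (Real.exp (-K * max s 0) : ℂ) else 0)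
        (-((κ * n ^ 2 + K : ℝ) : ℂ) * (if n = 0 then (Real.exp (-K * max t 0) : ℂ) else 0)) t := by
      by_cases hn : n = 0
      · simp only [hn, if_true]
        have h1 : HasDerivAt (fun x : ℝ => Real.exp (-K * x)) (Real.exp (-K * t) * -K) t := by
          simpa using ((hasDerivAt_id t).const_mul (-K)).exp
        have he : (fun s : ℝ => (Real.exp (-K * max s 0) : ℂ))
            =ᶠ[nhds t] fun s => (Real.exp (-K * s) : ℂ) := by
          filter_upwards [Ioi_mem_nhds ht] with s hs
          rw [max_eq_left (le_of_lt hs)]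
        refine (h1.ofReal_comp.congr_of_eventuallyEq he).congr_deriv ?_
        rw [max_eq_left ht.le]
        push_cast
        ring
      · simp only [hn, if_false, mul_zero]
        exact hasDerivAt_const _ _
    have h1 := (duhamel_hasDerivAt (κ * n ^ 2 + K) (v n) (v n).continuous t ht).const_mul Complex.I
    have he : (fun s => b n s) = (fun s : ℝ => if n = 0 then (Real.exp (-K * max s 0) : ℂ) else 0)
        - fun s => Complex.I * duhamel (κ * n ^ 2 + K) (v n) s := funext fun s => hb n s
    rw [he]
    refine (h0.sub h1).congr_deriv ?_
    rw [hb n t]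
    push_cast
    ring
  have dtF : ∀ t, 0 < t → ∀ y, HasDerivAt (fun s => F s y)
      (κ * Fyy t y - K * F t y - Complex.I * (u y * F t y)) t := by
    intro t ht y
    have h := hasDerivAt_tsum_of_isPreconnected (t := Ioi (0:ℝ)) (y₀ := t) (y := t)
      (u := fun n => ‖v n‖ + K * ‖b n‖ + ‖v n‖)
      (g := fun (n : ℤ) s => b n s * Complex.exp (Complex.I * n * y))
      (g' := fun (n : ℤ) s => (-((κ * n ^ 2 + K : ℝ) : ℂ) * b n s - Complex.I * v n s) *
        Complex.exp (Complex.I * n * y))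
      ((v.summable_norm.add (b.summable_norm.mul_left K)).add v.summable_norm)
      isOpen_Ioi isPreconnected_Ioi
      (fun n s hs => (dtb n s hs).mul_const _) ?_ ht (summable_eval b t y) ht
    · refine h.congr_deriv ?_
      have hvF : ∑' n : ℤ, v n t * Complex.exp (Complex.I * n * y) = u y * F t y := by
        rw [hv]; exact evalCLM_mul a ha t y _ (hu y) b
      have s1 : Summable fun n : ℤ =>
          b n t * (Complex.I * n * (Complex.I * n * Complex.exp (Complex.I * n * y))) :=
        Summable.of_norm_bounded hsv fun n => bound2 n t y
      have hs := (((s1.hasSum.mul_left (κ : ℂ)).sub ((summable_eval b t y).hasSum.mul_left (K : ℂ))).sub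
        ((summable_eval v t y).hasSum.mul_left Complex.I)).tsum_eq
      rw [hvF] at hs
      rw [← hs]
      congr 1
      ext n
      push_cast
      linear_combination (-(κ : ℂ) * n ^ 2 * b n t * Complex.exp (Complex.I * n * y)) * Complex.I_sq
    · intro n s _
      rw [norm_mul, norm_cexp_int, mul_one]
      refine (norm_sub_le _ _).trans ?_
      rw [norm_mul, norm_mul, norm_neg, Complex.norm_real, Complex.norm_I, one_mul,
        Real.norm_eq_abs, abs_of_pos (hμ n)]
      have h1 := (b n).norm_coe_le_norm s
      have h2 := (v n).norm_coe_le_norm s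
      have h3 := mul_le_mul_of_nonneg_left (hb2 n s) hκ.le
      rw [← mul_assoc κ κ⁻¹, mul_inv_cancel₀ hκ.ne', one_mul] at h3
      have h4 := mul_le_mul_of_nonneg_left h1 hK.le
      linarith
  -- `F` is `e^{-K t}` times the sought solution.
  refine ⟨fun t y => (Real.exp (K * t) : ℂ) * F t y, fun t y => (Real.exp (K * t) : ℂ) * Fy t y,
    fun t y => (Real.exp (K * t) : ℂ) * Fyy t y, by fun_prop, by fun_prop, by fun_prop,
    ?_, ?_, ?_, fun t y => (dF t y).const_mul _, fun t y => (dFy t y).const_mul _, ?_⟩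
  · intro t y
    simp only [hF, cexp_int_periodic]
  · intro t y
    simp only [hFy, cexp_int_periodic]
  · intro y
    simp only [hF, hb, duhamel, max_self, intervalIntegral.integral_same]
    rw [tsum_eq_single 0 (fun n hn => by simp [hn])]
    simp
  · intro t ht y
    have h1 : HasDerivAt (fun x : ℝ => Real.exp (K * x)) (Real.exp (K * t) * K) t := by
      simpa using ((hasDerivAt_id t).const_mul K).exp
    refine (h1.ofReal_comp.mul (dtF t ht y)).congr_deriv ?_
    push_cast
    ring

end Existence

/-! ### Lower bound on the energy of a mode -/

/-- Differentiation under the integral over a period, for jointly continuous derivative. -/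
lemma hasDerivAt_integral_period {E : Type*} [NormedAddCommGroup E] [NormedSpace ℝ E]
    [CompleteSpace E]
    (G G' : ℝ → ℝ → E) (hG : Continuous fun p : ℝ × ℝ => G p.1 p.2)
    (hG' : Continuous fun p : ℝ × ℝ => G' p.1 p.2) (U : Set ℝ) (hU : IsOpen U)
    (hd : ∀ t ∈ U, ∀ y, HasDerivAt (fun s => G s y) (G' t y) t) (t : ℝ) (ht : t ∈ U) :
    HasDerivAt (fun s => ∫ y in (0:ℝ)..(2 * π), G s y) (∫ y in (0:ℝ)..(2 * π), G' t y) t := by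
  have hsec : ∀ s, Continuous (G s) := fun s => hG.comp (by fun_prop : Continuous fun y => (s, y))
  have hsec' : ∀ s, Continuous (G' s) := fun s => hG'.comp (by fun_prop : Continuous fun y => (s, y))
  obtain ⟨B, hB⟩ := ((isCompact_closedBall t 1).prod
    (isCompact_Icc (a := (0:ℝ)) (b := 2 * π))).exists_bound_of_continuousOn hG'.continuousOn
  have hnhds : U ∩ Metric.closedBall t 1 ∈ nhds t :=
    inter_mem (hU.mem_nhds ht) (Metric.closedBall_mem_nhds t one_pos)
  refine (intervalIntegral.hasDerivAt_integral_of_dominated_loc_of_deriv_le (bound := fun _ => B)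
    hnhds (Eventually.of_forall fun s => (hsec s).aestronglyMeasurable)
    ((hsec t).intervalIntegrable _ _) (hsec' t).aestronglyMeasurable ?_ ?_ ?_).2
  · refine Eventually.of_forall fun y hy s hs => hB (s, y) ⟨hs.2, ?_⟩
    rw [uIoc_of_le (by positivity)] at hy
    exact ⟨hy.1.le, hy.2⟩
  · exact intervalIntegrable_const
  · exact Eventually.of_forall fun y _ s hs => hd s hs.1 y

/-- Integration by parts over a period against a merely Lipschitz factor `φ`. By periodicity
`∫ g(y + h) φ(y) dy = ∫ g(y) φ(y - h) dy` as functions of `h`; the left side has derivative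
`∫ g' φ` at `h = 0`, and the right side is Lipschitz in `h` with constant `L ∫ |g|`. -/
lemma integral_deriv_mul_lipschitz (g g' φ : ℝ → ℂ) (L : ℝ) (hL : 0 ≤ L)
    (hg : ∀ y, HasDerivAt g (g' y) y) (hg' : Continuous g')
    (hgp : ∀ y, g (y + 2 * π) = g y) (hφp : ∀ y, φ (y + 2 * π) = φ y)
    (hφ : ∀ y y', ‖φ y - φ y'‖ ≤ L * |y - y'|) :
    ‖∫ y in (0:ℝ)..(2 * π), g' y * φ y‖ ≤ L * ∫ y in (0:ℝ)..(2 * π), ‖g y‖ := by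
  have hgc : Continuous g := continuous_iff_continuousAt.mpr fun y => (hg y).continuousAt
  have hφc : Continuous φ := by
    have : LipschitzWith L.toNNReal φ := by
      apply LipschitzWith.of_dist_le_mul
      intro x y
      rw [dist_eq_norm, Real.dist_eq, Real.coe_toNNReal _ hL]
      exact hφ x y
    exact this.continuous
  have hI : 0 ≤ ∫ y in (0:ℝ)..(2 * π), ‖g y‖ :=
    intervalIntegral.integral_nonneg (by positivity) fun _ _ => norm_nonneg _
  have hder : HasDerivAt (fun h => ∫ y in (0:ℝ)..(2 * π), g (y + h) * φ y)
      (∫ y in (0:ℝ)..(2 * π), g' (y + 0) * φ y) 0 :=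
    hasDerivAt_integral_period (fun h y => g (y + h) * φ y) (fun h y => g' (y + h) * φ y)
      (by fun_prop) (by fun_prop) univ isOpen_univ
      (fun t _ y => ((hg (y + t)).comp_const_add y t).mul_const _) 0 (mem_univ _)
  -- moving the translation onto `φ` makes the integral Lipschitz in the translation parameter
  have hshift : ∀ h, ∫ y in (0:ℝ)..(2 * π), g (y + h) * φ y
      = ∫ y in (0:ℝ)..(2 * π), g y * φ (y - h) := by
    intro h
    have h1 := intervalIntegral.integral_comp_add_right (a := 0) (b := 2 * π)
      (fun y => g y * φ (y - h)) h
    have hp : Function.Periodic (fun y => g y * φ (y - h)) (2 * π) := fun y => by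
      simp only [hgp]
      rw [show y + 2 * π - h = y - h + 2 * π by ring, hφp]
    have h2 := hp.intervalIntegral_add_eq h 0
    simp only [add_sub_cancel_right] at h1
    rw [h1, zero_add, add_comm (2 * π) h, h2, zero_add]
  have hlip : LipschitzWith (L * ∫ y in (0:ℝ)..(2 * π), ‖g y‖).toNNReal
      (fun h => ∫ y in (0:ℝ)..(2 * π), g (y + h) * φ y) := by
    apply LipschitzWith.of_dist_le_mul
    intro h h'
    rw [hshift, hshift, dist_eq_norm, Real.dist_eq, Real.coe_toNNReal _ (mul_nonneg hL hI),
      ← intervalIntegral.integral_sub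
        (Continuous.intervalIntegrable (by fun_prop) _ _)
        (Continuous.intervalIntegrable (by fun_prop) _ _)]
    have hle : ‖∫ y in (0:ℝ)..(2 * π), (g y * φ (y - h) - g y * φ (y - h'))‖
        ≤ ∫ y in (0:ℝ)..(2 * π), L * |h - h'| * ‖g y‖ := by
      apply intervalIntegral.norm_integral_le_of_norm_le (by positivity) _
        (Continuous.intervalIntegrable (by fun_prop) _ _)
      filter_upwards with y _
      rw [← mul_sub, norm_mul, mul_comm]
      gcongr
      refine (hφ _ _).trans (le_of_eq ?_)
      rw [show y - h - (y - h') = -(h - h') by ring, abs_neg]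
    refine hle.trans (le_of_eq ?_)
    rw [intervalIntegral.integral_const_mul]
    ring
  have := hder.le_of_lipschitz hlip
  rw [Real.coe_toNNReal _ (mul_nonneg hL hI)] at this
  simpa using this

lemma norm_cexp_sub_le (a b : ℝ) :
    ‖Complex.exp (Complex.I * a) - Complex.exp (Complex.I * b)‖ ≤ |a - b| := by
  have h : Complex.exp (Complex.I * a) - Complex.exp (Complex.I * b)
      = Complex.exp (Complex.I * b) * (Complex.exp (Complex.I * ((a - b : ℝ) : ℂ)) - 1) := by
    rw [mul_sub, ← Complex.exp_add, mul_one]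
    congr 2
    push_cast; ring
  rw [h, norm_mul, mul_comm Complex.I (b : ℂ), Complex.norm_exp_ofReal_mul_I, one_mul]
  exact Real.norm_exp_I_mul_ofReal_sub_one_le

/-- The energy `E = ∫ |f|²` stays bounded below up to times `t` with `κ c² t³ ≤ 1`. Here `f` is compared
with the inviscid solution `e^{-i u t}`: the overlap `P = ∫ f e^{i u t}` satisfies
`|P'| ≤ κ c t ∫ |∂ᵧf| ≤ κ (D / 2 + π c² t²)` with `D = ∫ |∂ᵧf|²`, while `E' = -2 κ D`. Hence
`Re P - E / 4 + κ π c² t³ / 3` is nondecreasing, and `Re P ≤ E + π / 2` turns this into a bound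
on `E`. -/
lemma energy_lower_bound (κ : ℝ) (hκ : 0 < κ) (u : ℝ → ℝ) (hu : Continuous u)
    (hu_per : ∀ y, u (y + 2 * π) = u y) (c : ℝ) (hc : 0 < c)
    (hu_lip : ∀ y y' : ℝ, |u y - u y'| ≤ c * |y - y'|) (f fy fyy : ℝ → ℝ → ℂ)
    (cf : Continuous (fun p : ℝ × ℝ => f p.1 p.2)) (cfy : Continuous (fun p : ℝ × ℝ => fy p.1 p.2))
    (cfyy : Continuous (fun p : ℝ × ℝ => fyy p.1 p.2))
    (pf : ∀ t y, f t (y + 2 * π) = f t y) (pfy : ∀ t y, fy t (y + 2 * π) = fy t y)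
    (f0 : ∀ y, f 0 y = 1)
    (df : ∀ t y, HasDerivAt (f t) (fy t y) y) (dfy : ∀ t y, HasDerivAt (fy t) (fyy t y) y)
    (dt : ∀ t, 0 < t → ∀ y, HasDerivAt (fun s => f s y)
        (κ * fyy t y - Complex.I * u y * f t y) t)
    (t : ℝ) (ht : 0 ≤ t) (hsmall : κ * c ^ 2 * t ^ 3 ≤ 1) :
    8 / 9 * π ≤ ∫ y in (0:ℝ)..(2 * π), ‖f t y‖ ^ 2 := by
  have hπ := Real.pi_pos
  have sf : ∀ s, Continuous (f s) := fun s => cf.comp (by fun_prop : Continuous fun y => (s, y))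
  have sfy : ∀ s, Continuous (fy s) := fun s => cfy.comp (by fun_prop : Continuous fun y => (s, y))
  have sfyy : ∀ s, Continuous (fyy s) :=
    fun s => cfyy.comp (by fun_prop : Continuous fun y => (s, y))
  set E : ℝ → ℝ := fun s => ∫ y in (0:ℝ)..(2 * π), ‖f s y‖ ^ 2 with hE
  set D : ℝ → ℝ := fun s => ∫ y in (0:ℝ)..(2 * π), ‖fy s y‖ ^ 2 with hD
  set P : ℝ → ℂ := fun s =>
    ∫ y in (0:ℝ)..(2 * π), f s y * Complex.exp (Complex.I * (u y * s : ℝ)) with hP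
  have cE : Continuous E :=
    intervalIntegral.continuous_parametric_intervalIntegral_of_continuous'
      (f := fun s y => ‖f s y‖ ^ 2)
      (show Continuous fun p : ℝ × ℝ => ‖f p.1 p.2‖ ^ 2 from cf.norm.pow 2) _ _
  have cP : Continuous P :=
    intervalIntegral.continuous_parametric_intervalIntegral_of_continuous'
      (f := fun s y => f s y * Complex.exp (Complex.I * (u y * s : ℝ)))
      (by
        have : Continuous fun p : ℝ × ℝ => Complex.exp (Complex.I * (u p.2 * p.1 : ℝ)) := by fun_prop
        exact cf.mul this) _ _
  have dE : ∀ s, 0 < s → HasDerivAt E (-(2 * κ) * D s) s := by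
    intro s hs
    have h1 := hasDerivAt_integral_period (fun s y => ‖f s y‖ ^ 2)
      (fun s y => 2 * inner ℝ (f s y) (κ * fyy s y - Complex.I * u y * f s y))
      (cf.norm.pow 2) (by fun_prop) (Ioi 0) isOpen_Ioi
      (fun s hs y => (dt s hs y).norm_sq) s hs
    refine h1.congr_deriv ?_
    have hinner : ∀ y, 2 * inner ℝ (f s y) (κ * fyy s y - Complex.I * u y * f s y)
        = 2 * κ * (inner ℝ (f s y) (fyy s y) + inner ℝ (fy s y) (fy s y))
          - 2 * κ * ‖fy s y‖ ^ 2 := by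
      intro y
      rw [real_inner_self_eq_norm_sq]
      simp only [Complex.inner, Complex.mul_re, Complex.sub_re, Complex.sub_im, Complex.mul_im,
        Complex.conj_re, Complex.conj_im, Complex.ofReal_re, Complex.ofReal_im, Complex.I_re,
        Complex.I_im]
      ring
    have hibp : ∫ y in (0:ℝ)..(2 * π),
        (inner ℝ (f s y) (fyy s y) + inner ℝ (fy s y) (fy s y)) = 0 := by
      have := intervalIntegral.integral_eq_sub_of_hasDerivAt (a := 0) (b := 2 * π)
        (f := fun y => inner ℝ (f s y) (fy s y))
        (f' := fun y => inner ℝ (f s y) (fyy s y) + inner ℝ (fy s y) (fy s y))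
        (fun y _ => (df s y).inner ℝ (dfy s y))
        (Continuous.intervalIntegrable (by have := sf s; have := sfy s; have := sfyy s; fun_prop) _ _)
      rw [this]
      have e1 := pf s 0
      have e2 := pfy s 0
      rw [zero_add] at e1 e2
      rw [e1, e2, sub_self]
    simp_rw [hinner]
    rw [intervalIntegral.integral_sub, intervalIntegral.integral_const_mul,
      intervalIntegral.integral_const_mul, hibp]
    · ring
    · exact Continuous.intervalIntegrable
        (by have := sf s; have := sfy s; have := sfyy s; fun_prop) _ _
    · exact Continuous.intervalIntegrable (by have := sfy s; fun_prop) _ _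
  have dP : ∀ s, 0 < s → HasDerivAt P
      (κ * ∫ y in (0:ℝ)..(2 * π), fyy s y * Complex.exp (Complex.I * (u y * s : ℝ))) s := by
    intro s hs
    have hexp : ∀ s y, HasDerivAt (fun s : ℝ => Complex.exp (Complex.I * (u y * s : ℝ)))
        (Complex.exp (Complex.I * (u y * s : ℝ)) * (Complex.I * u y)) s := by
      intro s y
      have h1 : HasDerivAt (fun s : ℝ => u y * s) (u y) s := by
        simpa using (hasDerivAt_id s).const_mul (u y)
      exact (h1.ofReal_comp.const_mul Complex.I).cexp
    have h1 := hasDerivAt_integral_period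
      (fun s y => f s y * Complex.exp (Complex.I * (u y * s : ℝ)))
      (fun s y => κ * (fyy s y * Complex.exp (Complex.I * (u y * s : ℝ))))
      (by
        have : Continuous fun p : ℝ × ℝ => Complex.exp (Complex.I * (u p.2 * p.1 : ℝ)) := by fun_prop
        exact cf.mul this)
      (by
        have : Continuous fun p : ℝ × ℝ => Complex.exp (Complex.I * (u p.2 * p.1 : ℝ)) := by fun_prop
        exact continuous_const.mul (cfyy.mul this)) (Ioi 0) isOpen_Ioi
      (fun s hs y => ((dt s hs y).mul (hexp s y)).congr_deriv (by ring)) s hs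
    refine h1.congr_deriv ?_
    rw [intervalIntegral.integral_const_mul]
  have hP' : ∀ s, 0 < s →
      ‖(κ * ∫ y in (0:ℝ)..(2 * π), fyy s y * Complex.exp (Complex.I * (u y * s : ℝ)) : ℂ)‖
        ≤ κ * (D s / 2 + π * c ^ 2 * s ^ 2) := by
    intro s hs
    rw [norm_mul, Complex.norm_real, Real.norm_eq_abs, abs_of_pos hκ]
    gcongr
    refine (integral_deriv_mul_lipschitz (fy s) (fyy s)
      (fun y => Complex.exp (Complex.I * (u y * s : ℝ))) (c * s) (by positivity) (dfy s) (sfyy s)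
      (pfy s) (fun y => by simp only [hu_per]) ?_).trans ?_
    · intro y y'
      refine (norm_cexp_sub_le _ _).trans ?_
      rw [← sub_mul, abs_mul, abs_of_pos hs]
      nlinarith [hu_lip y y']
    · rw [← intervalIntegral.integral_const_mul]
      have hle : ∫ y in (0:ℝ)..(2 * π), c * s * ‖fy s y‖
          ≤ ∫ y in (0:ℝ)..(2 * π), (‖fy s y‖ ^ 2 * (1 / 2) + c ^ 2 * s ^ 2 / 2) := by
        have := sfy s
        apply intervalIntegral.integral_mono_on (by positivity)
          (Continuous.intervalIntegrable (by fun_prop) _ _)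
          (Continuous.intervalIntegrable (by fun_prop) _ _)
        intro y _
        nlinarith [sq_nonneg (‖fy s y‖ - c * s)]
      refine hle.trans (le_of_eq ?_)
      have := sfy s
      rw [intervalIntegral.integral_add
          (Continuous.intervalIntegrable (by fun_prop) _ _)
          (Continuous.intervalIntegrable (by fun_prop) _ _),
        intervalIntegral.integral_mul_const, intervalIntegral.integral_const]
      simp only [smul_eq_mul, hD]
      ring
  have hmono : MonotoneOn (fun s => (P s).re - E s / 4 + κ * π * c ^ 2 * s ^ 3 / 3) (Ici 0) := by
    have hd : ∀ s, 0 < s → HasDerivAt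
        (fun s => (P s).re - E s / 4 + κ * π * c ^ 2 * s ^ 3 / 3)
        ((κ * ∫ y in (0:ℝ)..(2 * π), fyy s y * Complex.exp (Complex.I * (u y * s : ℝ)) : ℂ).re
          - (-(2 * κ) * D s) / 4 + κ * π * c ^ 2 * s ^ 2) s := by
      intro s hs
      have h1 : HasDerivAt (fun s => (P s).re) _ s :=
        (Complex.reCLM.hasFDerivAt.comp_hasDerivAt s (dP s hs))
      have h3 : HasDerivAt (fun s : ℝ => κ * π * c ^ 2 * s ^ 3 / 3) (κ * π * c ^ 2 * s ^ 2) s := by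
        refine (((hasDerivAt_pow 3 s).const_mul (κ * π * c ^ 2)).div_const 3).congr_deriv ?_
        norm_num
        ring
      exact (h1.sub ((dE s hs).div_const 4)).add h3
    apply monotoneOn_of_deriv_nonneg (convex_Ici 0)
    · exact Continuous.continuousOn (by fun_prop)
    · intro s hs
      rw [interior_Ici] at hs
      exact (hd s hs).differentiableAt.differentiableWithinAt
    · intro s hs
      rw [interior_Ici] at hs
      rw [(hd s hs).deriv]
      have h1 := hP' s hs
      have h2 := (abs_le.mp (Complex.abs_re_le_norm
        (κ * ∫ y in (0:ℝ)..(2 * π), fyy s y * Complex.exp (Complex.I * (u y * s : ℝ)) : ℂ))).1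
      linarith
  have h0 := hmono (mem_Ici.mpr le_rfl) (mem_Ici.mpr ht) ht
  have hE0 : E 0 = 2 * π := by simp [hE, f0]
  have hP0 : P 0 = 2 * π := by simp [hP, f0]
  have hPt : (P t).re ≤ E t + π / 2 := by
    refine (Complex.re_le_norm _).trans ?_
    have := sf t
    have hle : ‖P t‖ ≤ ∫ y in (0:ℝ)..(2 * π), (‖f t y‖ ^ 2 + 1 / 4) := by
      apply intervalIntegral.norm_integral_le_of_norm_le (by positivity) _
        (Continuous.intervalIntegrable (by fun_prop) _ _)
      filter_upwards with y _
      rw [norm_mul, mul_comm Complex.I, Complex.norm_exp_ofReal_mul_I, mul_one]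
      nlinarith [sq_nonneg (‖f t y‖ - 1 / 2)]
    refine hle.trans (le_of_eq ?_)
    rw [intervalIntegral.integral_add
          (Continuous.intervalIntegrable (by fun_prop) _ _)
          (Continuous.intervalIntegrable (by fun_prop) _ _), intervalIntegral.integral_const]
    simp only [smul_eq_mul, hE]
    ring
  simp only [hE0, hP0] at h0
  have hre : ((2 : ℂ) * π).re = 2 * π := by simp
  rw [hre] at h0
  have h5 := mul_le_mul_of_nonneg_left hsmall hπ.le
  change 8 / 9 * π ≤ E t
  nlinarith

/-! ### From the mode to the shear equation -/

/-- If `∂ₜf = κ ∂ᵧᵧf - i u f`, then `e^{-δ κ t} Re (e^{i x} f(t, y))` solves the shear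
advection–diffusion equation. -/
lemma isShearSolution_of_mode (δ κ : ℝ) (u : ℝ → ℝ) (hu : Continuous u) (f fy fyy : ℝ → ℝ → ℂ)
    (cf : Continuous (fun p : ℝ × ℝ => f p.1 p.2))
    (cfyy : Continuous (fun p : ℝ × ℝ => fyy p.1 p.2))
    (pf : ∀ t y, f t (y + 2 * π) = f t y)
    (df : ∀ t y, HasDerivAt (f t) (fy t y) y) (dfy : ∀ t y, HasDerivAt (fy t) (fyy t y) y)
    (dt : ∀ t, 0 < t → ∀ y, HasDerivAt (fun s => f s y)
        (κ * fyy t y - Complex.I * u y * f t y) t) :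
    IsShearSolution δ κ u
      (fun t x y => Real.exp (-(δ * κ * t)) * (Real.cos x * (f t y).re - Real.sin x * (f t y).im)) := by
  have dre : ∀ {g : ℝ → ℂ} {g' : ℂ} {s : ℝ}, HasDerivAt g g' s →
      HasDerivAt (fun s => (g s).re) g'.re s := fun h =>
    Complex.reCLM.hasFDerivAt.comp_hasDerivAt _ h
  have dim : ∀ {g : ℝ → ℂ} {g' : ℂ} {s : ℝ}, HasDerivAt g g' s →
      HasDerivAt (fun s => (g s).im) g'.im s := fun h =>
    Complex.imCLM.hasFDerivAt.comp_hasDerivAt _ h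
  have hx : ∀ t x y, HasDerivAt (fun a => Real.exp (-(δ * κ * t)) *
      (Real.cos a * (f t y).re - Real.sin a * (f t y).im))
      (Real.exp (-(δ * κ * t)) * (-Real.sin x * (f t y).re - Real.cos x * (f t y).im)) x :=
    fun t x y => (((Real.hasDerivAt_cos x).mul_const _).sub
      ((Real.hasDerivAt_sin x).mul_const _)).const_mul _
  have hxx : ∀ t x y, HasDerivAt (fun a => Real.exp (-(δ * κ * t)) *
      (-Real.sin a * (f t y).re - Real.cos a * (f t y).im))
      (Real.exp (-(δ * κ * t)) * (-Real.cos x * (f t y).re - -Real.sin x * (f t y).im)) x :=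
    fun t x y => (((Real.hasDerivAt_sin x).neg.mul_const _).sub
      ((Real.hasDerivAt_cos x).mul_const _)).const_mul _
  have hy : ∀ t x y, HasDerivAt (fun b => Real.exp (-(δ * κ * t)) *
      (Real.cos x * (f t b).re - Real.sin x * (f t b).im))
      (Real.exp (-(δ * κ * t)) * (Real.cos x * (fy t y).re - Real.sin x * (fy t y).im)) y :=
    fun t x y => (((dre (df t y)).const_mul _).sub ((dim (df t y)).const_mul _)).const_mul _
  have hyy : ∀ t x y, HasDerivAt (fun b => Real.exp (-(δ * κ * t)) *
      (Real.cos x * (fy t b).re - Real.sin x * (fy t b).im))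
      (Real.exp (-(δ * κ * t)) * (Real.cos x * (fyy t y).re - Real.sin x * (fyy t y).im)) y :=
    fun t x y => (((dre (dfy t y)).const_mul _).sub ((dim (dfy t y)).const_mul _)).const_mul _
  have ht : ∀ t, 0 < t → ∀ x y, HasDerivAt (fun s => Real.exp (-(δ * κ * s)) *
      (Real.cos x * (f s y).re - Real.sin x * (f s y).im))
      (Real.exp (-(δ * κ * t)) * (-(δ * κ)) * (Real.cos x * (f t y).re - Real.sin x * (f t y).im) +
        Real.exp (-(δ * κ * t)) *
          (Real.cos x * (κ * (fyy t y).re + u y * (f t y).im)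
            - Real.sin x * (κ * (fyy t y).im - u y * (f t y).re))) t := by
    intro t ht x y
    have h1 : HasDerivAt (fun s : ℝ => Real.exp (-(δ * κ * s)))
        (Real.exp (-(δ * κ * t)) * (-(δ * κ))) t := by
      have := ((hasDerivAt_id t).const_mul (δ * κ)).neg.exp
      simpa using this
    refine (h1.mul (((dre (dt t ht y)).const_mul (Real.cos x)).sub
      ((dim (dt t ht y)).const_mul (Real.sin x)))).congr_deriv ?_
    simp
  have c3 : Continuous fun p : ℝ × ℝ × ℝ => f p.1 p.2.2 :=
    cf.comp (by fun_prop : Continuous fun p : ℝ × ℝ × ℝ => (p.1, p.2.2))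
  have c3yy : Continuous fun p : ℝ × ℝ × ℝ => fyy p.1 p.2.2 :=
    cfyy.comp (by fun_prop : Continuous fun p : ℝ × ℝ × ℝ => (p.1, p.2.2))
  have c3r := Complex.continuous_re.comp c3
  have c3i := Complex.continuous_im.comp c3
  have c3yyr := Complex.continuous_re.comp c3yy
  have c3yyi := Complex.continuous_im.comp c3yy
  simp only [Function.comp_def] at c3r c3i c3yyr c3yyi
  have ex : ∀ t y, deriv (fun a => Real.exp (-(δ * κ * t)) *
      (Real.cos a * (f t y).re - Real.sin a * (f t y).im)) = _ := fun t y => funext fun x =>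
    (hx t x y).deriv
  have ey : ∀ t x, deriv (fun b => Real.exp (-(δ * κ * t)) *
      (Real.cos x * (f t b).re - Real.sin x * (f t b).im)) = _ := fun t x => funext fun y =>
    (hy t x y).deriv
  refine ⟨?_, ?_, ?_, fun t h x y => (ht t h x y).differentiableAt,
    fun t _ x y => (hx t x y).differentiableAt, ?_, fun t _ x y => (hy t x y).differentiableAt,
    ?_, ?_, ?_, ?_, ?_⟩
  · exact Continuous.continuousOn (by fun_prop)
  · intro t x y
    simp
  · intro t x y
    simp only [pf]
  · intro t _ x y
    simp only [ex]
    exact (hxx t x y).differentiableAt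
  · intro t _ x y
    simp only [ey]
    exact (hyy t x y).differentiableAt
  · refine ContinuousOn.congr ?_ (fun p hp => (ht p.1 hp p.2.1 p.2.2).deriv)
    exact Continuous.continuousOn (by fun_prop)
  · simp only [ex, (hxx _ _ _).deriv]
    exact Continuous.continuousOn (by fun_prop)
  · simp only [ey, (hyy _ _ _).deriv]
    exact Continuous.continuousOn (by fun_prop)
  · intro t h x y
    simp only [ex, ey, (hxx _ _ _).deriv, (hyy _ _ _).deriv, (ht t h x y).deriv]
    ring

/-- The `x`-integral of `(Re (e^{i x} z))²` over a period is `π |z|²`. -/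
lemma l2normSq_mode (δ κ : ℝ) (f : ℝ → ℝ → ℂ) (t : ℝ) (cf : Continuous (f t)) :
    l2normSq (fun t x y =>
        Real.exp (-(δ * κ * t)) * (Real.cos x * (f t y).re - Real.sin x * (f t y).im)) t
      = Real.exp (-(δ * κ * t)) ^ 2 * (π * ∫ y in (0:ℝ)..(2 * π), ‖f t y‖ ^ 2) := by
  have cr : Continuous fun y => (f t y).re := Complex.continuous_re.comp cf
  have ci : Continuous fun y => (f t y).im := Complex.continuous_im.comp cf
  set A := ∫ y in (0:ℝ)..(2 * π), (f t y).re ^ 2 with hA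
  set B := ∫ y in (0:ℝ)..(2 * π), (f t y).re * (f t y).im with hB
  set D := ∫ y in (0:ℝ)..(2 * π), (f t y).im ^ 2 with hD
  have hnorm : ∫ y in (0:ℝ)..(2 * π), ‖f t y‖ ^ 2 = A + D := by
    rw [hA, hD, ← intervalIntegral.integral_add
      (Continuous.intervalIntegrable (by fun_prop) _ _)
      (Continuous.intervalIntegrable (by fun_prop) _ _)]
    refine intervalIntegral.integral_congr fun y _ => ?_
    simp only [Complex.sq_norm, Complex.normSq_apply]
    ring
  have hin : ∀ x : ℝ, (∫ y in (0:ℝ)..(2 * π),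
      (Real.exp (-(δ * κ * t)) * (Real.cos x * (f t y).re - Real.sin x * (f t y).im)) ^ 2)
      = Real.exp (-(δ * κ * t)) ^ 2 *
        (Real.cos x ^ 2 * A - 2 * B * (Real.sin x * Real.cos x) + Real.sin x ^ 2 * D) := by
    intro x
    have : ∀ y, (Real.exp (-(δ * κ * t)) *
        (Real.cos x * (f t y).re - Real.sin x * (f t y).im)) ^ 2
        = Real.exp (-(δ * κ * t)) ^ 2 * (Real.cos x ^ 2 * (f t y).re ^ 2
          - 2 * (Real.sin x * Real.cos x) * ((f t y).re * (f t y).im)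
          + Real.sin x ^ 2 * (f t y).im ^ 2) := fun y => by ring
    simp only [this]
    rw [intervalIntegral.integral_const_mul, intervalIntegral.integral_add
      (Continuous.intervalIntegrable (by fun_prop) _ _)
      (Continuous.intervalIntegrable (by fun_prop) _ _), intervalIntegral.integral_sub
      (Continuous.intervalIntegrable (by fun_prop) _ _)
      (Continuous.intervalIntegrable (by fun_prop) _ _)]
    simp only [intervalIntegral.integral_const_mul]
    ring
  unfold l2normSq
  simp only [hin]
  rw [intervalIntegral.integral_const_mul, intervalIntegral.integral_add
      (Continuous.intervalIntegrable (by fun_prop) _ _)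
      (Continuous.intervalIntegrable (by fun_prop) _ _), intervalIntegral.integral_sub
      (Continuous.intervalIntegrable (by fun_prop) _ _)
      (Continuous.intervalIntegrable (by fun_prop) _ _), hnorm]
  simp only [intervalIntegral.integral_const_mul, intervalIntegral.integral_mul_const]
  rw [integral_cos_sq, integral_sin_sq, integral_sin_mul_cos₁]
  simp
  ring

/-- If a single-mode solution, starting from squared norm `π * (2 * π)`, still has energy
`E ≥ 8 π / 9` at a time with `κ t ≤ 1`, then exponential decay at rate `q` forces `q t` to be
bounded in terms of `C` alone. -/
lemma rate_le_of_mode (δ : ℝ) (hδ : δ = 0 ∨ δ = 1) (κ C q t E : ℝ) (hC : 1 ≤ C) (h1 : κ * t ≤ 1)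
    (hE : 8 / 9 * π ≤ E)
    (h : Real.exp (-(δ * κ * t)) ^ 2 * (π * E) ≤ C * Real.exp (-q * t) * (π * (2 * π))) :
    q * t ≤ Real.log (9 / 4 * C) + 2 := by
  have hπ := Real.pi_pos
  have hδt : δ * κ * t ≤ 1 := by rcases hδ with rfl | rfl <;> linarith
  have h2 : Real.exp (-2) ≤ Real.exp (-(δ * κ * t)) ^ 2 := by
    rw [← Real.exp_nat_mul]
    apply Real.exp_le_exp.2
    push_cast
    linarith
  have h3 : Real.exp (-2) * (π * (8 / 9 * π)) ≤ C * Real.exp (-q * t) * (π * (2 * π)) :=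
    le_trans (by gcongr) h
  have h4 : Real.exp (-2) ≤ 9 / 4 * C * Real.exp (-q * t) := by
    have : 0 < π * π := by positivity
    nlinarith
  have h5 : Real.exp (q * t - 2) ≤ 9 / 4 * C := by
    have : Real.exp (q * t - 2) = Real.exp (-2) * Real.exp (q * t) := by
      rw [← Real.exp_add]; ring_nf
    rw [this]
    calc Real.exp (-2) * Real.exp (q * t) ≤ 9 / 4 * C * Real.exp (-q * t) * Real.exp (q * t) := by
          gcongr
      _ = 9 / 4 * C := by rw [mul_assoc, ← Real.exp_add]; simp
  have := (Real.le_log_iff_exp_le (by positivity)).2 h5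
  linarith

/-- Sharpness of the enhanced diffusion rate `κ^{1/3}` for Lipschitz
shear flows. -/
theorem sharpness_lipschitz_shear (δ : ℝ) (hδ : δ = 0 ∨ δ = 1)
    (u : ℝ → ℝ) (hu_per : ∀ y, u (y + 2 * π) = u y)
    (c_L : ℝ) (hc_L : 0 < c_L) (hu_lip : ∀ y y' : ℝ, |u y - u y'| ≤ c_L * |y - y'|)
    (κ₀ : ℝ) (hκ₀ : κ₀ ∈ Ioo (0:ℝ) 1) (r : ℝ → ℝ) (hr : IsRateFunction κ₀ r)
    (henh : DiffusionEnhancing δ κ₀ u r) :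
    ∃ c : ℝ, 0 < c ∧ ∃ κ₁ ∈ Ioc (0:ℝ) κ₀, ∀ κ ∈ Ioc (0:ℝ) κ₁,
      r κ ≤ c⁻¹ * κ ^ ((1 : ℝ) / 3) := by
  have hu : Continuous u := by
    have : LipschitzWith (Real.toNNReal c_L) u := by
      apply LipschitzWith.of_dist_le_mul
      intro x y
      rw [Real.dist_eq, Real.dist_eq, Real.coe_toNNReal _ hc_L.le]
      exact hu_lip x y
    exact this.continuous
  obtain ⟨a, ha, hau⟩ := lipschitz_fourier_summable u hu_per c_L hu_lip
  obtain ⟨C, hC, hdecay⟩ := henh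
  -- `τ` is chosen so that `τ ≤ 1` and `c_L² τ³ ≤ 1`.
  set τ : ℝ := (1 + c_L ^ 2)⁻¹ with hτ
  have hτ0 : 0 < τ := by positivity
  have hτ1 : τ ≤ 1 := inv_le_one_of_one_le₀ (by nlinarith)
  have hτc : c_L ^ 2 * τ ^ 3 ≤ 1 := by
    have e : (1 + c_L ^ 2) * τ = 1 := mul_inv_cancel₀ (by positivity)
    have h1 : c_L ^ 2 * τ ≤ 1 := by linarith
    have h2 : τ ^ 2 ≤ 1 := pow_le_one₀ hτ0.le hτ1
    calc c_L ^ 2 * τ ^ 3 = (c_L ^ 2 * τ) * τ ^ 2 := by ring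
      _ ≤ 1 * 1 := by gcongr
      _ = 1 := one_mul 1
  set M : ℝ := Real.log (9 / 4 * C) + 2 with hM
  have hM0 : 0 < M := by
    have : 0 ≤ Real.log (9 / 4 * C) := Real.log_nonneg (by linarith)
    linarith
  refine ⟨τ / M, by positivity, κ₀, ⟨hκ₀.1, le_rfl⟩, fun κ hκ => ?_⟩
  set q : ℝ := κ ^ ((1 : ℝ) / 3) with hq
  have hq0 : 0 < q := Real.rpow_pos_of_pos hκ.1 _
  have hq3 : q ^ 3 = κ := by
    rw [hq, ← Real.rpow_natCast, ← Real.rpow_mul hκ.1.le]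
    norm_num
  have hq1 : q ≤ 1 := Real.rpow_le_one hκ.1.le (hκ.2.trans hκ₀.2.le) (by norm_num)
  -- The solution is tested at the time `t = τ κ^{-1/3}`.
  set t : ℝ := τ / q with ht
  have ht0 : 0 ≤ t := by positivity
  have hκt : κ * t ≤ 1 := by
    have : κ * t = q ^ 2 * τ := by rw [ht, ← hq3]; field_simp
    rw [this]
    have h2 : q ^ 2 ≤ 1 := pow_le_one₀ hq0.le hq1
    calc q ^ 2 * τ ≤ 1 * 1 := by gcongr
      _ = 1 := one_mul 1
  have hsmall : κ * c_L ^ 2 * t ^ 3 ≤ 1 := by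
    have : κ * c_L ^ 2 * t ^ 3 = c_L ^ 2 * τ ^ 3 := by rw [ht, ← hq3]; field_simp
    rw [this]
    exact hτc
  obtain ⟨f, fy, fyy, cf, cfy, cfyy, pf, pfy, f0, df, dfy, dt⟩ :=
    exists_classical κ hκ.1 u a ha hau
  have sf : ∀ s, Continuous (f s) := fun s => cf.comp (by fun_prop : Continuous fun y => (s, y))
  have hE := energy_lower_bound κ hκ.1 u hu hu_per c_L hc_L hu_lip f fy fyy cf cfy cfyy pf pfy f0
    df dfy dt t ht0 hsmall
  have hdec := hdecay κ hκ _ (isShearSolution_of_mode δ κ u hu f fy fyy cf cfyy pf df dfy dt)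
    (fun y => by simp [f0]) t ht0
  rw [l2normSq_mode δ κ f t (sf t), l2normSq_mode δ κ f 0 (sf 0)] at hdec
  have hE0 : ∫ y in (0:ℝ)..(2 * π), ‖f 0 y‖ ^ 2 = 2 * π := by simp [f0]
  rw [hE0, mul_zero, neg_zero, Real.exp_zero, one_pow, one_mul] at hdec
  have hrt := rate_le_of_mode δ hδ κ C (r κ) t _ hC hκt hE hdec
  rw [inv_div]
  calc r κ = (r κ * t) * q / τ := by rw [ht]; field_simp
    _ ≤ M * q / τ := by gcongr
    _ = M / τ * q := by ring

end
end

section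
/- Let q ≥ 1. If the circular flow u(x,y) = (x²+y²)^{q/2}(−y, x) is diffusion enhancing at some rate r : (0,κ₀] → (0,1), then liminf_{κ→0⁺} κ^{q/(q+2)}/r(κ) > 0; that is, there exist c > 0 and κ₁ ∈ (0,κ₀] such that r(κ) ≤ c⁻¹ κ^{q/(q+2)} for all κ ∈ (0,κ₁]. -/
/-!
The equation is invariant under a scaling which turns diffusivity `κ` into diffusivity `1`: lengths
are multiplied by `A = κ^{-1/(q+2)}` and times by `τ = κ^{q/(q+2)}`. So a single nontrivial solution
`ρ` at `κ = 1` with zero mean on circles gives, for every `κ`, a solution whose squared `L²` norms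
at times `0` and `1/τ` have the fixed ratio `J0 : J1`. Diffusion enhancement at rate `r` with
constant `C` then forces `J1 ≤ C e^{-r(κ)/τ} J0`, that is `r(κ) ≤ τ log (C J0 / J1)`.

For `ρ` one takes `Re (e^{-μt} U)` with an eigenfunction `U = (x + iy) g(r)`, where
`g'' + (3/r) g' = (i r^q - μ) g`. With `p = q + 2` and `z = log r` the equation becomes
`T'' + 2T' = (e^{pz} - l e^{2z}) T` on the line `im z = π/(2p)`, on which `e^{pz} = i r^p`; here
`μ = l e^{iπ/p}`. It has an entire solution, the double series `T = ∑ a_{mn} e^{(2m+pn)z}`, which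
gives a profile regular at `r = 0` for every `l`. The parameter `l` is chosen so that `T` decays
as `r → ∞`:

* on the real axis, where the problem is self-adjoint, shooting in `l` yields a positive
  nonincreasing solution (`exists_ground`), which decays like `exp (-e^{px/2}/p)` by a Riccati
  barrier (`real_riccati`, `real_decay`);
* an energy estimate along vertical segments (`arc_energy`) bounds the growth between the real axis
  and the line `im z = π/(2p)` by a smaller exponential, so decay persists there (`arc_decay`).

The profile (`exists_profile`) gives the planar eigenfunction (`exists_eigen`), and rescaling it
gives solutions (`sol_isSolution`) with zero mean on circles (`sol_mean_zero`) and positive mass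
(`mass_pos`).
-/

open MeasureTheory Real Set Filter

noncomputable section

/-- A function `f : ℝ² → ℝ` decays rapidly at infinity. -/
def HasRapidDecay (f : ℝ → ℝ → ℝ) : Prop :=
  ∀ k : ℕ, ∃ C : ℝ, ∀ x y : ℝ, (1 + x ^ 2 + y ^ 2) ^ k * |f x y| ≤ C

/-- `ρ : ℝ → ℝ → ℝ → ℝ`, as `ρ t x y`, is a solution of the circular advection–diffusion
equation `∂ₜρ + (x²+y²)^{q/2}(-y ∂ₓρ + x ∂ᵧρ) = κ Δρ` on `[0,∞) × ℝ²`, continuous up to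
`t = 0`, C¹ in time and C² in space for `t > 0`, with rapid decay of `ρ(t)` and its first
two spatial derivatives. -/
structure IsCircularSolution (q κ : ℝ) (ρ : ℝ → ℝ → ℝ → ℝ) : Prop where
  cont : ContinuousOn (fun p : ℝ × ℝ × ℝ => ρ p.1 p.2.1 p.2.2) {p : ℝ × ℝ × ℝ | 0 ≤ p.1}
  diff_t : ∀ t, 0 < t → ∀ x y, DifferentiableAt ℝ (fun s => ρ s x y) t
  diff_x : ∀ t, 0 < t → ∀ x y, DifferentiableAt ℝ (fun a => ρ t a y) x
  diff_xx : ∀ t, 0 < t → ∀ x y, DifferentiableAt ℝ (fun a => deriv (fun b => ρ t b y) a) x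
  diff_y : ∀ t, 0 < t → ∀ x y, DifferentiableAt ℝ (fun b => ρ t x b) y
  diff_yy : ∀ t, 0 < t → ∀ x y, DifferentiableAt ℝ (fun b => deriv (fun c => ρ t x c) b) y
  cont_dt : ContinuousOn (fun p : ℝ × ℝ × ℝ => deriv (fun s => ρ s p.2.1 p.2.2) p.1)
      {p : ℝ × ℝ × ℝ | 0 < p.1}
  cont_dxx : ContinuousOn
      (fun p : ℝ × ℝ × ℝ => deriv (fun a => deriv (fun b => ρ p.1 b p.2.2) a) p.2.1)
      {p : ℝ × ℝ × ℝ | 0 < p.1}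
  cont_dyy : ContinuousOn
      (fun p : ℝ × ℝ × ℝ => deriv (fun b => deriv (fun c => ρ p.1 p.2.1 c) b) p.2.2)
      {p : ℝ × ℝ × ℝ | 0 < p.1}
  decay : ∀ t, 0 ≤ t → HasRapidDecay (fun x y => ρ t x y)
  decay_dx : ∀ t, 0 < t → HasRapidDecay (fun x y => deriv (fun a => ρ t a y) x)
  decay_dy : ∀ t, 0 < t → HasRapidDecay (fun x y => deriv (fun b => ρ t x b) y)
  decay_dxx : ∀ t, 0 < t →
    HasRapidDecay (fun x y => deriv (fun a => deriv (fun b => ρ t b y) a) x)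
  decay_dyy : ∀ t, 0 < t →
    HasRapidDecay (fun x y => deriv (fun b => deriv (fun c => ρ t x c) b) y)
  pde : ∀ t, 0 < t → ∀ x y,
    deriv (fun s => ρ s x y) t + (x ^ 2 + y ^ 2) ^ (q / 2) *
        (-y * deriv (fun a => ρ t a y) x + x * deriv (fun b => ρ t x b) y) =
      κ * (deriv (fun a => deriv (fun b => ρ t b y) a) x +
        deriv (fun b => deriv (fun c => ρ t x c) b) y)

/-- The squared `L²(ℝ²)` norm of `ρ(t)`. -/
def l2planeSq (ρ : ℝ → ℝ → ℝ → ℝ) (t : ℝ) : ℝ :=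
  ∫ p : ℝ × ℝ, (ρ t p.1 p.2) ^ 2

/-- The circular flow `(x²+y²)^{q/2}(-y,x)` is diffusion enhancing at rate `r` on `(0,κ₀]`. -/
def CircularDiffusionEnhancing (q κ₀ : ℝ) (r : ℝ → ℝ) : Prop :=
  ∃ C : ℝ, 1 ≤ C ∧ ∀ κ ∈ Ioc (0:ℝ) κ₀, ∀ ρ : ℝ → ℝ → ℝ → ℝ,
    IsCircularSolution q κ ρ →
    (∀ s : ℝ, 0 < s → (∫ θ in (0:ℝ)..(2 * π), ρ 0 (s * Real.cos θ) (s * Real.sin θ)) = 0) →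
    ∀ t : ℝ, 0 ≤ t → l2planeSq ρ t ≤ C * Real.exp (-(r κ) * t) * l2planeSq ρ 0

/-! ### The double exponential series -/

namespace CircSharp

/-- The exponent `2m + pn` attached to the index `i = (m, n)`. -/
def expo (p : ℝ) (i : ℕ × ℕ) : ℝ := 2 * i.1 + p * i.2

/-- The coefficients `a_{mn}` of the solution `∑ a_{mn} e^{(2m+pn)z}`, normalised by `a_{00} = 1`, of
`T'' + 2T' = (e^{pz} - l e^{2z}) T`. Comparing coefficients gives
`(2m+pn)(2m+pn+2) a_{mn} = a_{m,n-1} - l a_{m-1,n}`. -/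
def coef (p l : ℝ) : ℕ → ℕ → ℝ
  | 0, 0 => 1
  | m + 1, 0 => (-l * coef p l m 0) / (expo p (m + 1, 0) * (expo p (m + 1, 0) + 2))
  | 0, n + 1 => coef p l 0 n / (expo p (0, n + 1) * (expo p (0, n + 1) + 2))
  | m + 1, n + 1 => (coef p l (m + 1) n - l * coef p l m (n + 1)) /
      (expo p (m + 1, n + 1) * (expo p (m + 1, n + 1) + 2))
  termination_by m n => m + n

lemma expo_nonneg {p : ℝ} (hp : 3 ≤ p) (i : ℕ × ℕ) : 0 ≤ expo p i := by
  unfold expo; positivity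

lemma expo_ge {p : ℝ} (hp : 3 ≤ p) (m n : ℕ) : 2 * ((m : ℝ) + n) ≤ expo p (m, n) := by
  unfold expo
  have : (0 : ℝ) ≤ n := n.cast_nonneg
  simp only
  nlinarith

/-- Factorial decay of the coefficients, which makes the series entire. The bound `M` on `|l|` is kept
separate from `l` so that estimates are locally uniform in `l`. -/
lemma coef_bound {p : ℝ} (hp : 3 ≤ p) {l M : ℝ} (hl : |l| ≤ M) (m n : ℕ) :
    |coef p l m n| ≤ M ^ m / (m.factorial * n.factorial) := by
  have hM : 0 ≤ M := (abs_nonneg l).trans hl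
  have key : ∀ k m n : ℕ, m + n = k → |coef p l m n| ≤ M ^ m / (m.factorial * n.factorial) := by
    intro k
    induction k with
    | zero =>
      intro m n h
      obtain ⟨rfl, rfl⟩ : m = 0 ∧ n = 0 := by omega
      simp [coef]
    | succ k ih =>
      intro m n h
      have hden : ∀ m n : ℕ, m + n = k + 1 → (m : ℝ) + n ≤ expo p (m, n) * (expo p (m, n) + 2) ∧
          (0:ℝ) < m + n := by
        intro m n h
        have h1 := expo_ge hp m n
        have h2 : (1 : ℝ) ≤ m + n := by exact_mod_cast (by omega : 1 ≤ m + n)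
        constructor <;> nlinarith
      match m, n, h with
      | 0, 0, h => omega
      | m + 1, 0, h =>
        have h1 := ih m 0 (by omega)
        obtain ⟨h2, h3⟩ := hden (m + 1) 0 h
        rw [coef, abs_div, abs_mul, abs_neg, abs_of_pos (h3.trans_le h2)]
        rw [div_le_iff₀ (h3.trans_le h2)]
        calc |l| * |coef p l m 0| ≤ M * (M ^ m / (m.factorial * (0:ℕ).factorial)) := by gcongr
          _ = M ^ (m+1) / ((m+1).factorial * (0:ℕ).factorial) * (((m + 1 : ℕ) : ℝ) + ((0:ℕ):ℝ)) := by
            rw [Nat.factorial_succ]; push_cast; field_simp; ring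
          _ ≤ _ := by gcongr
      | 0, n + 1, h =>
        have h1 := ih 0 n (by omega)
        obtain ⟨h2, h3⟩ := hden 0 (n + 1) h
        rw [coef, abs_div, abs_of_pos (h3.trans_le h2)]
        rw [div_le_iff₀ (h3.trans_le h2)]
        calc |coef p l 0 n| ≤ (M ^ 0 / ((0:ℕ).factorial * n.factorial)) := by gcongr
          _ = M ^ 0 / ((0:ℕ).factorial * (n+1).factorial) * (((0 : ℕ) : ℝ) + ((n+1:ℕ):ℝ)) := by
            rw [Nat.factorial_succ]; push_cast; field_simp; ring
          _ ≤ _ := by gcongr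
      | m + 1, n + 1, h =>
        have h1 := ih m (n + 1) (by omega)
        have h1' := ih (m + 1) n (by omega)
        obtain ⟨h2, h3⟩ := hden (m + 1) (n + 1) h
        rw [coef, abs_div, abs_of_pos (h3.trans_le h2)]
        rw [div_le_iff₀ (h3.trans_le h2)]
        calc |coef p l (m + 1) n - l * coef p l m (n + 1)|
            ≤ |coef p l (m + 1) n| + |l| * |coef p l m (n + 1)| := by
              rw [← abs_mul]; exact abs_sub _ _
          _ ≤ M ^ (m+1) / ((m+1).factorial * n.factorial)
              + M * (M ^ m / (m.factorial * (n+1).factorial)) := by gcongr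
          _ = M ^ (m+1) / ((m+1).factorial * (n+1).factorial) *
              (((m + 1 : ℕ) : ℝ) + ((n + 1:ℕ):ℝ)) := by
            rw [Nat.factorial_succ, Nat.factorial_succ]; push_cast; field_simp; ring
          _ ≤ _ := by gcongr
  exact key _ m n rfl

lemma coef_cont (p : ℝ) (m n : ℕ) : Continuous (fun l => coef p l m n) := by
  have key : ∀ k m n : ℕ, m + n = k → Continuous (fun l => coef p l m n) := by
    intro k
    induction k with
    | zero =>
      intro m n h
      obtain ⟨rfl, rfl⟩ : m = 0 ∧ n = 0 := by omega
      simp [coef]; exact continuous_const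
    | succ k ih =>
      intro m n h
      match m, n, h with
      | 0, 0, h => omega
      | m + 1, 0, h =>
        have h1 := ih m 0 (by omega)
        simp only [coef]; fun_prop
      | 0, n + 1, h =>
        have h1 := ih 0 n (by omega)
        simp only [coef]; fun_prop
      | m + 1, n + 1, h =>
        have h1 := ih m (n + 1) (by omega)
        have h1' := ih (m + 1) n (by omega)
        simp only [coef]; fun_prop
  exact key _ m n rfl

/-- The `j`-th derivative of the summand with index `i`. -/
def serTerm (p l : ℝ) (j : ℕ) (i : ℕ × ℕ) (z : ℂ) : ℂ :=
  (coef p l i.1 i.2 : ℂ) * (expo p i : ℂ) ^ j * Complex.exp (expo p i * z)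

/-- The `j`-th derivative of the entire solution `∑ a_{mn} e^{(2m+pn)z}`, summed termwise. -/
def T (p l : ℝ) (j : ℕ) (z : ℂ) : ℂ := ∑' i, serTerm p l j i z

/-- Summable majorant: `j! * bnd p M X i` bounds the summand with index `i` of `T p l j`
whenever `|l| ≤ M` and `re z ≤ X`. -/
def bnd (p M X : ℝ) (i : ℕ × ℕ) : ℝ :=
  M ^ i.1 / (i.1.factorial * i.2.factorial) * Real.exp (expo p i * (X + 1))

lemma bnd_nonneg (p : ℝ) {M : ℝ} (hM : 0 ≤ M) (X : ℝ) (i : ℕ × ℕ) : 0 ≤ bnd p M X i := by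
  unfold bnd; positivity

lemma bnd_summable (p : ℝ) {M : ℝ} (hM : 0 ≤ M) (X : ℝ) : Summable (bnd p M X) := by
  have h1 := Real.summable_pow_div_factorial (M * Real.exp (2 * (X + 1)))
  have h2 := Real.summable_pow_div_factorial (Real.exp (p * (X + 1)))
  have := h1.mul_of_nonneg h2 (fun n => by positivity) (fun n => by positivity)
  refine this.congr ?_
  rintro ⟨m, n⟩
  simp only [bnd, expo]
  rw [mul_pow, ← Real.exp_nat_mul, ← Real.exp_nat_mul, add_mul, Real.exp_add]
  have e1 : (m:ℝ) * (2 * (X + 1)) = 2 * m * (X+1) := by ring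
  have e2 : (n:ℝ) * (p * (X + 1)) = p * n * (X+1) := by ring
  rw [e1, e2]
  field_simp

/-- The power `(2m+pn)^j` is absorbed by `e^{2m+pn}`; this is the reason for `X + 1` in `bnd`. -/
lemma coef_pow_le {p : ℝ} (hp : 3 ≤ p) {l M : ℝ} (hl : |l| ≤ M) (j : ℕ) (i : ℕ × ℕ) :
    |coef p l i.1 i.2| * expo p i ^ j ≤ j.factorial * bnd p M 0 i := by
  have h1 := coef_bound hp hl i.1 i.2
  have h2 := expo_nonneg hp i
  have h3 := Real.pow_div_factorial_le_exp _ h2 j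
  rw [div_le_iff₀ (by positivity)] at h3
  have hM : 0 ≤ M := (abs_nonneg l).trans hl
  calc _ ≤ M ^ i.1 / (i.1.factorial * i.2.factorial) * (Real.exp (expo p i) * j.factorial) := by
        gcongr
    _ = _ := by simp only [bnd, zero_add, mul_one]; ring

lemma serTerm_norm (p l : ℝ) (hp : 3 ≤ p) (j : ℕ) (i : ℕ × ℕ) (z : ℂ) :
    ‖serTerm p l j i z‖ = |coef p l i.1 i.2| * expo p i ^ j * Real.exp (expo p i * z.re) := by
  simp [serTerm, Complex.norm_exp, abs_of_nonneg (expo_nonneg hp i)]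

lemma serTerm_bound {p : ℝ} (hp : 3 ≤ p) {l M X : ℝ} (hl : |l| ≤ M) (j : ℕ) (i : ℕ × ℕ) {z : ℂ}
    (hz : z.re ≤ X) : ‖serTerm p l j i z‖ ≤ j.factorial * bnd p M X i := by
  rw [serTerm_norm p l hp]
  have h2 := expo_nonneg hp i
  have hb := bnd_nonneg p ((abs_nonneg l).trans hl) 0 i
  calc _ ≤ j.factorial * bnd p M 0 i * Real.exp (expo p i * X) :=
        mul_le_mul (coef_pow_le hp hl j i) (by gcongr) (by positivity) (by positivity)
    _ = _ := by
      simp only [bnd, zero_add, mul_one, mul_add, Real.exp_add]; ring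

lemma serTerm_summable {p : ℝ} (hp : 3 ≤ p) (l : ℝ) (j : ℕ) (z : ℂ) :
    Summable (fun i => serTerm p l j i z) :=
  Summable.of_norm_bounded ((bnd_summable p (abs_nonneg l) z.re).mul_left _)
    (fun i => serTerm_bound hp le_rfl j i le_rfl)

lemma serTerm_hasDerivAt (p l : ℝ) (j : ℕ) (i : ℕ × ℕ) (z : ℂ) :
    HasDerivAt (fun z => serTerm p l j i z) (serTerm p l (j + 1) i z) z := by
  have h1 : HasDerivAt (fun z : ℂ => (expo p i : ℂ) * z) (expo p i : ℂ) z := by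
    simpa using (hasDerivAt_id z).const_mul (expo p i : ℂ)
  have := (h1.cexp).const_mul ((coef p l i.1 i.2 : ℂ) * (expo p i : ℂ) ^ j)
  refine (this.congr_deriv ?_)
  simp only [serTerm]; ring

lemma T_hasDerivAt {p : ℝ} (hp : 3 ≤ p) (l : ℝ) (j : ℕ) (z : ℂ) :
    HasDerivAt (T p l j) (T p l (j + 1) z) z := by
  have hopen : IsOpen {w : ℂ | w.re < z.re + 1} := isOpen_lt Complex.continuous_re continuous_const
  have hconn : IsPreconnected {w : ℂ | w.re < z.re + 1} :=
    (convex_halfSpace_re_lt (z.re + 1)).isPreconnected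
  refine hasDerivAt_tsum_of_isPreconnected
    (u := fun i => (j+1).factorial * bnd p |l| (z.re + 1) i) (t := {w : ℂ | w.re < z.re + 1})
    ((bnd_summable p (abs_nonneg l) _).mul_left _) hopen hconn
    (fun i w _ => serTerm_hasDerivAt p l j i w) (fun i w hw => serTerm_bound hp le_rfl _ i (le_of_lt hw))
    (y₀ := z) ?_ (serTerm_summable hp l j z) ?_
  all_goals exact (lt_add_one z.re : z.re < z.re + 1)

lemma T_cont {p : ℝ} (hp : 3 ≤ p) (j : ℕ) : Continuous (fun v : ℝ × ℂ => T p v.1 j v.2) := by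
  rw [continuous_iff_continuousAt]
  rintro ⟨l, z⟩
  set s : Set (ℝ × ℂ) := {v | |v.1| < |l| + 1 ∧ v.2.re < z.re + 1} with hs
  have hopen : IsOpen s :=
    (isOpen_lt (f := fun v : ℝ × ℂ => |v.1|) (by fun_prop) continuous_const).inter
      (isOpen_lt (f := fun v : ℝ × ℂ => v.2.re) (by fun_prop) continuous_const)
  have : ContinuousOn (fun v : ℝ × ℂ => T p v.1 j v.2) s := by
    refine continuousOn_tsum (u := fun i => j.factorial * bnd p (|l| + 1) (z.re + 1) i) ?_
      ((bnd_summable p (by positivity) _).mul_left _) ?_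
    · intro i
      apply Continuous.continuousOn
      unfold serTerm
      have := (coef_cont p i.1 i.2).comp (continuous_fst (X := ℝ) (Y := ℂ))
      simp only [Function.comp_def] at this
      fun_prop
    · intro i v hv
      exact serTerm_bound hp hv.1.le j i hv.2.le
  exact this.continuousAt (hopen.mem_nhds ⟨by simp, by simp⟩)

lemma T_ofReal (p l : ℝ) (j : ℕ) (x : ℝ) : T p l j x = ((T p l j x).re : ℂ) := by
  have : T p l j x = ((∑' i : ℕ × ℕ, coef p l i.1 i.2 * expo p i ^ j * Real.exp (expo p i * x) : ℝ) : ℂ) := by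
    rw [Complex.ofReal_tsum]
    simp [T, serTerm]
  rw [this, Complex.ofReal_re]

lemma coef_rec {p : ℝ} (hp : 3 ≤ p) (l : ℝ) (m n : ℕ) :
    expo p (m, n) * (expo p (m, n) + 2) * coef p l m n =
      (if n = 0 then 0 else coef p l m (n - 1)) - l * (if m = 0 then 0 else coef p l (m - 1) n) := by
  have hpos : (m, n) ≠ (0, 0) → expo p (m, n) * (expo p (m, n) + 2) ≠ 0 := by
    intro h
    have h1 := expo_ge hp m n
    have h2 : (1 : ℝ) ≤ m + n := by
      have : m ≠ 0 ∨ n ≠ 0 := by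
        by_contra hc; push Not at hc; exact h (by simp [hc])
      exact_mod_cast (by omega : 1 ≤ m + n)
    have : 0 < expo p (m, n) := by linarith
    positivity
  match m, n with
  | 0, 0 => simp [expo]
  | m + 1, 0 =>
    have := hpos (by simp)
    rw [coef, mul_div_cancel₀ _ this]; simp
  | 0, n + 1 =>
    have := hpos (by simp)
    rw [coef, mul_div_cancel₀ _ this]; simp
  | m + 1, n + 1 =>
    have := hpos (by simp)
    rw [coef, mul_div_cancel₀ _ this]; simp

lemma T_ode {p : ℝ} (hp : 3 ≤ p) (l : ℝ) (z : ℂ) :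
    T p l 2 z + 2 * T p l 1 z = (Complex.exp (p * z) - l * Complex.exp (2 * z)) * T p l 0 z := by
  have s0 := (serTerm_summable hp l 0 z).hasSum
  have s1 := (serTerm_summable hp l 1 z).hasSum
  have s2 := (serTerm_summable hp l 2 z).hasSum
  have hA : HasSum (fun i : ℕ × ℕ => ((if i.2 = 0 then 0 else coef p l i.1 (i.2 - 1) : ℝ) : ℂ) *
      Complex.exp (expo p i * z)) (Complex.exp (p * z) * T p l 0 z) := by
    have hinj : Function.Injective (fun i : ℕ × ℕ => (i.1, i.2 + 1)) := by
      rintro ⟨a, b⟩ ⟨c, d⟩ h; simp at h; simp [h]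
    rw [← hinj.hasSum_iff]
    · refine (s0.mul_left (Complex.exp (p * z))).congr_fun ?_
      rintro ⟨m, n⟩
      simp only [Function.comp_def, serTerm, expo]
      have : ((2 * (m:ℝ) + p * ((n + 1 : ℕ) : ℝ) : ℝ) : ℂ) * z = p * z + ((2 * (m:ℝ) + p * (n:ℝ) : ℝ):ℂ) * z := by
        push_cast; ring
      rw [this, Complex.exp_add]
      simp; ring
    · rintro ⟨m, n⟩ h
      have : n = 0 := by
        by_contra hn
        exact h ⟨(m, n - 1), by simp; omega⟩
      simp [this]
  have hB : HasSum (fun i : ℕ × ℕ => ((if i.1 = 0 then 0 else coef p l (i.1 - 1) i.2 : ℝ) : ℂ) *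
      Complex.exp (expo p i * z)) (Complex.exp (2 * z) * T p l 0 z) := by
    have hinj : Function.Injective (fun i : ℕ × ℕ => (i.1 + 1, i.2)) := by
      rintro ⟨a, b⟩ ⟨c, d⟩ h; simp at h; simp [h]
    rw [← hinj.hasSum_iff]
    · refine (s0.mul_left (Complex.exp (2 * z))).congr_fun ?_
      rintro ⟨m, n⟩
      simp only [Function.comp_def, serTerm, expo]
      have : ((2 * ((m + 1 : ℕ):ℝ) + p * (n : ℝ) : ℝ) : ℂ) * z = 2 * z + ((2 * (m:ℝ) + p * (n:ℝ) : ℝ):ℂ) * z := by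
        push_cast; ring
      rw [this, Complex.exp_add]
      simp; ring
    · rintro ⟨m, n⟩ h
      have : m = 0 := by
        by_contra hn
        exact h ⟨(m - 1, n), by simp; omega⟩
      simp [this]
  have h1 := s2.add (s1.mul_left 2)
  have h2 := hA.sub (hB.mul_left (l : ℂ))
  have h3 : T p l 2 z + 2 * T p l 1 z =
      Complex.exp (p * z) * T p l 0 z - l * (Complex.exp (2 * z) * T p l 0 z) := by
    refine h1.unique (h2.congr_fun ?_)
    rintro ⟨m, n⟩
    have := congrArg (fun t : ℝ => (t : ℂ)) (coef_rec hp l m n)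
    simp only [Complex.ofReal_sub, Complex.ofReal_mul, Complex.ofReal_add, Complex.ofReal_ofNat] at this
    simp only [serTerm]
    linear_combination (Complex.exp (expo p (m, n) * z)) * this
  rw [h3]; ring

/-- Constant in the bounds for `T` as `re z → -∞`. -/
def bC (p M : ℝ) : ℝ := 2 * ∑' i, bnd p M 0 i

lemma bC_nonneg (p : ℝ) {M : ℝ} (hM : 0 ≤ M) : 0 ≤ bC p M := by
  unfold bC
  have : 0 ≤ ∑' i, bnd p M 0 i := tsum_nonneg (bnd_nonneg p hM 0)
  linarith

lemma expo_ge_two {p : ℝ} (hp : 3 ≤ p) {i : ℕ × ℕ} (hi : i ≠ (0, 0)) : 2 ≤ expo p i := by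
  obtain ⟨m, n⟩ := i
  have h1 := expo_ge hp m n
  have h2 : (1 : ℝ) ≤ m + n := by
    have : m ≠ 0 ∨ n ≠ 0 := by
      by_contra hc; push Not at hc; exact hi (by simp [hc])
    exact_mod_cast (by omega : 1 ≤ m + n)
  linarith

lemma serTerm_bound_neg {p : ℝ} (hp : 3 ≤ p) {l M : ℝ} (hl : |l| ≤ M) {j : ℕ} (hj2 : j ≤ 2)
    {i : ℕ × ℕ} (hi : i ≠ (0, 0)) {z : ℂ} (hz : z.re ≤ 0) :
    ‖serTerm p l j i z‖ ≤ 2 * bnd p M 0 i * Real.exp (2 * z.re) := by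
  rw [serTerm_norm p l hp]
  have hM : 0 ≤ M := (abs_nonneg l).trans hl
  have h2 := expo_ge_two hp hi
  have hb := bnd_nonneg p hM 0 i
  have hf : (j.factorial : ℝ) ≤ 2 := by
    have := Nat.factorial_le hj2
    exact_mod_cast this
  have : expo p i * z.re ≤ 2 * z.re := by nlinarith
  calc _ ≤ j.factorial * bnd p M 0 i * Real.exp (2 * z.re) :=
        mul_le_mul (coef_pow_le hp hl j i) (by gcongr) (by positivity) (by positivity)
    _ ≤ _ := by gcongr

/-- Away from the index `(0, 0)` all exponents are at least `2`, so the derivatives are `O(e^{2 re z})`. -/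
lemma T_bound_neg {p : ℝ} (hp : 3 ≤ p) {l M : ℝ} (hl : |l| ≤ M) {j : ℕ} (hj : j ≠ 0) (hj2 : j ≤ 2)
    {z : ℂ} (hz : z.re ≤ 0) : ‖T p l j z‖ ≤ bC p M * Real.exp (2 * z.re) := by
  have hM : 0 ≤ M := (abs_nonneg l).trans hl
  have hs := (((bnd_summable p hM 0).hasSum.mul_left 2).mul_right (Real.exp (2 * z.re)))
  refine tsum_of_norm_bounded hs ?_
  intro i
  by_cases hi : i = (0, 0)
  · subst hi
    have : serTerm p l j (0,0) z = 0 := by simp [serTerm, expo, hj]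
    rw [this, norm_zero]
    unfold bnd; positivity
  · exact serTerm_bound_neg hp hl hj2 hi hz

lemma T0_bound_neg {p : ℝ} (hp : 3 ≤ p) {l M : ℝ} (hl : |l| ≤ M)
    {z : ℂ} (hz : z.re ≤ 0) : ‖T p l 0 z - 1‖ ≤ bC p M * Real.exp (2 * z.re) := by
  have hM : 0 ≤ M := (abs_nonneg l).trans hl
  have hs := (((bnd_summable p hM 0).hasSum.mul_left 2).mul_right (Real.exp (2 * z.re)))
  have h1 : T p l 0 z = serTerm p l 0 (0,0) z + ∑' i, if i = (0,0) then 0 else serTerm p l 0 i z :=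
    (serTerm_summable hp l 0 z).tsum_eq_add_tsum_ite (0,0)
  have h0 : serTerm p l 0 (0,0) z = 1 := by simp [serTerm, expo, coef]
  rw [h1, h0, add_sub_cancel_left]
  refine tsum_of_norm_bounded hs ?_
  intro i
  by_cases hi : i = (0, 0)
  · subst hi
    simp only [if_true, norm_zero]
    unfold bnd; positivity
  · simp only [hi, if_false]
    exact serTerm_bound_neg hp hl (by norm_num) hi hz

end CircSharp

/-! ### The ground state on the real line -/

namespace CircSharp

/-- The (real) restriction of `T p l j` to the real axis. In the variable `x = log r`, `hh p l 0`
is the radial factor of an angular mode `r e^{iθ} g(r)` regular at the origin. -/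
def hh (p l : ℝ) (j : ℕ) (x : ℝ) : ℝ := (T p l j (x : ℂ)).re

lemma hh_deriv {p : ℝ} (hp : 3 ≤ p) (l : ℝ) (j : ℕ) (x : ℝ) :
    HasDerivAt (hh p l j) (hh p l (j + 1) x) x :=
  (T_hasDerivAt hp l j (x : ℂ)).real_of_complex

lemma hh_ode {p : ℝ} (hp : 3 ≤ p) (l x : ℝ) :
    hh p l 2 x = -2 * hh p l 1 x + (exp (p * x) - l * exp (2 * x)) * hh p l 0 x := by
  have h := T_ode hp l (x : ℂ)
  rw [T_ofReal p l 2, T_ofReal p l 1, T_ofReal p l 0] at h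
  have h' : hh p l 2 x + 2 * hh p l 1 x = (exp (p * x) - l * exp (2 * x)) * hh p l 0 x := by
    unfold hh
    exact_mod_cast h
  linarith

lemma hh_cont {p : ℝ} (hp : 3 ≤ p) (j : ℕ) : Continuous (fun v : ℝ × ℝ => hh p v.1 j v.2) := by
  unfold hh
  exact Complex.continuous_re.comp
    ((T_cont hp j).comp (f := fun v : ℝ × ℝ => (v.1, (v.2 : ℂ))) (by fun_prop))

lemma hh_bound {p : ℝ} (hp : 3 ≤ p) {l M : ℝ} (hl : |l| ≤ M) {j : ℕ} (hj : j ≠ 0) (hj2 : j ≤ 2)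
    {x : ℝ} (hx : x ≤ 0) : |hh p l j x| ≤ bC p M * exp (2 * x) :=
  (Complex.abs_re_le_norm _).trans (by simpa using T_bound_neg hp hl hj hj2 (z := (x : ℂ)) (by simpa))

lemma hh0_bound {p : ℝ} (hp : 3 ≤ p) {l M : ℝ} (hl : |l| ≤ M)
    {x : ℝ} (hx : x ≤ 0) : |hh p l 0 x - 1| ≤ bC p M * exp (2 * x) := by
  have := (Complex.abs_re_le_norm _).trans (T0_bound_neg hp hl (z := (x : ℂ)) (by simpa))
  simpa [hh] using this

/-- Positivity near `-∞`, uniformly for `|l| ≤ M`. -/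
lemma hh0_half {p : ℝ} (hp : 3 ≤ p) {M : ℝ} (hM : 0 ≤ M) :
    ∃ A < 0, ∀ l, |l| ≤ M → ∀ x ≤ A, 1 / 2 ≤ hh p l 0 x := by
  have hb := bC_nonneg p hM
  refine ⟨-(bC p M) - 1, by linarith, fun l hl x hx => ?_⟩
  have h1 := hh0_bound hp hl (x := x) (by linarith)
  have h2 : exp (2 * x) ≤ 1 / (1 + (2 * bC p M + 2)) := by
    have h3 : 1 + (2 * bC p M + 2) ≤ exp (-(2 * x)) := by
      have := add_one_le_exp (-(2 * x))
      linarith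
    rw [le_div_iff₀ (by positivity)]
    calc exp (2 * x) * (1 + (2 * bC p M + 2)) ≤ exp (2 * x) * exp (-(2*x)) := by gcongr
      _ = 1 := by rw [← exp_add]; simp
  have h4 : bC p M * exp (2 * x) ≤ 1 / 2 := by
    calc _ ≤ bC p M * (1 / (1 + (2 * bC p M + 2))) := by gcongr
      _ ≤ 1 / 2 := by
        rw [mul_one_div, div_le_div_iff₀ (by positivity) (by positivity)]; linarith
  have := (abs_le.1 h1).1
  linarith

lemma anti_of {f f' : ℝ → ℝ} {s : Set ℝ} (hs : Convex ℝ s) (h : ∀ x, HasDerivAt f (f' x) x)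
    (h' : ∀ x ∈ s, f' x ≤ 0) : AntitoneOn f s :=
  antitoneOn_of_hasDerivWithinAt_nonpos hs
    (fun x _ => (h x).continuousAt.continuousWithinAt) (fun x _ => (h x).hasDerivWithinAt)
    (fun x hx => h' x (interior_subset hx))

lemma mono_of {f f' : ℝ → ℝ} {s : Set ℝ} (hs : Convex ℝ s) (h : ∀ x, HasDerivAt f (f' x) x)
    (h' : ∀ x ∈ s, 0 ≤ f' x) : MonotoneOn f s :=
  monotoneOn_of_hasDerivWithinAt_nonneg hs
    (fun x _ => (h x).continuousAt.continuousWithinAt) (fun x _ => (h x).hasDerivWithinAt)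
    (fun x hx => h' x (interior_subset hx))

lemma exp_two_deriv (c x : ℝ) : HasDerivAt (fun x => exp (c * x)) (c * exp (c * x)) x := by
  have := ((hasDerivAt_id x).const_mul c).exp
  simpa [mul_comm] using this

lemma tendsto_exp_two_atBot {c : ℝ} (hc : 0 < c) : Tendsto (fun x => exp (c * x)) atBot (nhds 0) :=
  tendsto_exp_atBot.comp (tendsto_id.const_mul_atBot hc)

/-- The equation in divergence form. -/
lemma flux_deriv {p : ℝ} (hp : 3 ≤ p) (l x : ℝ) :
    HasDerivAt (fun x => exp (2 * x) * hh p l 1 x)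
      (exp (2 * x) * ((exp (p * x) - l * exp (2 * x)) * hh p l 0 x)) x := by
  refine ((exp_two_deriv 2 x).mul (hh_deriv hp l 1 x)).congr_deriv ?_
  rw [hh_ode hp]; ring

lemma flux_tendsto {p : ℝ} (hp : 3 ≤ p) (l : ℝ) :
    Tendsto (fun x => exp (2 * x) * hh p l 1 x) atBot (nhds 0) := by
  apply squeeze_zero_norm' (a := fun x => exp (2 * x) * bC p |l|)
  · filter_upwards [eventually_le_atBot 0] with x hx
    rw [norm_mul, norm_of_nonneg (exp_pos _).le, norm_eq_abs]
    gcongr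
    refine (hh_bound hp le_rfl (by norm_num) (by norm_num) hx).trans ?_
    have := bC_nonneg p (abs_nonneg l)
    have : exp (2 * x) ≤ 1 := by rw [exp_le_one_iff]; linarith
    nlinarith
  · simpa using (tendsto_exp_two_atBot (by norm_num : (0:ℝ) < 2)).mul_const (bC p |l|)

lemma hh0_tendsto {p : ℝ} (hp : 3 ≤ p) (l : ℝ) : Tendsto (hh p l 0) atBot (nhds 1) := by
  rw [tendsto_iff_norm_sub_tendsto_zero]
  apply squeeze_zero_norm' (a := fun x => bC p |l| * exp (2 * x))
  · filter_upwards [eventually_le_atBot 0] with x hx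
    simpa using hh0_bound hp le_rfl hx
  · simpa using (tendsto_exp_two_atBot (by norm_num : (0:ℝ) < 2)).const_mul (bC p |l|)

/-- The derivative of `e^{2x} h h'` is nonnegative wherever the potential `e^{px} - l e^{2x}` is. -/
lemma prod_deriv {p : ℝ} (hp : 3 ≤ p) (l x : ℝ) :
    HasDerivAt (fun x => exp (2 * x) * hh p l 1 x * hh p l 0 x)
      (exp (2 * x) * ((exp (p * x) - l * exp (2 * x)) * hh p l 0 x ^ 2 + hh p l 1 x ^ 2)) x := by
  refine ((flux_deriv hp l x).mul (hh_deriv hp l 0 x)).congr_deriv ?_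
  simp only [zero_add]; ring

lemma hh_cont1 {p : ℝ} (hp : 3 ≤ p) (l : ℝ) (j : ℕ) : Continuous (hh p l j) :=
  (hh_cont hp j).comp (f := fun x : ℝ => (l, x)) (by fun_prop)

lemma pos_of_ne {f : ℝ → ℝ} (hf : Continuous f) {s : Set ℝ} (hs : s.OrdConnected)
    (h0 : ∀ x ∈ s, f x ≠ 0)
    {a : ℝ} (ha : a ∈ s) (hfa : 0 < f a) : ∀ x ∈ s, 0 < f x := by
  intro x hx
  by_contra hc
  push Not at hc
  obtain ⟨y, hy, hy0⟩ := intermediate_value_uIcc (a := a) (b := x) (f := f) hf.continuousOn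
    (show (0:ℝ) ∈ uIcc (f a) (f x) by
      rw [uIcc_of_ge (hc.trans hfa.le)]; exact ⟨hc, hfa.le⟩)
  exact h0 y (hs.uIcc_subset ha hx hy) hy0

/-- For `l ≤ 0` the potential is nonnegative, so `e^{2x} h h'` increases from its limit `0` at `-∞`,
and `h` has no zero. -/
lemma hh0_pos_of_nonpos {p : ℝ} (hp : 3 ≤ p) {l : ℝ} (hl : l ≤ 0) (x : ℝ) : 0 < hh p l 0 x := by
  have hm : MonotoneOn (fun x => exp (2 * x) * hh p l 1 x * hh p l 0 x) univ :=
    mono_of convex_univ (prod_deriv hp l) (fun x _ => by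
      have : 0 ≤ exp (p * x) - l * exp (2 * x) := by
        have := exp_pos (p * x); have := exp_pos (2 * x); nlinarith
      positivity)
  have ht : Tendsto (fun x => exp (2 * x) * hh p l 1 x * hh p l 0 x) atBot (nhds 0) := by
    simpa using (flux_tendsto hp l).mul (hh0_tendsto hp l)
  have h1 : ∀ x, 0 ≤ hh p l 1 x * hh p l 0 x := by
    intro x
    have : 0 ≤ exp (2 * x) * hh p l 1 x * hh p l 0 x :=
      le_of_tendsto ht (by
        filter_upwards [eventually_le_atBot x] with y hy
        exact hm (mem_univ y) (mem_univ x) hy)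
    rw [mul_assoc] at this
    exact nonneg_of_mul_nonneg_right this (exp_pos _)
  have hm2 : MonotoneOn (fun x => hh p l 0 x ^ 2) univ :=
    mono_of convex_univ (fun x => (hh_deriv hp l 0 x).pow 2) (fun x _ => by
      have := h1 x
      simp; nlinarith)
  have ht2 : Tendsto (fun x => hh p l 0 x ^ 2) atBot (nhds 1) := by
    simpa using (hh0_tendsto hp l).pow 2
  have hne : ∀ x, hh p l 0 x ≠ 0 := by
    intro x hx
    have : 1 ≤ hh p l 0 x ^ 2 := le_of_tendsto ht2 (by
        filter_upwards [eventually_le_atBot x] with y hy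
        exact hm2 (mem_univ y) (mem_univ x) hy)
    rw [hx] at this; norm_num at this
  obtain ⟨A, _, hA⟩ := hh0_half hp (abs_nonneg l)
  exact pos_of_ne (hh_cont1 hp l 0) ordConnected_univ (fun x _ => hne x) (mem_univ A)
    (by linarith [hA l le_rfl A le_rfl]) x (mem_univ x)

/-- For `l = 20` the solution takes negative values: otherwise the Wronskian `Φ` of `h` with the test
function `(1 - e^{2x})²` would decrease strictly from `0` at `-∞`, while it vanishes at `x = 0`. -/
lemma exists_neg {p : ℝ} (hp : 3 ≤ p) : ∃ x, hh p 20 0 x < 0 := by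
  by_contra hc
  push Not at hc
  set Φ : ℝ → ℝ := fun x => exp (2 * x) * hh p 20 1 x * (1 - exp (2 * x)) ^ 2
    + 4 * exp (2 * x) ^ 2 * (1 - exp (2 * x)) * hh p 20 0 x with hΦ
  have hd : ∀ x, HasDerivAt Φ (exp (2 * x) * hh p 20 0 x *
      ((exp (p * x) - 20 * exp (2 * x)) * (1 - exp (2 * x)) ^ 2
        + 16 * exp (2 * x) - 24 * exp (2 * x) ^ 2)) x := by
    intro x
    have e := exp_two_deriv 2 x
    refine (((flux_deriv hp 20 x).mul ((e.const_sub 1).pow 2)).add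
      ((((e.pow 2).const_mul 4).mul (e.const_sub 1)).mul (hh_deriv hp 20 0 x))).congr_deriv ?_
    simp; ring
  have hle : ∀ x ≤ 0, (exp (p * x) - 20 * exp (2 * x)) * (1 - exp (2 * x)) ^ 2
        + 16 * exp (2 * x) - 24 * exp (2 * x) ^ 2 < 0 := by
    intro x hx
    have h1 : exp (p * x) ≤ exp (2 * x) := by rw [exp_le_exp]; nlinarith
    have h2 := exp_pos (2 * x)
    set y := exp (2 * x)
    have h3 : (exp (p * x) - 20 * y) * (1 - y) ^ 2 ≤ (-19 * y) * (1 - y) ^ 2 := by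
      have := sq_nonneg (1 - y); nlinarith
    have h4 : -19 * (1 - y) ^ 2 + 16 - 24 * y < 0 := by nlinarith [sq_nonneg (19 * (1 - y) - 12)]
    nlinarith
  have hanti : AntitoneOn Φ (Iic 0) := anti_of (convex_Iic 0) hd (fun x hx =>
    mul_nonpos_of_nonneg_of_nonpos (mul_nonneg (exp_pos _).le (hc x)) (hle x hx).le)
  have ht : Tendsto Φ atBot (nhds 0) := by
    have e := tendsto_exp_two_atBot (by norm_num : (0:ℝ) < 2)
    have := ((flux_tendsto hp 20).mul ((e.const_sub 1).pow 2)).add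
      ((((e.pow 2).const_mul 4).mul (e.const_sub 1)).mul (hh0_tendsto hp 20))
    simpa using this
  obtain ⟨A, hA0, hA⟩ := hh0_half hp (abs_nonneg (20:ℝ))
  have hs : StrictAntiOn Φ (Iic A) := by
    refine strictAntiOn_of_hasDerivWithinAt_neg (convex_Iic A)
      (fun x _ => (hd x).continuousAt.continuousWithinAt) (fun x _ => (hd x).hasDerivWithinAt) ?_
    intro x hx
    have hx : x ≤ A := mem_Iic.1 (interior_subset hx)
    exact mul_neg_of_pos_of_neg (mul_pos (exp_pos _) (by linarith [hA 20 le_rfl x hx]))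
      (hle x (by linarith))
  have h1 : Φ (A - 1) ≤ 0 := ge_of_tendsto ht (by
    filter_upwards [eventually_le_atBot (A - 1)] with y hy
    exact hanti (by simp; linarith) (by simp; linarith) hy)
  have h2 : Φ A < Φ (A - 1) := hs (by simp) (by simp) (by linarith)
  have h3 : Φ 0 ≤ Φ A := hanti (by simp; linarith) (by simp) hA0.le
  have h4 : Φ 0 = 0 := by simp [hΦ]
  linarith

/-- Uniqueness for the initial value problem, by a Gronwall argument: a double zero would
propagate back to the region where `h ≥ 1/2`. -/
lemma hh_no_double_zero {p : ℝ} (hp : 3 ≤ p) (l x₀ : ℝ) (h0 : hh p l 0 x₀ = 0)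
    (h1 : hh p l 1 x₀ = 0) : False := by
  obtain ⟨A, hA0, hA⟩ := hh0_half hp (abs_nonneg l)
  set a := min A x₀ - 1
  have ha : a ≤ x₀ := by have := min_le_right A x₀; simp only [a]; linarith
  have haA : a ≤ A := by have := min_le_left A x₀; simp only [a]; linarith
  set V : ℝ → ℝ := fun x => exp (p * x) - l * exp (2 * x) with hV
  obtain ⟨K, hK⟩ := (isCompact_Icc (a := a) (b := x₀)).exists_bound_of_continuousOn
    (f := V) (by fun_prop)
  have hK0 : 0 ≤ K := (norm_nonneg _).trans (hK a ⟨le_rfl, ha⟩)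
  have hm : MonotoneOn (fun x => (hh p l 0 x ^ 2 + hh p l 1 x ^ 2) * exp ((5 + K) * x)) (Icc a x₀) := by
    refine mono_of (convex_Icc _ _) (fun x => (((hh_deriv hp l 0 x).pow 2).add
      ((hh_deriv hp l 1 x).pow 2)).mul (exp_two_deriv (5 + K) x)) ?_
    intro x hx
    have hk := abs_le.1 (hK x hx)
    have e := exp_pos ((5 + K) * x)
    simp only [zero_add, Nat.cast_ofNat, Nat.add_one_sub_one, pow_one, hh_ode hp, one_add_one_eq_two,
      Pi.add_apply, Pi.pow_apply]
    change 0 ≤ (2 * hh p l 0 x * hh p l 1 x + 2 * hh p l 1 x * (-2 * hh p l 1 x + V x * hh p l 0 x))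
      * _ + _
    set u := hh p l 0 x
    set v := hh p l 1 x
    have : 0 ≤ (2 * u * v + 2 * v * (-2 * v + V x * u)) + (u ^ 2 + v ^ 2) * (5 + K) := by
      have h1 : 0 ≤ (K + V x) * (u + v) ^ 2 := mul_nonneg (by linarith) (sq_nonneg _)
      have h2 : 0 ≤ (K - V x) * (u - v) ^ 2 := mul_nonneg (by linarith) (sq_nonneg _)
      nlinarith [sq_nonneg (u + v), sq_nonneg u, sq_nonneg v]
    nlinarith
  have := hm ⟨le_rfl, ha⟩ ⟨ha, le_rfl⟩ ha
  simp only [h0, h1] at this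
  have h5 := hA l le_rfl a haA
  have h6 := exp_pos ((5 + K) * a)
  have : 0 < (hh p l 0 a ^ 2 + hh p l 1 a ^ 2) * exp ((5 + K) * a) := by positivity
  norm_num at *
  linarith

/-- The ground state, found by shooting: `l` is the infimum of the parameters in `[0, 20]` for which
`h` takes negative values. At this `l` the solution is positive. If `h'` were positive somewhere,
the potential would be positive there, so for nearby parameters `h` would keep growing and stay
positive, contradicting the choice of `l`. -/
lemma exists_ground {p : ℝ} (hp : 3 ≤ p) : ∃ l, 0 ≤ l ∧ l ≤ 20 ∧ (∀ x, 0 < hh p l 0 x) ∧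
    ∀ x, hh p l 1 x ≤ 0 := by
  set S : Set ℝ := {l | 0 ≤ l ∧ l ≤ 20 ∧ ∃ x, hh p l 0 x < 0} with hS
  have hne : S.Nonempty := ⟨20, by norm_num, le_rfl, exists_neg hp⟩
  have hbd : BddBelow S := ⟨0, fun l hl => hl.1⟩
  set L := sInf S with hL
  have hL0 : 0 ≤ L := le_csInf hne (fun l hl => hl.1)
  have hL20 : L ≤ 20 := csInf_le hbd ⟨by norm_num, le_rfl, exists_neg hp⟩
  have hcl : ∀ x j, Continuous (fun l => hh p l j x) := fun x j =>
    (hh_cont hp j).comp (f := fun l : ℝ => (l, x)) (by fun_prop)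
  have hnn : ∀ x, 0 ≤ hh p L 0 x := by
    intro x
    rcases hL0.eq_or_lt with h | h
    · rw [← h]; exact (hh0_pos_of_nonpos hp le_rfl x).le
    · by_contra hc
      push Not at hc
      have h1 : ∀ᶠ l in nhds L, hh p l 0 x < 0 := (hcl x 0).continuousAt.eventually_lt_const hc
      have h2 : ∀ᶠ l in nhds L, 0 < l := eventually_gt_nhds h
      obtain ⟨l, ⟨hl1, hl2⟩, hl3⟩ := (((h1.and h2).filter_mono nhdsWithin_le_nhds).and
        (self_mem_nhdsWithin : Iio L ∈ nhdsWithin L (Iio L))).exists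
      have hl3 : l < L := hl3
      have : L ≤ l := csInf_le hbd ⟨hl2.le, by linarith, x, hl1⟩
      linarith
  have hpos : ∀ x, 0 < hh p L 0 x := by
    intro x
    refine (hnn x).lt_of_ne' (fun h0 => ?_)
    have hmin : IsLocalMin (hh p L 0) x := Eventually.of_forall (fun y => by rw [h0]; exact hnn y)
    exact hh_no_double_zero hp L x h0 (hmin.hasDerivAt_eq_zero (hh_deriv hp L 0 x))
  refine ⟨L, hL0, hL20, hpos, fun x₁ => ?_⟩
  by_contra hc
  push Not at hc
  have hsplit : ∀ l x, exp (p * x) - l * exp (2 * x) = exp (2 * x) * (exp ((p - 2) * x) - l) := by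
    intro l x
    rw [mul_sub, ← exp_add]; ring_nf
  -- the potential must already be positive at `x₁`
  have hx₁ : L < exp ((p - 2) * x₁) := by
    by_contra hle
    push Not at hle
    have hanti : AntitoneOn (fun x => exp (2 * x) * hh p L 1 x) (Iic x₁) :=
      anti_of (convex_Iic _) (flux_deriv hp L) (fun x hx => by
        have hx : x ≤ x₁ := hx
        have : exp ((p - 2) * x) ≤ exp ((p - 2) * x₁) := by
          rw [exp_le_exp]; nlinarith
        rw [hsplit]
        have h1 := hpos x
        have h2 := exp_pos (2 * x)
        refine mul_nonpos_of_nonneg_of_nonpos h2.le (mul_nonpos_of_nonpos_of_nonneg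
          (mul_nonpos_of_nonneg_of_nonpos h2.le (by linarith)) h1.le))
    have : exp (2 * x₁) * hh p L 1 x₁ ≤ 0 := ge_of_tendsto (flux_tendsto hp L) (by
      filter_upwards [eventually_le_atBot x₁] with y hy
      exact hanti hy (mem_Iic.2 le_rfl) hy)
    have h2 := exp_pos (2 * x₁)
    nlinarith
  obtain ⟨A, hA0, hA⟩ := hh0_half hp (by norm_num : (0:ℝ) ≤ 20)
  have e1 : ∀ᶠ l in nhds L, l < exp ((p - 2) * x₁) := eventually_lt_nhds hx₁
  have e2 : ∀ᶠ l in nhds L, 0 < hh p l 1 x₁ := (hcl x₁ 1).continuousAt.eventually_const_lt hc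
  have e3 : ∀ᶠ l in nhds L, ∀ x ∈ Icc A x₁, 0 < hh p l 0 x := by
    refine isCompact_Icc.eventually_forall_of_forall_eventually (fun x _ => ?_)
    exact (hh_cont hp 0).continuousAt.eventually_const_lt (hpos x)
  obtain ⟨ε, hε, hball⟩ := Metric.eventually_nhds_iff.1 (e1.and (e2.and e3))
  obtain ⟨l, hlS, hlt⟩ := exists_lt_of_csInf_lt hne (show sInf S < L + ε by linarith)
  have hLl : L ≤ l := csInf_le hbd hlS
  obtain ⟨f1, f2, f3⟩ := hball (y := l) (by rw [Real.dist_eq, abs_of_nonneg] <;> linarith)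
  obtain ⟨g1, g2, x, hx⟩ := hlS
  have hleft : ∀ y ≤ x₁, 0 < hh p l 0 y := by
    intro y hy
    rcases le_total y A with h | h
    · linarith [hA l (by rw [abs_of_nonneg g1]; exact g2) y h]
    · exact f3 y ⟨h, hy⟩
  have hm : MonotoneOn (fun x => exp (2 * x) * hh p l 1 x * hh p l 0 x) (Ici x₁) :=
    mono_of (convex_Ici _) (prod_deriv hp l) (fun y hy => by
      have hy : x₁ ≤ y := hy
      have h3 : exp ((p - 2) * x₁) ≤ exp ((p - 2) * y) := by rw [exp_le_exp]; nlinarith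
      have : 0 ≤ exp (p * y) - l * exp (2 * y) := by
        rw [hsplit]; exact mul_nonneg (exp_pos _).le (by linarith)
      positivity)
  have hright : ∀ y ∈ Ici x₁, 0 < hh p l 0 y := by
    refine pos_of_ne (hh_cont1 hp l 0) ordConnected_Ici ?_ self_mem_Ici (hleft x₁ le_rfl)
    intro y hy h0
    have := hm self_mem_Ici hy hy
    simp only [h0, mul_zero] at this
    have h7 := hleft x₁ le_rfl
    have : 0 < exp (2 * x₁) * hh p l 1 x₁ * hh p l 0 x₁ := by positivity
    linarith
  rcases le_total x x₁ with h | h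
  · linarith [hleft x h]
  · linarith [hright x h]

end CircSharp

/-! ### Decay on the real axis and on the rotated line -/

namespace CircSharp

/-- For `x ≥ log 400` the term `l e^{2x}` is a small perturbation of `e^{px} = s²`, `s = e^{px/2}`. -/
lemma exp_facts {p l x : ℝ} (hp : 3 ≤ p) (hl20 : l ≤ 20) (hx : log 400 ≤ x) :
    exp (p * x) = exp (p / 2 * x) ^ 2 ∧ 1 ≤ exp (p / 2 * x) ∧
      l * exp (2 * x) ≤ exp (p / 2 * x) ^ 2 / 20 := by
  have h0 : 0 < log 400 := log_pos (by norm_num)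
  have e1 : exp (p * x) = exp (p / 2 * x) ^ 2 := by rw [sq, ← exp_add]; ring_nf
  refine ⟨e1, one_le_exp (by have : 0 < x := by linarith
                             positivity), ?_⟩
  have h1 : (400:ℝ) ≤ exp ((p - 2) * x) := by
    rw [← exp_log (by norm_num : (0:ℝ) < 400), exp_le_exp]; nlinarith
  have h2 : exp (p * x) = exp (2 * x) * exp ((p - 2) * x) := by rw [← exp_add]; ring_nf
  rw [← e1, h2]
  have := exp_pos (2 * x)
  nlinarith

/-- The Riccati barrier `h' ≤ -½ s h` with `s = e^{px/2}`. If `Q = h' + ½ s h` were positive at some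
point it would stay positive, and then `-h'/h` would decrease at rate at least `½` for ever,
contradicting `h' ≤ 0`. -/
lemma real_riccati {p l : ℝ} (hp : 3 ≤ p) (hl20 : l ≤ 20)
    (hpos : ∀ x, 0 < hh p l 0 x) (hneg : ∀ x, hh p l 1 x ≤ 0) {x₁ : ℝ} (hx₁ : log 400 ≤ x₁) :
    hh p l 1 x₁ + 1 / 2 * exp (p / 2 * x₁) * hh p l 0 x₁ ≤ 0 := by
  by_contra hc
  push Not at hc
  have hV : ∀ x, log 400 ≤ x → 3 / 4 * exp (p / 2 * x) ^ 2 * hh p l 0 x ≤ hh p l 2 x := by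
    intro x hx
    obtain ⟨h1, h2, h3⟩ := exp_facts hp hl20 hx
    rw [hh_ode hp, h1]
    have := hpos x
    have := hneg x
    have : 0 ≤ (1/4 * exp (p / 2 * x) ^ 2 - l * exp (2 * x)) * hh p l 0 x :=
      mul_nonneg (by nlinarith) (hpos x).le
    nlinarith
  -- `Q e^{-s/p}` is monotone, so `Q` stays positive
  have hm : MonotoneOn (fun x => (hh p l 1 x + 1 / 2 * exp (p / 2 * x) * hh p l 0 x) *
      exp (-(1 / p) * exp (p / 2 * x))) (Ici x₁) := by
    refine mono_of (convex_Ici _) (fun x => ((hh_deriv hp l 1 x).add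
      (((exp_two_deriv (p / 2) x).const_mul (1/2)).mul (hh_deriv hp l 0 x))).mul
      ((exp_two_deriv (p / 2) x).const_mul (-(1/p))).exp) ?_
    intro x hx
    have hx : x₁ ≤ x := hx
    have h1 := hV x (by linarith)
    obtain ⟨-, h2, -⟩ := exp_facts hp hl20 (hx₁.trans hx)
    have h3 := hpos x
    have h4 := exp_pos (-(1 / p) * exp (p / 2 * x))
    simp only [one_add_one_eq_two, zero_add, Pi.add_apply, Pi.mul_apply]
    have e : -(1 / p) * (p / 2 * exp (p / 2 * x)) = - (1/2 * exp (p / 2 * x)) := by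
      field_simp
    rw [e]
    set s := exp (p / 2 * x)
    set E := exp (-(1 / p) * s)
    have : 0 ≤ hh p l 2 x + (1 / 2 * (p / 2 * s) * hh p l 0 x + 1 / 2 * s * hh p l 1 x)
       - (1/2 * s) * (hh p l 1 x + 1 / 2 * s * hh p l 0 x) := by
      have h5 : 0 ≤ 1 / 2 * (p / 2 * s) * hh p l 0 x := by positivity
      have h6 : 0 ≤ s ^ 2 * hh p l 0 x := by positivity
      nlinarith
    nlinarith
  have hQ : ∀ x, x₁ ≤ x → 0 < hh p l 1 x + 1 / 2 * exp (p / 2 * x) * hh p l 0 x := by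
    intro x hx
    have h1 := hm self_mem_Ici hx hx
    simp only at h1
    have h2 : 0 < (hh p l 1 x₁ + 1 / 2 * exp (p / 2 * x₁) * hh p l 0 x₁) *
      exp (-(1 / p) * exp (p / 2 * x₁)) := mul_pos hc (exp_pos _)
    exact pos_of_mul_pos_left (h2.trans_le h1) (exp_pos _).le
  have hw : AntitoneOn (fun x => -(hh p l 1 x / hh p l 0 x) + 1/2 * x) (Ici x₁) := by
    refine anti_of (convex_Ici _) (fun x => (((hh_deriv hp l 1 x).div (hh_deriv hp l 0 x)
      (hpos x).ne').neg).add ((hasDerivAt_id x).const_mul (1/2))) ?_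
    intro x hx
    have hx : x₁ ≤ x := hx
    have h1 := hV x (by linarith)
    obtain ⟨-, h2, -⟩ := exp_facts hp hl20 (hx₁.trans hx)
    have h3 := hpos x
    have h4 := hQ x hx
    have h5 := hneg x
    simp only [one_add_one_eq_two, zero_add]
    set s := exp (p / 2 * x)
    have h6 : hh p l 1 x ^ 2 ≤ 1/4 * s^2 * hh p l 0 x ^ 2 := by nlinarith
    have h7 : 3 / 4 * s ^ 2 * hh p l 0 x * hh p l 0 x ≤ hh p l 2 x * hh p l 0 x := by gcongr
    have h8 : hh p l 0 x ^ 2 ≤ s ^ 2 * hh p l 0 x ^ 2 := by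
      have : 1 ≤ s ^ 2 := one_le_pow₀ h2
      nlinarith [sq_nonneg (hh p l 0 x)]
    have : 1/2 ≤ (hh p l 2 x * hh p l 0 x - hh p l 1 x * hh p l 1 x) / hh p l 0 x ^ 2 := by
      rw [le_div_iff₀ (by positivity)]
      nlinarith
    linarith
  set w := -(hh p l 1 x₁ / hh p l 0 x₁) with hwdef
  have hw0 : ∀ x, 0 ≤ -(hh p l 1 x / hh p l 0 x) := fun x => by
    rw [← neg_div]; exact div_nonneg (by linarith [hneg x]) (hpos x).le
  have hw1 := hw0 x₁
  have h9 := hw self_mem_Ici (show x₁ + (2 * w + 1) ∈ Ici x₁ by simp; linarith) (by linarith)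
  simp only at h9
  have h10 := hw0 (x₁ + (2 * w + 1))
  linarith

/-- Decay of the ground state on the real axis. The bound for `h` integrates `real_riccati`; the one
for `h'` follows from the mean value theorem on a short interval to the left and monotonicity of
`e^{2x} h'`, which costs the factor `4/5` in the exponent. -/
lemma real_decay {p l : ℝ} (hp : 3 ≤ p) (hl20 : l ≤ 20)
    (hpos : ∀ x, 0 < hh p l 0 x) (hneg : ∀ x, hh p l 1 x ≤ 0) :
    ∃ C X, 0 < C ∧ log 400 ≤ X ∧ ∀ x, X ≤ x →
      |hh p l 0 x| ≤ C * exp (-(4 / 5) * (exp (p / 2 * x) / p)) ∧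
      |hh p l 1 x| ≤ C * exp (-(4 / 5) * (exp (p / 2 * x) / p)) := by
  set X₀ := log 400 with hX₀
  have hp0 : 0 < p := by linarith
  have hanti : AntitoneOn (fun x => hh p l 0 x * exp (1 / p * exp (p / 2 * x))) (Ici X₀) := by
    refine anti_of (convex_Ici _) (fun x => (hh_deriv hp l 0 x).mul
      ((exp_two_deriv (p / 2) x).const_mul (1/p)).exp) ?_
    intro x hx
    have h1 := real_riccati hp hl20 hpos hneg hx
    have e : (1 / p) * (p / 2 * exp (p / 2 * x)) = (1/2 * exp (p / 2 * x)) := by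
      field_simp
    simp only [zero_add]
    rw [e]
    have h4 := exp_pos ((1 / p) * exp (p / 2 * x))
    nlinarith
  set C₀ := hh p l 0 X₀ * exp (1 / p * exp (p / 2 * X₀)) with hC₀
  have hC₀pos : 0 < C₀ := mul_pos (hpos _) (exp_pos _)
  have h0 : ∀ x, X₀ ≤ x → hh p l 0 x ≤ C₀ * exp (- (exp (p / 2 * x) / p)) := by
    intro x hx
    have h1 := hanti self_mem_Ici hx hx
    simp only at h1
    rw [exp_neg, ← div_eq_mul_inv, le_div_iff₀ (exp_pos _)]
    convert h1 using 3
    ring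
  set η := 2 / p * log (5 / 4) with hη
  have hηpos : 0 < η := mul_pos (by positivity) (log_pos (by norm_num))
  have hshift : ∀ x, exp (p / 2 * (x - η)) = 4 / 5 * exp (p / 2 * x) := by
    intro x
    have : p / 2 * (x - η) = p / 2 * x - log (5 / 4) := by rw [hη]; field_simp
    rw [this, exp_sub, exp_log (by norm_num)]; ring
  refine ⟨C₀ * (1 + 1 / η), X₀ + η, by positivity, by linarith, fun x hx => ?_⟩
  have hE : 0 < exp (p / 2 * x) / p := by positivity
  constructor
  · rw [abs_of_pos (hpos x)]
    have : 0 < 1 / η := by positivity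
    calc hh p l 0 x ≤ C₀ * exp (- (exp (p / 2 * x) / p)) := h0 x (by linarith)
      _ ≤ C₀ * (1 + 1 / η) * exp (-(4 / 5) * (exp (p / 2 * x) / p)) := by
        gcongr ?_ * exp ?_
        · nlinarith
        · linarith
  · rw [abs_of_nonpos (hneg x)]
    have hm : MonotoneOn (fun x => exp (2 * x) * hh p l 1 x) (Ici X₀) :=
      mono_of (convex_Ici _) (flux_deriv hp l) (fun y hy => by
        obtain ⟨h1, h2, h3⟩ := exp_facts hp hl20 hy
        have : 0 ≤ exp (p * y) - l * exp (2 * y) := by rw [h1]; nlinarith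
        have := hpos y
        positivity)
    obtain ⟨y, hy, hyeq⟩ := exists_hasDerivAt_eq_slope (hh p l 0) (hh p l 1)
      (show x - η < x by linarith) (hh_cont1 hp l 0).continuousOn (fun y _ => hh_deriv hp l 0 y)
    have h1 := hm (show y ∈ Ici X₀ by simp; linarith [hy.1]) (show x ∈ Ici X₀ by simp; linarith)
      hy.2.le
    simp only at h1
    have h2 : -hh p l 1 x ≤ -hh p l 1 y := by
      have h3 : exp (2 * y) ≤ exp (2 * x) := by rw [exp_le_exp]; linarith [hy.2]
      have h4 := exp_pos (2 * y)
      have h5 := hneg y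
      have h6 := exp_pos (2 * x)
      by_contra hcon
      push Not at hcon
      nlinarith
    have h7 : -hh p l 1 y ≤ hh p l 0 (x - η) / η := by
      rw [hyeq, sub_sub_cancel, le_div_iff₀ hηpos, neg_mul, div_mul_cancel₀ _ hηpos.ne']
      linarith [hpos x]
    have h8 := h0 (x - η) (by linarith)
    rw [hshift] at h8
    calc -hh p l 1 x ≤ hh p l 0 (x - η) / η := h2.trans h7
      _ ≤ (C₀ * exp (-(4 / 5 * exp (p / 2 * x) / p))) / η := by gcongr
      _ = C₀ * (1 / η) * exp (-(4 / 5) * (exp (p / 2 * x) / p)) := by ring_nf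
      _ ≤ _ := by gcongr; linarith

/-- The algebra behind `arc_energy`, with `a = T`, `b = T'`, `u = e^{ipφ}`, `v = e^{2iφ}`,
`k = l e^{2x}`: the terms containing `a` and `b` cancel to leading order, so the energy grows at a
rate proportional to `‖u - 1‖`. -/
lemma arc_alg (a b u v : ℂ) (s P k : ℝ) (hs : 0 < s) (hu : ‖u - 1‖ ≤ P) (hv : ‖v‖ = 1)
    (hk0 : 0 ≤ k) (hk : k ≤ s ^ 2 / 20) :
    s ^ 2 * (2 * inner ℝ a (Complex.I * b)) +
      2 * inner ℝ b (Complex.I * (-2 * b + (s ^ 2 * u - k * v) * a)) ≤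
      s * (P + 1 / 20) * (s ^ 2 * ‖a‖ ^ 2 + ‖b‖ ^ 2) := by
  have hP : 0 ≤ P := (norm_nonneg _).trans hu
  have key : s ^ 2 * (2 * inner ℝ a (Complex.I * b)) +
      2 * inner ℝ b (Complex.I * (-2 * b + (s ^ 2 * u - k * v) * a)) =
      2 * s ^ 2 * (Complex.I * (u - 1) * a * (starRingEnd ℂ) b).re
        - 2 * k * (Complex.I * v * a * (starRingEnd ℂ) b).re := by
    simp only [Complex.inner, Complex.mul_re, Complex.mul_im, Complex.conj_re, Complex.conj_im,
      Complex.I_re, Complex.I_im, Complex.sub_re, Complex.sub_im, Complex.add_re, Complex.add_im,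
      Complex.one_re, Complex.one_im, Complex.ofReal_re, Complex.ofReal_im, Complex.neg_re,
      Complex.neg_im, Complex.re_ofNat, Complex.im_ofNat, sq]
    ring
  rw [key]
  have h1 : (Complex.I * (u - 1) * a * (starRingEnd ℂ) b).re ≤ P * (‖a‖ * ‖b‖) := by
    refine (Complex.re_le_norm _).trans ?_
    simp only [norm_mul, Complex.norm_I, one_mul, RCLike.norm_conj]
    rw [mul_assoc]; gcongr
  have h2 : -(Complex.I * v * a * (starRingEnd ℂ) b).re ≤ ‖a‖ * ‖b‖ := by
    refine (neg_le_abs _).trans ((Complex.abs_re_le_norm _).trans ?_)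
    simp [hv]
  have h3 : 2 * s * (‖a‖ * ‖b‖) ≤ s ^ 2 * ‖a‖ ^ 2 + ‖b‖ ^ 2 := by
    nlinarith [sq_nonneg (s * ‖a‖ - ‖b‖)]
  have h4 : 0 ≤ ‖a‖ * ‖b‖ := by positivity
  calc _ ≤ 2 * s ^ 2 * (P * (‖a‖ * ‖b‖)) + 2 * k * (‖a‖ * ‖b‖) := by nlinarith
    _ ≤ 2 * s ^ 2 * (P * (‖a‖ * ‖b‖)) + 2 * (s ^ 2 / 20) * (‖a‖ * ‖b‖) := by gcongr
    _ = s * (P + 1 / 20) * (2 * s * (‖a‖ * ‖b‖)) := by ring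
    _ ≤ _ := by gcongr

lemma T_arc_deriv {p : ℝ} (hp : 3 ≤ p) (l : ℝ) (j : ℕ) (x φ : ℝ) :
    HasDerivAt (fun φ : ℝ => T p l j (x + φ * Complex.I))
      (Complex.I * T p l (j + 1) (x + φ * Complex.I)) φ := by
  have h1 : HasDerivAt (fun w : ℂ => (x : ℂ) + w * Complex.I) Complex.I (φ : ℂ) := by
    simpa using ((hasDerivAt_id (φ : ℂ)).mul_const Complex.I).const_add (x : ℂ)
  have h2 := (HasDerivAt.comp (φ : ℂ) (h₂ := T p l j) (T_hasDerivAt hp l j _) h1).comp_ofReal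
  rw [mul_comm] at h2
  exact h2

/-- Growth of the energy `s² ‖T‖² + ‖T'‖²`, `s = e^{px/2}`, along the vertical segment from `x` to
`x + iψ`, which is an arc in the variable `e^z`. The rate at height `φ` is at most
`s (pφ + 1/20)`. -/
lemma arc_energy {p l : ℝ} (hp : 3 ≤ p) (hl0 : 0 ≤ l) (hl20 : l ≤ 20) {x : ℝ} (hx : log 400 ≤ x)
    {ψ : ℝ} (hψ : 0 ≤ ψ) :
    exp (p / 2 * x) ^ 2 * ‖T p l 0 (x + ψ * Complex.I)‖ ^ 2 + ‖T p l 1 (x + ψ * Complex.I)‖ ^ 2 ≤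
    (exp (p / 2 * x) ^ 2 * ‖T p l 0 x‖ ^ 2 + ‖T p l 1 x‖ ^ 2) *
      exp (exp (p / 2 * x) * (p * ψ ^ 2 / 2 + ψ / 20)) := by
  obtain ⟨e1, e2, e3⟩ := exp_facts hp hl20 hx
  set s := exp (p / 2 * x) with hs
  have hspos : 0 < s := exp_pos _
  set E : ℝ → ℝ := fun φ => s ^ 2 * ‖T p l 0 (x + φ * Complex.I)‖ ^ 2
    + ‖T p l 1 (x + φ * Complex.I)‖ ^ 2 with hE
  have hEd : ∀ φ : ℝ, HasDerivAt E (s ^ 2 * (2 * inner ℝ (T p l 0 (x + φ * Complex.I))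
      (Complex.I * T p l 1 (x + φ * Complex.I))) + 2 * inner ℝ (T p l 1 (x + φ * Complex.I))
      (Complex.I * T p l 2 (x + φ * Complex.I))) φ := fun φ =>
    ((T_arc_deriv hp l 0 x φ).norm_sq.const_mul (s ^ 2)).add (T_arc_deriv hp l 1 x φ).norm_sq
  have hgd : ∀ φ : ℝ, HasDerivAt (fun φ : ℝ => -s * (p * φ ^ 2 / 2 + φ / 20)) (-s * (p * φ + 1 / 20)) φ := by
    intro φ
    refine (((((hasDerivAt_id φ).pow 2).const_mul p).div_const 2).add
      ((hasDerivAt_id φ).div_const 20)).const_mul (-s) |>.congr_deriv ?_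
    show -s * (p * (((2 : ℕ) : ℝ) * φ ^ (2 - 1) * 1) / 2 + 1 / 20) = _
    push_cast; ring
  have hanti : AntitoneOn (fun φ => E φ * exp (-s * (p * φ ^ 2 / 2 + φ / 20))) (Ici 0) := by
    refine anti_of (convex_Ici 0) (fun φ => (hEd φ).mul (hgd φ).exp) ?_
    intro φ hφ
    have hφ : 0 ≤ φ := hφ
    set a := T p l 0 (x + φ * Complex.I)
    set b := T p l 1 (x + φ * Complex.I)
    have hT2 : T p l 2 (x + φ * Complex.I) = -2 * b + ((s:ℂ) ^ 2 * Complex.exp (Complex.I * (p * φ : ℝ))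
        - ((l * exp (2 * x) : ℝ) : ℂ) * Complex.exp ((2 * φ : ℝ) * Complex.I)) * a := by
      have h := T_ode hp l (x + φ * Complex.I)
      have h1 : Complex.exp (p * (x + φ * Complex.I)) = (s:ℂ) ^ 2 * Complex.exp (Complex.I * (p * φ : ℝ)) := by
        have : ((s:ℂ)) ^ 2 = Complex.exp ((p * x : ℝ) : ℂ) := by
          rw [← Complex.ofReal_exp, e1]; push_cast; rfl
        rw [this, ← Complex.exp_add]; push_cast; ring_nf
      have h2 : Complex.exp (2 * (x + φ * Complex.I)) = (exp (2 * x) : ℝ) * Complex.exp ((2 * φ : ℝ) * Complex.I) := by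
        rw [Complex.ofReal_exp, ← Complex.exp_add]; push_cast; ring_nf
      rw [h1, h2] at h
      push_cast at h ⊢
      linear_combination h
    rw [hT2]
    have halg := arc_alg a b (Complex.exp (Complex.I * (p * φ : ℝ))) (Complex.exp ((2 * φ : ℝ) * Complex.I))
      s (p * φ) (l * exp (2 * x)) hspos (by
        refine (Real.norm_exp_I_mul_ofReal_sub_one_le).trans ?_
        rw [norm_eq_abs, abs_of_nonneg (by positivity)])
      (Complex.norm_exp_ofReal_mul_I _) (by positivity) e3
    have hEφ : E φ = s ^ 2 * ‖a‖ ^ 2 + ‖b‖ ^ 2 := rfl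
    rw [← hEφ] at halg
    have hexp := exp_pos (-s * (p * φ ^ 2 / 2 + φ / 20))
    nlinarith
  have h := hanti self_mem_Ici hψ hψ
  have hE0 : E 0 = s ^ 2 * ‖T p l 0 x‖ ^ 2 + ‖T p l 1 x‖ ^ 2 := by simp [hE]
  simp only [hE0] at h
  have h5 : exp (-s * (p * 0 ^ 2 / 2 + 0 / 20)) = 1 := by simp
  rw [h5, mul_one, neg_mul, exp_neg, ← div_eq_mul_inv, div_le_iff₀ (exp_pos _)] at h
  exact h

/-- Decay on the line `im z = π/(2p)`, where `e^{pz} = i e^{p re z}`. The energy decays like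
`e^{-(8/5)s/p}` on the real axis and grows along the segment by at most `e^{(7/5)s/p}`, since
`π²/8 + π/40 < 7/5`. -/
lemma arc_decay {p l : ℝ} (hp : 3 ≤ p) (hl0 : 0 ≤ l) (hl20 : l ≤ 20)
    (hpos : ∀ x, 0 < hh p l 0 x) (hneg : ∀ x, hh p l 1 x ≤ 0) :
    ∃ C X, 0 < C ∧ log 400 ≤ X ∧ ∀ x, X ≤ x → ∀ j, j ≤ 1 →
      ‖T p l j (x + (π / (2 * p) : ℝ) * Complex.I)‖ ≤
        C * exp (p / 2 * x) * exp (-(exp (p / 2 * x) / (10 * p))) := by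
  obtain ⟨C, X, hC, hX, h⟩ := real_decay hp hl20 hpos hneg
  refine ⟨2 * C, X, by positivity, hX, fun x hx j hj => ?_⟩
  have hp0 : 0 < p := by linarith
  obtain ⟨h0, h1⟩ := h x hx
  obtain ⟨e1, e2, e3⟩ := exp_facts hp hl20 (hX.trans hx)
  have harc := arc_energy hp hl0 hl20 (hX.trans hx) (ψ := π / (2 * p)) (by positivity)
  have hn : ∀ j, ‖T p l j x‖ = |hh p l j x| := by
    intro j; rw [T_ofReal, Complex.norm_real]; rfl
  rw [hn, hn] at harc
  set s := exp (p / 2 * x)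
  set D := exp (-(4 / 5) * (s / p)) with hD
  have hexp : s * (p * (π / (2 * p)) ^ 2 / 2 + π / (2 * p) / 20) ≤ 7 / 5 * (s / p) := by
    have : s * (p * (π / (2 * p)) ^ 2 / 2 + π / (2 * p) / 20) = (π ^ 2 / 8 + π / 40) * (s / p) := by
      field_simp; ring
    rw [this]
    gcongr
    nlinarith [pi_lt_d2, pi_gt_three]
  have hD2 : D ^ 2 = exp (-(8/5) * (s / p)) := by rw [hD, sq, ← exp_add]; ring_nf
  have hE : s ^ 2 * |hh p l 0 x| ^ 2 + |hh p l 1 x| ^ 2 ≤ 4 * C ^ 2 * s ^ 2 * D ^ 2 := by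
    have h2 : |hh p l 0 x| ^ 2 ≤ (C * D) ^ 2 := by gcongr
    have h3 : |hh p l 1 x| ^ 2 ≤ (C * D) ^ 2 := by gcongr
    have h4 : 1 ≤ s ^ 2 := one_le_pow₀ e2
    have h5 : 0 ≤ (C * D) ^ 2 := by positivity
    calc _ ≤ s ^ 2 * (C * D) ^ 2 + (C * D) ^ 2 := by gcongr
      _ ≤ _ := by nlinarith
  have hfin : s ^ 2 * ‖T p l 0 (x + (π / (2 * p) : ℝ) * Complex.I)‖ ^ 2
      + ‖T p l 1 (x + (π / (2 * p) : ℝ) * Complex.I)‖ ^ 2 ≤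
      (2 * C * s * exp (-(s / (10 * p)))) ^ 2 := by
    refine harc.trans ?_
    calc _ ≤ 4 * C ^ 2 * s ^ 2 * D ^ 2 * exp (7 / 5 * (s / p)) := by gcongr
      _ = 4 * C ^ 2 * s ^ 2 * (exp (-(s / (10 * p))) ^ 2) := by
        rw [hD2, mul_assoc, ← exp_add, sq (exp (-(s / (10 * p)))), ← exp_add]
        congr 2
        field_simp; ring
      _ = _ := by ring
  have h4 : 1 ≤ s ^ 2 := one_le_pow₀ e2
  refine abs_le_of_sq_le_sq' (a := ‖T p l j (x + (π / (2 * p) : ℝ) * Complex.I)‖) ?_ (by positivity) |>.2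
  refine le_trans ?_ hfin
  interval_cases j
  · nlinarith [sq_nonneg ‖T p l 0 (x + (π / (2 * p) : ℝ) * Complex.I)‖, sq_nonneg ‖T p l 1 (x + (π / (2 * p) : ℝ) * Complex.I)‖]
  · have : 0 ≤ s ^ 2 * ‖T p l 0 (x + (π / (2 * p) : ℝ) * Complex.I)‖ ^ 2 := by positivity
    linarith

/-- Decay of `T`, `T'`, `T''` on the rotated line, faster than any power of `e^{px/2}`. -/
lemma arc_poly {p l : ℝ} (hp : 3 ≤ p) (hl0 : 0 ≤ l) (hl20 : l ≤ 20)
    (hpos : ∀ x, 0 < hh p l 0 x) (hneg : ∀ x, hh p l 1 x ≤ 0) (N : ℕ) :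
    ∃ C, ∀ x, 0 ≤ x → ∀ j, j ≤ 2 →
      exp (p / 2 * x) ^ N * ‖T p l j (x + (π / (2 * p) : ℝ) * Complex.I)‖ ≤ C := by
  have hp0 : 0 < p := by linarith
  obtain ⟨C, X, hC, hX, h⟩ := arc_decay hp hl0 hl20 hpos hneg
  have hcont : ∀ j, Continuous (fun x : ℝ => exp (p / 2 * x) ^ N *
      ‖T p l j (x + (π / (2 * p) : ℝ) * Complex.I)‖) := by
    intro j
    have : Continuous (fun x : ℝ => T p l j (x + (π / (2 * p) : ℝ) * Complex.I)) :=
      (T_cont hp j).comp (f := fun x : ℝ => (l, (x + (π / (2 * p) : ℝ) * Complex.I : ℂ)))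
        (by fun_prop)
    fun_prop
  have hcpt : ∃ K, ∀ x ∈ Icc 0 X, ∀ j, j ≤ 2 →
      exp (p / 2 * x) ^ N * ‖T p l j (x + (π / (2 * p) : ℝ) * Complex.I)‖ ≤ K := by
    choose K hK using fun j => (isCompact_Icc (a := (0:ℝ)) (b := X)).exists_bound_of_continuousOn
      (hcont j).continuousOn
    refine ⟨max (K 0) (max (K 1) (K 2)), fun x hx j hj => ?_⟩
    have := (le_abs_self _).trans (hK j x hx)
    interval_cases j
    · exact this.trans (le_max_left _ _)
    · exact this.trans ((le_max_left _ _).trans (le_max_right _ _))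
    · exact this.trans ((le_max_right _ _).trans (le_max_right _ _))
  obtain ⟨K, hK⟩ := hcpt
  have hlow : ∀ N : ℕ, ∃ K, ∀ x, X ≤ x → ∀ j, j ≤ 1 →
      exp (p / 2 * x) ^ N * ‖T p l j (x + (π / (2 * p) : ℝ) * Complex.I)‖ ≤ K := by
    intro N
    refine ⟨C * ((N + 1).factorial * (10 * p) ^ (N + 1)), fun x hx j hj => ?_⟩
    have h1 := h x hx j hj
    set s := exp (p / 2 * x)
    have hs : 0 < s := exp_pos _
    have h2 := Real.pow_div_factorial_le_exp (s / (10 * p)) (by positivity) (N + 1)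
    rw [div_pow, div_div, div_le_iff₀ (by positivity)] at h2
    calc _ ≤ s ^ N * (C * s * exp (-(s / (10 * p)))) := by gcongr
      _ = C * (s ^ (N + 1) * exp (-(s / (10 * p)))) := by ring
      _ ≤ C * (exp (s / (10 * p)) * ((10 * p) ^ (N + 1) * (N + 1).factorial)
            * exp (-(s / (10 * p)))) := by gcongr
      _ = C * ((N + 1).factorial * (10 * p) ^ (N + 1)) * (exp (s / (10 * p)) * exp (-(s / (10 * p)))) := by
        ring
      _ = _ := by rw [← exp_add]; simp
  obtain ⟨K1, hK1⟩ := hlow N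
  obtain ⟨K2, hK2⟩ := hlow (N + 2)
  refine ⟨max K (max K1 (2 * K1 + 2 * K2)), fun x hx j hj => ?_⟩
  rcases le_total x X with hxX | hxX
  · exact (hK x ⟨hx, hxX⟩ j hj).trans (le_max_left _ _)
  · refine le_trans ?_ (le_max_right _ _)
    rcases Nat.lt_or_ge j 2 with hj1 | hj1
    · exact (hK1 x hxX j (by omega)).trans (le_max_left _ _)
    · obtain rfl : j = 2 := by omega
      refine le_trans ?_ (le_max_right _ _)
      have hode := T_ode hp l (x + (π / (2 * p) : ℝ) * Complex.I)
      obtain ⟨e1, e2, e3⟩ := exp_facts hp hl20 (hX.trans hxX)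
      have k1 := hK1 x hxX 1 (by norm_num)
      have k2 := hK2 x hxX 0 (by norm_num)
      have hV : ‖Complex.exp (p * (x + (π / (2 * p) : ℝ) * Complex.I))
          - l * Complex.exp (2 * (x + (π / (2 * p) : ℝ) * Complex.I))‖ ≤ 2 * exp (p / 2 * x) ^ 2 := by
        refine (norm_sub_le _ _).trans ?_
        rw [norm_mul, Complex.norm_exp, Complex.norm_exp, Complex.norm_real, norm_of_nonneg hl0]
        have r1 : (p * (x + (π / (2 * p) : ℝ) * Complex.I) : ℂ).re = p * x := by
          generalize π / (2 * p) = ψ; simp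
        have r2 : (2 * (x + (π / (2 * p) : ℝ) * Complex.I) : ℂ).re = 2 * x := by
          generalize π / (2 * p) = ψ; simp
        rw [r1, r2, e1]
        nlinarith [sq_nonneg (exp (p / 2 * x))]
      set s := exp (p / 2 * x)
      have hT2 : ‖T p l 2 (x + (π / (2 * p) : ℝ) * Complex.I)‖ ≤
          2 * s ^ 2 * ‖T p l 0 (x + (π / (2 * p) : ℝ) * Complex.I)‖
          + 2 * ‖T p l 1 (x + (π / (2 * p) : ℝ) * Complex.I)‖ := by
        rw [eq_sub_of_add_eq hode]
        refine (norm_sub_le _ _).trans ?_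
        rw [norm_mul, norm_mul]
        gcongr
        simp
      calc _ ≤ s ^ N * (2 * s ^ 2 * ‖T p l 0 (x + (π / (2 * p) : ℝ) * Complex.I)‖
          + 2 * ‖T p l 1 (x + (π / (2 * p) : ℝ) * Complex.I)‖) := by gcongr
        _ = 2 * (s ^ N * ‖T p l 1 (x + (π / (2 * p) : ℝ) * Complex.I)‖) +
          2 * (s ^ (N + 2) * ‖T p l 0 (x + (π / (2 * p) : ℝ) * Complex.I)‖) := by ring
        _ ≤ _ := by gcongr

end CircSharp

/-! ### The radial profile -/

namespace CircSharp

/-- `T p l j` on the rotated line, at `½ log w + i π/(2p)`, as a function of the squared radius `w`. -/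
def ray (p l : ℝ) (j : ℕ) (w : ℝ) : ℂ :=
  T p l j ((1 / 2 * log w : ℝ) + (π / (2 * p) : ℝ) * Complex.I)

lemma ray_deriv {p : ℝ} (hp : 3 ≤ p) (l : ℝ) (j : ℕ) {w : ℝ} (hw : 0 < w) :
    HasDerivAt (ray p l j) (ray p l (j + 1) w / (2 * w)) w := by
  have h1 : HasDerivAt (fun w : ℝ => ((1 / 2 * log w : ℝ) : ℂ) + (π / (2 * p) : ℝ) * Complex.I)
      ((1 / 2 * w⁻¹ : ℝ) : ℂ) w :=
    (((hasDerivAt_log hw.ne').const_mul (1 / 2)).ofReal_comp).add_const _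
  have h2 := (T_hasDerivAt hp l j
    ((1 / 2 * log w : ℝ) + (π / (2 * p) : ℝ) * Complex.I)).comp w h1
  refine h2.congr_deriv ?_
  unfold ray
  push_cast
  field_simp

lemma ray_re (x ψ : ℝ) : ((x : ℂ) + ψ * Complex.I).re = x := by simp

lemma exp_half_log {w : ℝ} (hw : 0 < w) : exp (2 * (1 / 2 * log w)) = w := by
  rw [← mul_assoc]; norm_num [exp_log hw]

/-- The weight `w` in the bounds for the derivatives comes from their `O(e^{2 re z})` behaviour at `-∞`
and makes the radial profile regular at the origin. -/
lemma ray_bound {p l : ℝ} (hp : 3 ≤ p) (hl0 : 0 ≤ l) (hl20 : l ≤ 20)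
    (hpos : ∀ x, 0 < hh p l 0 x) (hneg : ∀ x, hh p l 1 x ≤ 0) (N : ℕ) :
    ∃ K, ∀ w, 0 < w → (1 + w) ^ N * ‖ray p l 0 w‖ ≤ K ∧ (1 + w) ^ N * ‖ray p l 1 w‖ ≤ K * w ∧
      (1 + w) ^ N * ‖ray p l 2 w‖ ≤ K * w := by
  obtain ⟨C, hC⟩ := arc_poly hp hl0 hl20 hpos hneg (2 * N)
  have hlM : |l| ≤ 20 := by rw [abs_of_nonneg hl0]; exact hl20
  have hB := bC_nonneg p (M := 20) (by norm_num)
  set B := bC p 20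
  have hC0 : 0 ≤ C := le_trans (by positivity) (hC 0 le_rfl 0 (by norm_num))
  refine ⟨2 ^ N * (1 + B + C), fun w hw => ?_⟩
  have hew := exp_half_log hw
  rcases le_total w 1 with h1 | h1
  · have hre : ((1 / 2 * log w : ℝ) + (π / (2 * p) : ℝ) * Complex.I : ℂ).re = 1 / 2 * log w :=
      ray_re _ _
    have hle : ((1 / 2 * log w : ℝ) + (π / (2 * p) : ℝ) * Complex.I : ℂ).re ≤ 0 := by
      rw [hre]; have := log_nonpos hw.le h1; linarith
    have hpow : (1 + w) ^ N ≤ 2 ^ N := by gcongr; linarith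
    have b0 := T0_bound_neg hp hlM hle
    have b1 := T_bound_neg hp hlM (one_ne_zero) (by norm_num) hle
    have b2 := T_bound_neg hp hlM (two_ne_zero) le_rfl hle
    rw [hre, hew] at b0 b1 b2
    have c0 : ‖ray p l 0 w‖ ≤ 1 + B + C := by
      have h := norm_add_le (ray p l 0 w - 1) 1
      rw [sub_add_cancel, norm_one] at h
      have : ‖ray p l 0 w - 1‖ ≤ B * w := b0
      nlinarith
    have c1 : ‖ray p l 1 w‖ ≤ (1 + B + C) * w := le_trans b1 (by gcongr; linarith)
    have c2 : ‖ray p l 2 w‖ ≤ (1 + B + C) * w := le_trans b2 (by gcongr; linarith)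
    refine ⟨by gcongr, ?_, ?_⟩
    · rw [mul_assoc]; gcongr
    · rw [mul_assoc]; gcongr
  · have hx : 0 ≤ 1 / 2 * log w := by have := log_nonneg h1; linarith
    have hpow : (1 + w) ^ N ≤ 2 ^ N * exp (p / 2 * (1 / 2 * log w)) ^ (2 * N) := by
      rw [pow_mul, ← mul_pow]
      gcongr
      have : w ≤ exp (p / 2 * (1 / 2 * log w)) ^ 2 := by
        nth_rewrite 1 [← hew]
        rw [← exp_nat_mul, exp_le_exp]
        push_cast
        nlinarith
      linarith
    have key : ∀ j ≤ 2, (1 + w) ^ N * ‖ray p l j w‖ ≤ 2 ^ N * (1 + B + C) := by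
      intro j hj
      have h := hC _ hx j hj
      calc _ ≤ 2 ^ N * exp (p / 2 * (1 / 2 * log w)) ^ (2 * N) * ‖ray p l j w‖ := by gcongr
        _ = 2 ^ N * (exp (p / 2 * (1 / 2 * log w)) ^ (2 * N) * ‖ray p l j w‖) := by ring
        _ ≤ 2 ^ N * C := by gcongr; exact h
        _ ≤ _ := by gcongr; linarith
    have hK : 2 ^ N * (1 + B + C) ≤ 2 ^ N * (1 + B + C) * w := le_mul_of_one_le_right (by positivity) h1
    exact ⟨key 0 (by norm_num), (key 1 (by norm_num)).trans hK, (key 2 le_rfl).trans hK⟩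

/-- A radial profile: `(x + iy) G0(x² + y²)` is to satisfy `ΔU = (i r^q - μ) U`. The functions are in
the variable `w = x² + y²`, with `G1 = 2 G0'` and `G2 = 2 G1'` for `w > 0`; the values of `G1` and
`G2` at `w = 0` are set to `0` and carry no meaning. `G2` may be unbounded near `0`, so only `w G2`
is controlled. -/
structure Profile (q : ℝ) (μ : ℂ) (G0 G1 G2 : ℝ → ℂ) : Prop where
  zero : G0 0 = 1 ∧ G1 0 = 0 ∧ G2 0 = 0
  cont0 : ContinuousOn G0 (Ici 0)
  d0 : ∀ w, 0 < w → HasDerivAt G0 (G1 w / 2) w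
  d1 : ∀ w, 0 < w → HasDerivAt G1 (G2 w / 2) w
  cont2 : ContinuousOn G2 (Ioi 0)
  ode : ∀ w, 0 < w → w * G2 w + 4 * G1 w = (Complex.I * (w ^ (q / 2) : ℝ) - μ) * G0 w
  decay : ∀ N : ℕ, ∃ C, 0 ≤ C ∧ ∀ w, 0 ≤ w → (1 + w) ^ N * ‖G0 w‖ ≤ C ∧ (1 + w) ^ N * ‖G1 w‖ ≤ C ∧
    (1 + w) ^ N * (w * ‖G2 w‖) ≤ C

/-- The ground state rotated by the angle `π/(2p)`, `p = q + 2`, is a profile with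
`μ = l e^{iπ/p}`. -/
lemma exists_profile {q : ℝ} (hq : 1 ≤ q) : ∃ μ G0 G1 G2, Profile q μ G0 G1 G2 := by
  set p := q + 2 with hpq
  have hp : 3 ≤ p := by linarith
  have hp0 : p ≠ 0 := by linarith
  obtain ⟨l, hl0, hl20, hpos, hneg⟩ := exists_ground hp
  have hlM : |l| ≤ 20 := by rw [abs_of_nonneg hl0]; exact hl20
  set G0 : ℝ → ℂ := fun w => if w = 0 then 1 else ray p l 0 w with hG0
  have hG0e : ∀ w, 0 < w → G0 w = ray p l 0 w := fun w hw => if_neg hw.ne'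
  have hev : ∀ w, 0 < w → G0 =ᶠ[nhds w] ray p l 0 := fun w hw => by
    filter_upwards [lt_mem_nhds hw] with v hv using hG0e v hv
  have hd0 : ∀ w, 0 < w → HasDerivAt G0 (ray p l 1 w / w / 2) w := fun w hw => by
    refine ((ray_deriv hp l 0 hw).congr_of_eventuallyEq (hev w hw)).congr_deriv ?_
    rw [div_div, mul_comm]
  have hcast : ∀ w : ℝ, HasDerivAt (fun w : ℝ => (w : ℂ)) 1 w := fun w =>
    Complex.ofRealCLM.hasDerivAt
  refine ⟨l * Complex.exp (2 * ((π / (2 * p) : ℝ) * Complex.I)), G0, fun w => ray p l 1 w / w,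
    fun w => (ray p l 2 w - 2 * ray p l 1 w) / w ^ 2, ⟨by simp [hG0], by simp, by simp⟩,
    ?_, hd0, ?_, ?_, ?_, ?_⟩
  · intro w hw
    rcases (show (0:ℝ) ≤ w from hw).eq_or_lt with rfl | hw
    · have hlim : Tendsto (fun w : ℝ => bC p 20 * w) (nhdsWithin 0 (Ici 0)) (nhds 0) := by
        have : Continuous (fun w : ℝ => bC p 20 * w) := by fun_prop
        have h := this.tendsto 0
        rw [mul_zero] at h
        exact h.mono_left nhdsWithin_le_nhds
      have h00 : G0 0 = 1 := by simp [hG0]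
      unfold ContinuousWithinAt
      rw [h00, tendsto_iff_norm_sub_tendsto_zero]
      refine squeeze_zero' (Eventually.of_forall fun _ => norm_nonneg _) ?_ hlim
      have hm : Iio (1:ℝ) ∈ nhdsWithin (0:ℝ) (Ici 0) :=
        nhdsWithin_le_nhds (Iio_mem_nhds one_pos)
      filter_upwards [self_mem_nhdsWithin, hm] with v hv hv1
      rcases (show (0:ℝ) ≤ v from hv).eq_or_lt with rfl | hv
      · simp [hG0]
      · rw [hG0e v hv]
        have hle : ((1 / 2 * log v : ℝ) + (π / (2 * p) : ℝ) * Complex.I : ℂ).re ≤ 0 := by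
          rw [ray_re]; have := log_nonpos hv.le (le_of_lt hv1); linarith
        have b0 := T0_bound_neg hp hlM hle
        rwa [ray_re, exp_half_log hv] at b0
    · exact (hd0 w hw).continuousAt.continuousWithinAt
  · intro w hw
    have hwc : (w : ℂ) ≠ 0 := by exact_mod_cast hw.ne'
    refine ((ray_deriv hp l 1 hw).div (hcast w) hwc).congr_deriv ?_
    field_simp
  · intro w hw
    have hw : 0 < w := hw
    have hwc : (w : ℂ) ^ 2 ≠ 0 := pow_ne_zero _ (by exact_mod_cast hw.ne')
    have c1 := (ray_deriv hp l 1 hw).continuousAt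
    have c2 := (ray_deriv hp l 2 hw).continuousAt
    exact ((c2.sub (c1.const_mul 2)).div ((hcast w).continuousAt.pow 2) hwc).continuousWithinAt
  · intro w hw
    have hwc : (w : ℂ) ≠ 0 := by exact_mod_cast hw.ne'
    rw [hG0e w hw]
    have hode := T_ode hp l ((1 / 2 * log w : ℝ) + (π / (2 * p) : ℝ) * Complex.I)
    have e1 : Complex.exp (p * ((1 / 2 * log w : ℝ) + (π / (2 * p) : ℝ) * Complex.I)) =
        Complex.I * ((w ^ (q / 2) : ℝ) * w) := by
      have h1 : (p : ℂ) * ((1 / 2 * log w : ℝ) + (π / (2 * p) : ℝ) * Complex.I) =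
          ((log w * (q / 2 + 1) : ℝ) : ℂ) + (π / 2 : ℂ) * Complex.I := by
        have : (p : ℂ) ≠ 0 := by exact_mod_cast hp0
        push_cast
        have h2 : (p : ℂ) = q + 2 := by rw [hpq]; push_cast; rfl
        field_simp
        rw [h2]; ring
      rw [h1, Complex.exp_add, Complex.exp_pi_div_two_mul_I, ← Complex.ofReal_exp, mul_comm,
        ← rpow_def_of_pos hw, rpow_add_one hw.ne']
      push_cast; rfl
    have e2 : Complex.exp (2 * ((1 / 2 * log w : ℝ) + (π / (2 * p) : ℝ) * Complex.I)) =
        w * Complex.exp (2 * ((π / (2 * p) : ℝ) * Complex.I)) := by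
      rw [mul_add, Complex.exp_add]
      congr 1
      rw [← Complex.ofReal_ofNat, ← Complex.ofReal_mul, ← Complex.ofReal_exp, exp_half_log hw]
    rw [e1, e2] at hode
    change ray p l 2 w + 2 * ray p l 1 w = _ * ray p l 0 w at hode
    generalize Complex.exp (2 * ((π / (2 * p) : ℝ) * Complex.I)) = c at hode ⊢
    field_simp
    linear_combination hode
  · intro N
    obtain ⟨K, hK⟩ := ray_bound hp hl0 hl20 hpos hneg N
    have hK0 : 0 ≤ K := le_trans (by positivity) (hK 1 one_pos).1
    refine ⟨1 + 3 * K, by linarith, fun w hw => ?_⟩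
    rcases hw.eq_or_lt with rfl | hw
    · have hC : (0:ℝ) ≤ 1 + 3 * K := by linarith
      refine ⟨?_, by simpa using hC, by simpa using hC⟩
      simpa [hG0] using hK0
    · obtain ⟨k0, k1, k2⟩ := hK w hw
      rw [hG0e w hw]
      have n1 : ‖ray p l 1 w / w‖ = ‖ray p l 1 w‖ / w := by
        rw [norm_div, Complex.norm_real, norm_of_nonneg hw.le]
      have n2 : w * ‖(ray p l 2 w - 2 * ray p l 1 w) / w ^ 2‖ ≤
          (‖ray p l 2 w‖ + 2 * ‖ray p l 1 w‖) / w := by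
        rw [norm_div, norm_pow, Complex.norm_real, norm_of_nonneg hw.le]
        have h := norm_sub_le (ray p l 2 w) (2 * ray p l 1 w)
        rw [norm_mul, Complex.norm_ofNat] at h
        calc w * (‖ray p l 2 w - 2 * ray p l 1 w‖ / w ^ 2) = ‖ray p l 2 w - 2 * ray p l 1 w‖ / w := by
              field_simp
          _ ≤ _ := by gcongr
      refine ⟨by linarith, ?_, ?_⟩
      · rw [n1, ← mul_div_assoc, div_le_iff₀ hw]
        nlinarith
      · refine (mul_le_mul_of_nonneg_left n2 (by positivity)).trans ?_
        rw [← mul_div_assoc, div_le_iff₀ hw]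
        nlinarith

end CircSharp

/-! ### The planar eigenfunction -/

namespace CircSharp

/-- Products of a continuous function with a radial function continuous off the origin are continuous
if they are dominated by a continuous function vanishing at the origin. -/
lemma radial_cont {A : ℝ × ℝ → ℂ} (hA : Continuous A) {H : ℝ → ℂ} (hH : ContinuousOn H (Ioi 0))
    {B : ℝ × ℝ → ℝ} (hB : Continuous B) (hB0 : B 0 = 0)
    (hle : ∀ v, ‖A v * H (v.1 ^ 2 + v.2 ^ 2)‖ ≤ B v) :
    Continuous (fun v : ℝ × ℝ => A v * H (v.1 ^ 2 + v.2 ^ 2)) := by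
  rw [continuous_iff_continuousAt]
  intro v
  by_cases hv : v = 0
  · subst hv
    have h0 : A 0 * H ((0 : ℝ × ℝ).1 ^ 2 + (0 : ℝ × ℝ).2 ^ 2) = 0 := by
      have := hle 0
      rw [hB0] at this
      exact norm_le_zero_iff.mp this
    unfold ContinuousAt
    simp only [h0]
    have := hB.tendsto 0
    rw [hB0] at this
    exact squeeze_zero_norm hle this
  · have hw : 0 < v.1 ^ 2 + v.2 ^ 2 := by
      by_contra hcon
      have h1 : v.1 = 0 := by nlinarith [sq_nonneg v.1, sq_nonneg v.2]
      have h2 : v.2 = 0 := by nlinarith [sq_nonneg v.1, sq_nonneg v.2]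
      exact hv (Prod.ext h1 h2)
    have hc : ContinuousAt (fun v : ℝ × ℝ => v.1 ^ 2 + v.2 ^ 2) v := by fun_prop
    exact hA.continuousAt.mul
      (ContinuousAt.comp (g := H) (hH.continuousAt (Ioi_mem_nhds hw)) hc)

variable {q : ℝ} {μ : ℂ} {G0 G1 G2 : ℝ → ℂ}

/-- The function `(αa + βb) G0(a² + b²)`. The choices `(α, β) = (1, i)` and `(i, 1)` describe the
eigenfunction with the derivative taken in `x` and in `y` respectively. -/
def V0 (G0 : ℝ → ℂ) (α β : ℂ) (a b : ℝ) : ℂ := (α * a + β * b) * G0 (a ^ 2 + b ^ 2)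

/-- The derivative of `V0` in `a`. -/
def V1 (G0 G1 : ℝ → ℂ) (α β : ℂ) (a b : ℝ) : ℂ :=
  α * G0 (a ^ 2 + b ^ 2) + (α * a + β * b) * a * G1 (a ^ 2 + b ^ 2)

/-- The second derivative of `V0` in `a`; at the origin every term vanishes. -/
def V2 (G1 G2 : ℝ → ℂ) (α β : ℂ) (a b : ℝ) : ℂ :=
  (2 * α * a + (α * a + β * b)) * G1 (a ^ 2 + b ^ 2)
    + (α * a + β * b) * a ^ 2 * G2 (a ^ 2 + b ^ 2)

lemma G0_comp_cont (h : Profile q μ G0 G1 G2) :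
    Continuous (fun v : ℝ × ℝ => G0 (v.1 ^ 2 + v.2 ^ 2)) :=
  h.cont0.comp_continuous (by fun_prop) (fun v => by simp only [mem_Ici]; positivity)

lemma V0_cont (h : Profile q μ G0 G1 G2) (α β : ℂ) :
    Continuous (fun v : ℝ × ℝ => V0 G0 α β v.1 v.2) := by
  have := G0_comp_cont h
  unfold V0
  exact Continuous.mul (by fun_prop) this

lemma Profile.cont1 (h : Profile q μ G0 G1 G2) : ContinuousOn G1 (Ioi 0) :=
  fun w hw => (h.d1 w hw).continuousAt.continuousWithinAt

lemma V1_cont (h : Profile q μ G0 G1 G2) (α β : ℂ) :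
    Continuous (fun v : ℝ × ℝ => V1 G0 G1 α β v.1 v.2) := by
  obtain ⟨C, hC, hd⟩ := h.decay 0
  refine ((G0_comp_cont h).const_mul α).add ?_
  refine radial_cont (A := fun v => (α * v.1 + β * v.2) * v.1)
    (B := fun v => ‖(α * v.1 + β * v.2) * v.1‖ * C) (by fun_prop) h.cont1 (by fun_prop) (by simp)
    (fun v => ?_)
  rw [norm_mul]
  gcongr
  simpa using (hd (v.1 ^ 2 + v.2 ^ 2) (by positivity)).2.1

lemma V2_cont (h : Profile q μ G0 G1 G2) (α β : ℂ) :
    Continuous (fun v : ℝ × ℝ => V2 G1 G2 α β v.1 v.2) := by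
  obtain ⟨C, hC, hd⟩ := h.decay 0
  refine Continuous.add ?_ ?_
  · refine radial_cont (A := fun v => 2 * α * v.1 + (α * v.1 + β * v.2))
      (B := fun v => ‖2 * α * v.1 + (α * v.1 + β * v.2)‖ * C) (by fun_prop) h.cont1 (by fun_prop)
      (by simp) (fun v => ?_)
    rw [norm_mul]
    gcongr
    simpa using (hd (v.1 ^ 2 + v.2 ^ 2) (by positivity)).2.1
  · refine radial_cont (A := fun v => (α * v.1 + β * v.2) * v.1 ^ 2)
      (B := fun v => ‖α * v.1 + β * v.2‖ * C) (by fun_prop) h.cont2 (by fun_prop)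
      (by simp) (fun v => ?_)
    rw [norm_mul, norm_mul, mul_assoc]
    gcongr
    have h2 := (hd (v.1 ^ 2 + v.2 ^ 2) (by positivity)).2.2
    rw [pow_zero, one_mul] at h2
    refine le_trans ?_ h2
    gcongr
    rw [norm_pow, Complex.norm_real, norm_eq_abs, sq_abs]
    linarith [sq_nonneg v.2]

lemma lin_deriv (α β : ℂ) (a b : ℝ) : HasDerivAt (fun a : ℝ => α * (a : ℂ) + β * b) α a := by
  have : HasDerivAt (fun w : ℝ => (w : ℂ)) 1 a := Complex.ofRealCLM.hasDerivAt
  simpa using (this.const_mul α).add_const (β * (b : ℂ))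

lemma sq_deriv (a b : ℝ) : HasDerivAt (fun a : ℝ => a ^ 2 + b ^ 2) (2 * a) a := by
  simpa using ((hasDerivAt_id a).pow 2).add_const (b ^ 2)

/-- A continuous function whose derivative off the origin extends continuously is differentiable at
the origin as well. -/
lemma deriv_of_off {F F' : ℝ → ℝ → ℂ} (hF : Continuous (fun v : ℝ × ℝ => F v.1 v.2))
    (hF' : Continuous (fun v : ℝ × ℝ => F' v.1 v.2))
    (hd : ∀ a b, 0 < a ^ 2 + b ^ 2 → HasDerivAt (fun a => F a b) (F' a b) a) (a b : ℝ) :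
    HasDerivAt (fun a => F a b) (F' a b) a := by
  refine hasDerivAt_of_hasDerivAt_of_ne' (g := fun a => F' a b) (x := 0) (fun y hy => hd y b (by positivity))
    ?_ ?_ a
  · exact (hF.comp (by fun_prop : Continuous fun a : ℝ => (a, b))).continuousAt
  · exact (hF'.comp (by fun_prop : Continuous fun a : ℝ => (a, b))).continuousAt

lemma V0_deriv (h : Profile q μ G0 G1 G2) (α β : ℂ) (a b : ℝ) :
    HasDerivAt (fun a => V0 G0 α β a b) (V1 G0 G1 α β a b) a := by
  refine deriv_of_off (V0_cont h α β) (V1_cont h α β) (fun a b hw => ?_) a b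
  refine ((lin_deriv α β a b).mul ((h.d0 _ hw).scomp a (sq_deriv a b))).congr_deriv ?_
  unfold V1
  simp only [Complex.real_smul, Function.comp]
  push_cast
  ring

lemma V1_deriv (h : Profile q μ G0 G1 G2) (α β : ℂ) (a b : ℝ) :
    HasDerivAt (fun a => V1 G0 G1 α β a b) (V2 G1 G2 α β a b) a := by
  refine deriv_of_off (V1_cont h α β) (V2_cont h α β) (fun a b hw => ?_) a b
  have hc : HasDerivAt (fun w : ℝ => (w : ℂ)) 1 a := Complex.ofRealCLM.hasDerivAt
  refine ((((h.d0 _ hw).scomp a (sq_deriv a b)).const_mul α).add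
    (((lin_deriv α β a b).mul hc).mul ((h.d1 _ hw).scomp a (sq_deriv a b)))).congr_deriv ?_
  unfold V2
  simp only [Complex.real_smul, Function.comp, Pi.mul_apply]
  push_cast
  ring

/-- Rapid decay for complex-valued functions on the plane. -/
def RD (F : ℝ → ℝ → ℂ) : Prop :=
  ∀ k : ℕ, ∃ C : ℝ, ∀ a b : ℝ, (1 + a ^ 2 + b ^ 2) ^ k * ‖F a b‖ ≤ C

lemma lin_bound (α β : ℂ) (a b : ℝ) :
    ‖α * a + β * b‖ ≤ (‖α‖ + ‖β‖) * (1 + (a ^ 2 + b ^ 2)) := by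
  refine (norm_add_le _ _).trans ?_
  rw [norm_mul, norm_mul, Complex.norm_real, Complex.norm_real, norm_eq_abs, norm_eq_abs]
  have h1 : |a| ≤ 1 + (a ^ 2 + b ^ 2) := by
    rw [← sq_abs a]; nlinarith [sq_nonneg (|a| - 1), sq_nonneg b]
  have h2 : |b| ≤ 1 + (a ^ 2 + b ^ 2) := by
    rw [← sq_abs b]; nlinarith [sq_nonneg (|b| - 1), sq_nonneg a]
  rw [add_mul]
  gcongr

lemma abs_bound (a b : ℝ) : ‖(a : ℂ)‖ ≤ 1 + (a ^ 2 + b ^ 2) := by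
  rw [Complex.norm_real, norm_eq_abs, ← sq_abs a]
  nlinarith [sq_nonneg (|a| - 1), sq_nonneg b]

lemma V0_rd (h : Profile q μ G0 G1 G2) (α β : ℂ) : RD (V0 G0 α β) := by
  intro k
  obtain ⟨C, hC, hd⟩ := h.decay (k + 1)
  refine ⟨(‖α‖ + ‖β‖) * C, fun a b => ?_⟩
  obtain ⟨h0, -, -⟩ := hd (a ^ 2 + b ^ 2) (by positivity)
  have hl := lin_bound α β a b
  unfold V0
  rw [add_assoc, norm_mul]
  calc _ ≤ (1 + (a ^ 2 + b ^ 2)) ^ k * ((‖α‖ + ‖β‖) * (1 + (a ^ 2 + b ^ 2)) * ‖G0 (a ^ 2 + b ^ 2)‖) := by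
        gcongr
    _ = (‖α‖ + ‖β‖) * ((1 + (a ^ 2 + b ^ 2)) ^ (k + 1) * ‖G0 (a ^ 2 + b ^ 2)‖) := by ring
    _ ≤ _ := by gcongr

lemma V1_rd (h : Profile q μ G0 G1 G2) (α β : ℂ) : RD (V1 G0 G1 α β) := by
  intro k
  obtain ⟨C, hC, hd⟩ := h.decay k
  obtain ⟨C', hC', hd'⟩ := h.decay (k + 2)
  refine ⟨‖α‖ * C + (‖α‖ + ‖β‖) * C', fun a b => ?_⟩
  obtain ⟨h0, -, -⟩ := hd (a ^ 2 + b ^ 2) (by positivity)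
  obtain ⟨-, h1, -⟩ := hd' (a ^ 2 + b ^ 2) (by positivity)
  have hl := lin_bound α β a b
  have ha := abs_bound a b
  have hn : ‖V1 G0 G1 α β a b‖ ≤ ‖α‖ * ‖G0 (a ^ 2 + b ^ 2)‖ +
      ((‖α‖ + ‖β‖) * (1 + (a ^ 2 + b ^ 2))) * (1 + (a ^ 2 + b ^ 2)) * ‖G1 (a ^ 2 + b ^ 2)‖ := by
    unfold V1
    refine (norm_add_le _ _).trans ?_
    rw [norm_mul, norm_mul, norm_mul]
    gcongr
  rw [add_assoc]
  set w := a ^ 2 + b ^ 2 with hw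
  have hw0 : 0 ≤ w := by positivity
  calc _ ≤ (1 + w) ^ k * (‖α‖ * ‖G0 w‖ + ((‖α‖ + ‖β‖) * (1 + w)) * (1 + w) * ‖G1 w‖) := by gcongr
    _ = ‖α‖ * ((1 + w) ^ k * ‖G0 w‖) + (‖α‖ + ‖β‖) * ((1 + w) ^ (k + 2) * ‖G1 w‖) := by ring
    _ ≤ _ := by gcongr

lemma V2_rd (h : Profile q μ G0 G1 G2) (α β : ℂ) : RD (V2 G1 G2 α β) := by
  intro k
  obtain ⟨C, hC, hd⟩ := h.decay (k + 1)
  refine ⟨(2 * ‖α‖ + (‖α‖ + ‖β‖)) * C + (‖α‖ + ‖β‖) * C, fun a b => ?_⟩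
  obtain ⟨-, h1, h2⟩ := hd (a ^ 2 + b ^ 2) (by positivity)
  have hl := lin_bound α β a b
  have ha := abs_bound a b
  have hn : ‖V2 G1 G2 α β a b‖ ≤ (2 * ‖α‖ * (1 + (a ^ 2 + b ^ 2)) +
      (‖α‖ + ‖β‖) * (1 + (a ^ 2 + b ^ 2))) * ‖G1 (a ^ 2 + b ^ 2)‖
      + (‖α‖ + ‖β‖) * (1 + (a ^ 2 + b ^ 2)) * ((a ^ 2 + b ^ 2) * ‖G2 (a ^ 2 + b ^ 2)‖) := by
    unfold V2
    refine (norm_add_le _ _).trans (add_le_add ?_ ?_)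
    · rw [norm_mul]
      gcongr
      refine (norm_add_le _ _).trans ?_
      rw [norm_mul, norm_mul, Complex.norm_ofNat]
      gcongr
    · rw [norm_mul, norm_mul, mul_assoc]
      gcongr
      rw [norm_pow, Complex.norm_real, norm_eq_abs, sq_abs]
      linarith [sq_nonneg b]
  rw [add_assoc]
  set w := a ^ 2 + b ^ 2 with hw
  have hw0 : 0 ≤ w := by positivity
  calc _ ≤ (1 + w) ^ k * ((2 * ‖α‖ * (1 + w) + (‖α‖ + ‖β‖) * (1 + w)) * ‖G1 w‖
        + (‖α‖ + ‖β‖) * (1 + w) * (w * ‖G2 w‖)) := by gcongr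
    _ = (2 * ‖α‖ + (‖α‖ + ‖β‖)) * ((1 + w) ^ (k + 1) * ‖G1 w‖)
        + (‖α‖ + ‖β‖) * ((1 + w) ^ (k + 1) * (w * ‖G2 w‖)) := by ring
    _ ≤ _ := by gcongr

/-- An eigenfunction `U = (x + iy) G(x² + y²)` of the operator `-Δ + r^q (-y ∂ₓ + x ∂ᵧ)` with eigenvalue
`μ`, together with its partial derivatives, their continuity and rapid decay. The field `rot` says
that the angular derivative acts as multiplication by `i`. -/
structure Eigen (q : ℝ) (μ : ℂ) (G : ℝ → ℂ) (U Ux Uy Uxx Uyy : ℝ → ℝ → ℂ) : Prop where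
  form : ∀ x y, U x y = (x + y * Complex.I) * G (x ^ 2 + y ^ 2)
  G_zero : G 0 = 1
  G_cont : ContinuousOn G (Ici 0)
  cont : Continuous (fun v : ℝ × ℝ => U v.1 v.2)
  cont_xx : Continuous (fun v : ℝ × ℝ => Uxx v.1 v.2)
  cont_yy : Continuous (fun v : ℝ × ℝ => Uyy v.1 v.2)
  dx : ∀ x y, HasDerivAt (fun x => U x y) (Ux x y) x
  dy : ∀ x y, HasDerivAt (fun y => U x y) (Uy x y) y
  dxx : ∀ x y, HasDerivAt (fun x => Ux x y) (Uxx x y) x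
  dyy : ∀ x y, HasDerivAt (fun y => Uy x y) (Uyy x y) y
  rd : RD U
  rd_x : RD Ux
  rd_y : RD Uy
  rd_xx : RD Uxx
  rd_yy : RD Uyy
  rot : ∀ x y, -y * Ux x y + x * Uy x y = Complex.I * U x y
  lap : ∀ x y, Uxx x y + Uyy x y =
    (Complex.I * ((x ^ 2 + y ^ 2) ^ (q / 2) : ℝ) - μ) * U x y

lemma RD.swap {F : ℝ → ℝ → ℂ} (h : RD F) : RD (fun x y => F y x) := by
  intro k
  obtain ⟨C, hC⟩ := h k
  refine ⟨C, fun a b => ?_⟩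
  have := hC b a
  rwa [add_right_comm] at this

lemma exists_eigen {q : ℝ} (hq : 1 ≤ q) :
    ∃ μ G U Ux Uy Uxx Uyy, Eigen q μ G U Ux Uy Uxx Uyy := by
  obtain ⟨μ, G0, G1, G2, h⟩ := exists_profile hq
  have hsw : ∀ x y, V0 G0 1 Complex.I x y = V0 G0 Complex.I 1 y x := fun x y => by
    unfold V0; rw [add_comm (x ^ 2), add_comm (1 * (x : ℂ))]
  refine ⟨μ, G0, V0 G0 1 Complex.I, V1 G0 G1 1 Complex.I, fun x y => V1 G0 G1 Complex.I 1 y x,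
    V2 G1 G2 1 Complex.I, fun x y => V2 G1 G2 Complex.I 1 y x, ?_, h.zero.1, h.cont0, V0_cont h _ _,
    V2_cont h _ _, (V2_cont h _ _).comp continuous_swap, V0_deriv h _ _, ?_, V1_deriv h _ _,
    fun x y => V1_deriv h _ _ y x, V0_rd h _ _, V1_rd h _ _, (V1_rd h _ _).swap, V2_rd h _ _,
    (V2_rd h _ _).swap, ?_, ?_⟩
  · intro x y
    unfold V0; ring
  · intro x y
    simp only [hsw]
    exact V0_deriv h _ _ y x
  · intro x y
    unfold V0 V1
    rw [add_comm (y ^ 2) (x ^ 2)]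
    linear_combination (-(y : ℂ) * G0 (x ^ 2 + y ^ 2)) * (Complex.I_sq)
  · intro x y
    unfold V0 V2
    rw [add_comm (y ^ 2) (x ^ 2)]
    have hw0 : 0 ≤ x ^ 2 + y ^ 2 := by positivity
    rcases hw0.eq_or_lt with hw | hw
    · have hx : x = 0 := by nlinarith [sq_nonneg x, sq_nonneg y]
      have hy : y = 0 := by nlinarith [sq_nonneg x, sq_nonneg y]
      simp [hx, hy]
    · have hode := h.ode _ hw
      push_cast at hode
      linear_combination (x + y * Complex.I) * hode

end CircSharp

/-! ### Scaled solutions and their masses -/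

namespace CircSharp

/-- The real part of `e^{-mt} U(Ax, Ay)`. -/
def sol (U : ℝ → ℝ → ℂ) (m : ℂ) (A t x y : ℝ) : ℝ :=
  (Complex.exp (-m * t) * U (A * x) (A * y)).re

lemma re_deriv {f : ℝ → ℂ} {f' c : ℂ} {A x : ℝ} (hf : HasDerivAt f f' (A * x)) :
    HasDerivAt (fun x => (c * f (A * x)).re) (c * (A * f')).re x := by
  have h1 : HasDerivAt (fun x : ℝ => A * x) A x := by
    simpa using (hasDerivAt_id x).const_mul A
  have h2 := (hf.scomp x h1).const_mul c
  have h3 := Complex.reCLM.hasFDerivAt.comp_hasDerivAt x h2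
  simpa [Function.comp_def] using h3

lemma time_deriv (m u : ℂ) (t : ℝ) :
    HasDerivAt (fun t : ℝ => (Complex.exp (-m * t) * u).re)
      (-m * (Complex.exp (-m * t) * u)).re t := by
  have h0 : HasDerivAt (fun t : ℝ => -m * (t : ℂ)) (-m) t := by
    have : HasDerivAt (fun w : ℝ => (w : ℂ)) 1 t := Complex.ofRealCLM.hasDerivAt
    simpa using this.const_mul (-m)
  have h3 := Complex.reCLM.hasFDerivAt.comp_hasDerivAt t (h0.cexp.mul_const u)
  refine (show HasDerivAt (fun t : ℝ => (Complex.exp (-m * t) * u).re) _ t from h3).congr_deriv ?_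
  simp only [Complex.reCLM_apply]
  congr 1; ring

lemma RD.scaled {F : ℝ → ℝ → ℂ} (h : RD F) (c : ℂ) {A : ℝ} (hA : 0 < A) :
    HasRapidDecay (fun x y => (c * F (A * x) (A * y)).re) := by
  intro k
  obtain ⟨C, hC⟩ := h k
  refine ⟨(1 + (A ^ 2)⁻¹) ^ k * ‖c‖ * C, fun x y => ?_⟩
  have h1 : 1 + x ^ 2 + y ^ 2 ≤ (1 + (A ^ 2)⁻¹) * (1 + (A * x) ^ 2 + (A * y) ^ 2) := by
    have : (1 + (A ^ 2)⁻¹) * (1 + (A * x) ^ 2 + (A * y) ^ 2) =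
        1 + x ^ 2 + y ^ 2 + (A ^ 2)⁻¹ + (A * x) ^ 2 + (A * y) ^ 2 := by field_simp; ring
    rw [this]
    have : 0 ≤ (A ^ 2)⁻¹ + (A * x) ^ 2 + (A * y) ^ 2 := by positivity
    linarith
  have h2 : |(c * F (A * x) (A * y)).re| ≤ ‖c‖ * ‖F (A * x) (A * y)‖ := by
    rw [← norm_mul]; exact Complex.abs_re_le_norm _
  calc _ ≤ ((1 + (A ^ 2)⁻¹) * (1 + (A * x) ^ 2 + (A * y) ^ 2)) ^ k *
        (‖c‖ * ‖F (A * x) (A * y)‖) := by gcongr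
    _ = (1 + (A ^ 2)⁻¹) ^ k * ‖c‖ * ((1 + (A * x) ^ 2 + (A * y) ^ 2) ^ k * ‖F (A * x) (A * y)‖) := by
        rw [mul_pow]; ring
    _ ≤ _ := by gcongr; exact hC _ _

variable {q : ℝ} {μ : ℂ} {G : ℝ → ℂ} {U Ux Uy Uxx Uyy : ℝ → ℝ → ℂ}

/-- If `U` is an eigenfunction with eigenvalue `μ`, the rescaled function solves the equation with
diffusivity `κ`, provided the inverse length `A` and the rate `τ` satisfy `A^q τ = 1` and
`κ A² = τ`. -/
lemma sol_isSolution (h : Eigen q μ G U Ux Uy Uxx Uyy) {κ A τ : ℝ} (hA : 0 < A)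
    (hτ : A ^ q * τ = 1) (hκ : κ * A ^ 2 = τ) :
    IsCircularSolution q κ (sol U (μ * τ) A) := by
  set m : ℂ := μ * τ with hm
  have ex : ∀ t x y, HasDerivAt (fun a => sol U m A t a y)
      (Complex.exp (-m * t) * (A * Ux (A * x) (A * y))).re x := fun t x y =>
    re_deriv (f := fun a => U a (A * y)) (h.dx (A * x) (A * y))
  have ey : ∀ t x y, HasDerivAt (fun b => sol U m A t x b)
      (Complex.exp (-m * t) * (A * Uy (A * x) (A * y))).re y := fun t x y =>
    re_deriv (f := fun b => U (A * x) b) (h.dy (A * x) (A * y))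
  have et : ∀ t x y : ℝ, HasDerivAt (fun s => sol U m A s x y)
      (-m * (Complex.exp (-m * t) * U (A * x) (A * y))).re t := fun t x y => time_deriv m _ t
  have dx : ∀ t y, deriv (fun a => sol U m A t a y) =
      fun x => ((Complex.exp (-m * t) * A) * Ux (A * x) (A * y)).re := fun t y => by
    funext x; rw [(ex t x y).deriv, mul_assoc]
  have dy : ∀ t x, deriv (fun b => sol U m A t x b) =
      fun y => ((Complex.exp (-m * t) * A) * Uy (A * x) (A * y)).re := fun t x => by
    funext y; rw [(ey t x y).deriv, mul_assoc]
  have exx : ∀ t x y, HasDerivAt (fun a => deriv (fun b => sol U m A t b y) a)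
      ((Complex.exp (-m * t) * A ^ 2) * Uxx (A * x) (A * y)).re x := fun t x y => by
    simp only [dx]
    refine (re_deriv (c := Complex.exp (-m * t) * A) (f := fun a => Ux a (A * y))
      (h.dxx (A * x) (A * y))).congr_deriv ?_
    congr 1; ring
  have eyy : ∀ t x y, HasDerivAt (fun b => deriv (fun c => sol U m A t x c) b)
      ((Complex.exp (-m * t) * A ^ 2) * Uyy (A * x) (A * y)).re y := fun t x y => by
    simp only [dy]
    refine (re_deriv (c := Complex.exp (-m * t) * A) (f := fun b => Uy (A * x) b)
      (h.dyy (A * x) (A * y))).congr_deriv ?_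
    congr 1; ring
  have hscale : Continuous (fun p : ℝ × ℝ × ℝ => (A * p.2.1, A * p.2.2)) := by fun_prop
  have cU : Continuous (fun p : ℝ × ℝ × ℝ => U (A * p.2.1) (A * p.2.2)) := h.cont.comp hscale
  have cxx : Continuous (fun p : ℝ × ℝ × ℝ => Uxx (A * p.2.1) (A * p.2.2)) := h.cont_xx.comp hscale
  have cyy : Continuous (fun p : ℝ × ℝ × ℝ => Uyy (A * p.2.1) (A * p.2.2)) := h.cont_yy.comp hscale
  have cE : Continuous (fun p : ℝ × ℝ × ℝ => Complex.exp (-m * p.1)) := by fun_prop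
  refine
    { cont := (Complex.continuous_re.comp (cE.mul cU)).continuousOn
      diff_t := fun t _ x y => (et t x y).differentiableAt
      diff_x := fun t _ x y => (ex t x y).differentiableAt
      diff_xx := fun t _ x y => (exx t x y).differentiableAt
      diff_y := fun t _ x y => (ey t x y).differentiableAt
      diff_yy := fun t _ x y => (eyy t x y).differentiableAt
      cont_dt := ?_
      cont_dxx := ?_
      cont_dyy := ?_
      decay := fun t _ => h.rd.scaled _ hA
      decay_dx := fun t _ => ?_
      decay_dy := fun t _ => ?_
      decay_dxx := fun t _ => ?_
      decay_dyy := fun t _ => ?_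
      pde := fun t _ x y => ?_ }
  · simp only [(et _ _ _).deriv]
    exact (Complex.continuous_re.comp ((cE.mul cU).const_mul (-m))).continuousOn
  · simp only [(exx _ _ _).deriv]
    exact (Complex.continuous_re.comp ((cE.mul continuous_const).mul cxx)).continuousOn
  · simp only [(eyy _ _ _).deriv]
    exact (Complex.continuous_re.comp ((cE.mul continuous_const).mul cyy)).continuousOn
  · simp only [dx]
    exact h.rd_x.scaled _ hA
  · simp only [dy]
    exact h.rd_y.scaled _ hA
  · simp only [(exx _ _ _).deriv]
    exact h.rd_xx.scaled _ hA
  · simp only [(eyy _ _ _).deriv]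
    exact h.rd_yy.scaled _ hA
  · rw [(et t x y).deriv, (ex t x y).deriv, (ey t x y).deriv, (exx t x y).deriv,
      (eyy t x y).deriv]
    have hrot := h.rot (A * x) (A * y)
    have hlap := h.lap (A * x) (A * y)
    set E := Complex.exp (-m * t)
    have hpow : ((A * x) ^ 2 + (A * y) ^ 2) ^ (q / 2) = A ^ q * (x ^ 2 + y ^ 2) ^ (q / 2) := by
      rw [show (A * x) ^ 2 + (A * y) ^ 2 = A ^ 2 * (x ^ 2 + y ^ 2) by ring,
        mul_rpow (by positivity) (by positivity), ← rpow_natCast A 2, ← rpow_mul hA.le]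
      congr 2; push_cast; ring
    rw [hpow] at hlap
    set W := (x ^ 2 + y ^ 2) ^ (q / 2)
    have hτc : ((A ^ q : ℝ) : ℂ) * τ = 1 := by exact_mod_cast hτ
    have hκc : (κ : ℂ) * A ^ 2 = τ := by exact_mod_cast hκ
    push_cast at hrot hlap
    have key : -m * (E * U (A * x) (A * y)) +
        W * (-y * (E * (A * Ux (A * x) (A * y))) + x * (E * (A * Uy (A * x) (A * y)))) =
        κ * (E * A ^ 2 * Uxx (A * x) (A * y) + E * A ^ 2 * Uyy (A * x) (A * y)) := by
      linear_combination (E * W) * hrot - (κ * E * A ^ 2) * hlap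
        - (E * Complex.I * W * U (A * x) (A * y)) * hτc
        + (μ * E * U (A * x) (A * y) - E * U (A * x) (A * y) * W * Complex.I * (A ^ q : ℝ)) * hκc
    have := congrArg Complex.re key
    simpa only [Complex.add_re, Complex.re_ofReal_mul, ← Complex.ofReal_neg] using this

/-- On each circle `sol` is a combination of `cos θ` and `sin θ`. -/
lemma sol_mean_zero (h : Eigen q μ G U Ux Uy Uxx Uyy) (m : ℂ) (A s : ℝ) :
    ∫ θ in (0:ℝ)..(2 * π), sol U m A 0 (s * cos θ) (s * sin θ) = 0 := by
  set K : ℂ := A * s * G ((A * s) ^ 2)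
  have h1 : ∀ θ : ℝ, sol U m A 0 (s * cos θ) (s * sin θ) = K.re * cos θ - K.im * sin θ := by
    intro θ
    have hr : (A * (s * cos θ)) ^ 2 + (A * (s * sin θ)) ^ 2 = (A * s) ^ 2 := by
      linear_combination (A * s) ^ 2 * cos_sq_add_sin_sq θ
    have : sol U m A 0 (s * cos θ) (s * sin θ) = (K * (cos θ + sin θ * Complex.I : ℂ)).re := by
      unfold sol
      rw [h.form, hr]
      congr 1
      push_cast
      simp only [mul_zero, Complex.exp_zero]
      ring
    rw [this, Complex.mul_re]
    simp [-Complex.ofReal_cos, -Complex.ofReal_sin]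
  simp only [h1]
  rw [intervalIntegral.integral_sub (Continuous.intervalIntegrable (by fun_prop) _ _)
    (Continuous.intervalIntegrable (by fun_prop) _ _)]
  simp

/-- Squared `L²` norm of `Re (c U)`. -/
def mass (U : ℝ → ℝ → ℂ) (c : ℂ) : ℝ := ∫ v : ℝ × ℝ, ((c * U v.1 v.2).re) ^ 2

/-- The scaling factor `A⁻²` does not depend on time, so it cancels when two times are compared. -/
lemma l2_sol (U : ℝ → ℝ → ℂ) (m : ℂ) {A : ℝ} (t : ℝ) :
    l2planeSq (sol U m A) t = (A ^ 2)⁻¹ * mass U (Complex.exp (-m * t)) := by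
  have h := Measure.integral_comp_smul (volume : Measure (ℝ × ℝ))
    (fun v : ℝ × ℝ => ((Complex.exp (-m * t) * U v.1 v.2).re) ^ 2) A
  have hf : Module.finrank ℝ (ℝ × ℝ) = 2 := by simp
  rw [hf, abs_of_nonneg (by positivity), smul_eq_mul] at h
  exact h

/-- A quarter turn multiplies `U` by `i`, so `Re (c U)` cannot vanish identically. -/
lemma mass_pos (h : Eigen q μ G U Ux Uy Uxx Uyy) {c : ℂ} (hc : c ≠ 0) : 0 < mass U c := by
  have hcont : Continuous (fun v : ℝ × ℝ => ((c * U v.1 v.2).re) ^ 2) := by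
    have := h.cont
    exact (Complex.continuous_re.comp (continuous_const.mul this)).pow 2
  have hInt : Integrable (fun v : ℝ × ℝ => ((c * U v.1 v.2).re) ^ 2) := by
    obtain ⟨C, hC⟩ := h.rd 1
    have hI : Integrable (fun v : ℝ × ℝ => (1 + v.1 ^ 2)⁻¹ * (1 + v.2 ^ 2)⁻¹) :=
      integrable_inv_one_add_sq.mul_prod integrable_inv_one_add_sq
    refine (hI.const_mul ((‖c‖ * C) ^ 2)).mono' hcont.aestronglyMeasurable
      (Eventually.of_forall fun v => ?_)
    have hv := hC v.1 v.2
    rw [pow_one] at hv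
    set w := 1 + v.1 ^ 2 + v.2 ^ 2 with hw
    have hw0 : 0 < w := by positivity
    have h1 : |(c * U v.1 v.2).re| * w ≤ ‖c‖ * C := by
      have := Complex.abs_re_le_norm (c * U v.1 v.2)
      rw [norm_mul] at this
      calc _ ≤ ‖c‖ * ‖U v.1 v.2‖ * w := by gcongr
        _ = ‖c‖ * (w * ‖U v.1 v.2‖) := by ring
        _ ≤ _ := by gcongr
    have h2 : ((c * U v.1 v.2).re) ^ 2 * w ^ 2 ≤ (‖c‖ * C) ^ 2 := by
      rw [← sq_abs, ← mul_pow]; gcongr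
    have h3 : (1 + v.1 ^ 2) * (1 + v.2 ^ 2) ≤ w ^ 2 := by
      rw [hw]; nlinarith [sq_nonneg v.1, sq_nonneg v.2, sq_nonneg (v.1 ^ 2), sq_nonneg (v.2 ^ 2),
        mul_nonneg (sq_nonneg v.1) (sq_nonneg v.2)]
    rw [norm_of_nonneg (by positivity), ← mul_inv, ← div_eq_mul_inv, le_div_iff₀ (by positivity)]
    refine le_trans ?_ h2
    gcongr
  have hG : ∃ x : ℝ, 0 < x ∧ G (x ^ 2) ≠ 0 := by
    have hc : ContinuousOn (fun x : ℝ => G (x ^ 2)) (Ici 0) :=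
      h.G_cont.comp (by fun_prop) (fun x _ => by simp only [mem_Ici]; positivity)
    have hne : ∀ᶠ x in nhdsWithin (0:ℝ) (Ici 0), G (x ^ 2) ≠ 0 :=
      Tendsto.eventually_ne (hc 0 self_mem_Ici) (by simp [h.G_zero])
    have hne' := hne.filter_mono (nhdsWithin_mono 0 (Ioi_subset_Ici_self (a := (0:ℝ))))
    obtain ⟨x, hx, hx0⟩ := (hne'.and self_mem_nhdsWithin).exists
    exact ⟨x, hx0, hx⟩
  obtain ⟨x, hx, hGx⟩ := hG
  set z : ℂ := c * (x * G (x ^ 2)) with hz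
  have hz0 : z ≠ 0 := mul_ne_zero hc (mul_ne_zero (by exact_mod_cast hx.ne') hGx)
  have e1 : c * U x 0 = z := by rw [h.form]; simp [hz]
  have e2 : c * U 0 x = Complex.I * z := by rw [h.form]; simp [hz]; ring
  have hex : ∃ v : ℝ × ℝ, ((c * U v.1 v.2).re) ^ 2 ≠ 0 := by
    by_contra! hcon
    have h1 := hcon (x, 0)
    have h2 := hcon (0, x)
    simp only [e1, e2] at h1 h2
    refine hz0 (Complex.ext (by simpa using h1) (by simpa using h2))
  obtain ⟨v, hv⟩ := hex
  exact integral_pos_of_integrable_nonneg_nonzero hcont hInt (fun v => sq_nonneg _) hv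

end CircSharp

/-! ### Sharpness -/

/-- Sharpness of the enhanced diffusion rate `κ^{q/(q+2)}` for the
circular flow `u(x,y) = (x²+y²)^{q/2}(-y,x)`, `q ≥ 1`. -/
theorem sharpness_circular (q : ℝ) (hq : 1 ≤ q)
    (κ₀ : ℝ) (hκ₀ : κ₀ ∈ Ioo (0:ℝ) 1) (r : ℝ → ℝ) (hr : IsRateFunction κ₀ r)
    (henh : CircularDiffusionEnhancing q κ₀ r) :
    ∃ c : ℝ, 0 < c ∧ ∃ κ₁ ∈ Ioc (0:ℝ) κ₀, ∀ κ ∈ Ioc (0:ℝ) κ₁,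
      r κ ≤ c⁻¹ * κ ^ (q / (q + 2)) := by
  obtain ⟨μ, G, U, Ux, Uy, Uxx, Uyy, h⟩ := CircSharp.exists_eigen hq
  obtain ⟨C, hC1, hC⟩ := henh
  set J0 := CircSharp.mass U 1
  set J1 := CircSharp.mass U (Complex.exp (-μ))
  have hJ0 : 0 < J0 := CircSharp.mass_pos h one_ne_zero
  have hJ1 : 0 < J1 := CircSharp.mass_pos h (Complex.exp_ne_zero _)
  set M := max (log (C * J0 / J1)) 1
  have hM : 0 < M := lt_of_lt_of_le one_pos (le_max_right _ _)
  refine ⟨M⁻¹, inv_pos.mpr hM, κ₀, ⟨hκ₀.1, le_rfl⟩, fun κ hκ => ?_⟩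
  rw [inv_inv]
  have hκ0 : 0 < κ := hκ.1
  have hq2 : q + 2 ≠ 0 := by linarith
  -- The length scale `1 / A` and the time scale `1 / τ` balance advection against diffusion.
  set A := κ ^ (-1 / (q + 2)) with hA
  set τ := κ ^ (q / (q + 2)) with hτ
  have hApos : 0 < A := rpow_pos_of_pos hκ0 _
  have hτpos : 0 < τ := rpow_pos_of_pos hκ0 _
  have hAτ : A ^ q * τ = 1 := by
    rw [hA, hτ, ← rpow_mul hκ0.le, ← rpow_add hκ0]
    convert rpow_zero κ using 2
    ring
  have hκA : κ * A ^ 2 = τ := by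
    rw [hA, hτ, ← rpow_natCast, ← rpow_mul hκ0.le]
    nth_rewrite 1 [← rpow_one κ]
    rw [← rpow_add hκ0]
    congr 1
    push_cast
    field_simp
    ring
  have hdecay := hC κ hκ _ (CircSharp.sol_isSolution h hApos hAτ hκA)
    (fun s _ => CircSharp.sol_mean_zero h _ A s) (1 / τ) (by positivity)
  rw [CircSharp.l2_sol, CircSharp.l2_sol] at hdecay
  have hτc : (τ : ℂ) ≠ 0 := by exact_mod_cast hτpos.ne'
  have c1 : Complex.exp (-(μ * τ) * (1 / τ : ℝ)) = Complex.exp (-μ) := by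
    congr 1; push_cast; field_simp
  have c0 : Complex.exp (-(μ * τ) * (0 : ℝ)) = 1 := by simp
  rw [c0, c1] at hdecay
  change (A ^ 2)⁻¹ * J1 ≤ C * exp (-r κ * (1 / τ)) * ((A ^ 2)⁻¹ * J0) at hdecay
  have h1 : J1 ≤ C * exp (-r κ * (1 / τ)) * J0 := by
    refine le_of_mul_le_mul_left (a := (A ^ 2)⁻¹) ?_ (by positivity)
    linarith
  have h2 : exp (r κ / τ) ≤ C * J0 / J1 := by
    rw [le_div_iff₀ hJ1]
    calc exp (r κ / τ) * J1 ≤ exp (r κ / τ) * (C * exp (-r κ * (1 / τ)) * J0) := by gcongr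
      _ = C * J0 * (exp (r κ / τ) * exp (-r κ * (1 / τ))) := by ring
      _ = C * J0 := by
        rw [← exp_add, show r κ / τ + -r κ * (1 / τ) = 0 by ring, exp_zero, mul_one]
  have h3 : r κ / τ ≤ M :=
    ((le_log_iff_exp_le ((exp_pos _).trans_le h2)).mpr h2).trans (le_max_left _ _)
  exact (div_le_iff₀ hτpos).mp h3

end
end
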